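/- Let d ≥ 1 and let P = (p⁽¹⁾,…,p⁽ᵈ⁾) and Q = (q⁽¹⁾,…,q⁽ᵈ⁾) be d-tuples of probability vectors such that the columns of P share a common support and the columns of Q share a common support. Assume D_α(P) > D_α(Q) for every α ∈ (A₊ ∪ A₋) \ {e₁,…,e_d}, D^T_β(P) > D^T_β(Q) for every β ∈ B₋ \ {0}, and D₁(p⁽ᵏ⁾‖p⁽ˡ⁾) > D₁(q⁽ᵏ⁾‖q⁽ˡ⁾) for all k ≠ ℓ. Then for every sufficiently large n ∈ ℕ, defining the probability vectors r⁽ᵏ⁾ := (1/n) · ⨁_{s=0}^{n−1} ( (p⁽ᵏ⁾)^{⊗(n−1−s)} ⊗ (q⁽ᵏ⁾)^{⊗s} ) for k = 1,…,d, there exists a stochastic matrix T with T (p⁽ᵏ⁾ ⊗ r⁽ᵏ⁾) = q⁽ᵏ⁾ ⊗ r⁽ᵏ⁾ for all k = 1,…,d. -/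

import Mathlib

open scoped BigOperators NNReal

noncomputable section

/-- A probability vector on a finite index type. -/
def IsProbVec {ι : Type*} [Fintype ι] (p : ι → ℝ) : Prop :=
  (∀ i, 0 ≤ p i) ∧ ∑ i, p i = 1

/-- A (column-)stochastic matrix: nonnegative entries, every column sums to `1`. -/
def IsStochastic {ι κ : Type*} [Fintype ι] [Fintype κ] (T : ι → κ → ℝ) : Prop :=
  (∀ i j, 0 ≤ T i j) ∧ ∀ j, ∑ i, T i j = 1

/-- Matrix–vector multiplication. -/
def matVec {ι κ : Type*} [Fintype κ] (T : ι → κ → ℝ) (v : κ → ℝ) : ι → ℝ :=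
  fun i => ∑ j, T i j * v j

/-- Kronecker product of two vectors. -/
def kron {ι κ : Type*} (p : ι → ℝ) (q : κ → ℝ) : ι × κ → ℝ :=
  fun x => p x.1 * q x.2

/-- `n`-fold Kronecker power of a vector. -/
def kpow {ι : Type*} (p : ι → ℝ) (n : ℕ) : (Fin n → ι) → ℝ :=
  fun f => ∏ j, p (f j)

/-- Kronecker product reindexed along `Fin (m * n)`. -/
def kronFin {m n : ℕ} (p : Fin m → ℝ) (q : Fin n → ℝ) : Fin (m * n) → ℝ :=
  fun i => kron p q (finProdFinEquiv.symm i)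

/-- The sum of the `k` largest entries of a nonnegative vector, expressed as the
largest sum over subsets of cardinality at most `k`. -/
def topSum {ι : Type*} [Fintype ι] (p : ι → ℝ) (k : ℕ) : ℝ :=
  ⨆ s ∈ {s : Finset ι | s.card ≤ k}, ∑ i ∈ s, p i

/-- Majorization for nonnegative vectors (possibly of different lengths):
equal total sums, and for each `k` the sum of the `k` largest entries of `p` is
at least that of `q`. -/
def Majorizes {ι κ : Type*} [Fintype ι] [Fintype κ] (p : ι → ℝ) (q : κ → ℝ) : Prop :=
  (∑ i, p i = ∑ j, q j) ∧ ∀ k : ℕ, topSum q k ≤ topSum p k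

/-- The size of the support, `‖p‖₀`. -/
def supp0 {ι : Type*} [Fintype ι] (p : ι → ℝ) : ℕ :=
  (Finset.univ.filter fun i => p i ≠ 0).card

/-- Entrywise nonnegativity. -/
def NonnegVec {n : ℕ} (p : Fin n → ℝ) : Prop := ∀ i, 0 ≤ p i

/-- The modified majorization preorder `≽₀,₁`: majorization plus equality of
support sizes. -/
def MajMod {ι κ : Type*} [Fintype ι] [Fintype κ] (p : ι → ℝ) (q : κ → ℝ) : Prop :=
  Majorizes p q ∧ supp0 p = supp0 q

/-- `f_α(p) = ∑_{i ∈ supp p} (p i)^α`. -/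
def fA {ι : Type*} [Fintype ι] (α : ℝ) (p : ι → ℝ) : ℝ :=
  ∑ i, if p i = 0 then 0 else p i ^ α

/-- Shannon entropy (the terms with `p i = 0` vanish). -/
def H1ent {ι : Type*} [Fintype ι] (p : ι → ℝ) : ℝ := -∑ i, p i * Real.log (p i)

/-- `H₀'(p) = ∑_{i ∈ supp p} log p_i`. -/
def H0' {ι : Type*} [Fintype ι] (p : ι → ℝ) : ℝ :=
  ∑ i, if p i = 0 then 0 else Real.log (p i)

/-- Rényi entropy of order `α` (with `α = 1` the Shannon entropy). -/
def Hent {ι : Type*} [Fintype ι] (α : ℝ) (p : ι → ℝ) : ℝ :=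
  if α = 1 then -∑ i, p i * Real.log (p i)
  else (1 / (1 - α)) * Real.log (∑ i, if p i = 0 then 0 else p i ^ α)

/-- Min-entropy `H_∞(p) = - log max_i p_i`. -/
def HentInf {ι : Type*} [Fintype ι] (p : ι → ℝ) : ℝ := -Real.log (⨆ i, p i)

/-- Kullback–Leibler divergence (the terms with `p i = 0` vanish). -/
def KL {n : ℕ} (p q : Fin n → ℝ) : ℝ :=
  ∑ i, p i * Real.log (p i / q i)

/-- Rényi divergence of order `α` for vectors with common support. -/
def Renyi {n : ℕ} (α : ℝ) (p q : Fin n → ℝ) : ℝ :=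
  if α = 1 then ∑ i, p i * Real.log (p i / q i)
  else (1 / (α - 1)) * Real.log (∑ i, if p i = 0 then 0 else p i ^ α * q i ^ (1 - α))

/-- Max-divergence `D_∞(p‖q) = max_{i ∈ supp q} log (p_i / q_i)`. -/
def RenyiInf {n : ℕ} (p q : Fin n → ℝ) : ℝ :=
  ⨆ i ∈ Finset.univ.filter (fun i => q i ≠ 0), Real.log (p i / q i)

/-- Rényi divergence with values in the extended reals `[0, ∞]`. -/
def RenyiE {n : ℕ} (α : ℝ) (p q : Fin n → ℝ) : EReal :=
  if α = 1 then
    (if ∀ i, p i ≠ 0 → q i ≠ 0 then ((∑ i, p i * Real.log (p i / q i) : ℝ) : EReal) else ⊤)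
  else if α < 1 then
    (if ∃ i, p i ≠ 0 ∧ q i ≠ 0 then
      (((1 / (α - 1)) *
        Real.log (∑ i, if p i = 0 ∨ q i = 0 then 0 else p i ^ α * q i ^ (1 - α)) : ℝ) : EReal)
    else (⊤ : EReal))
  else
    (if ∀ i, p i ≠ 0 → q i ≠ 0 then
      (((1 / (α - 1)) *
        Real.log (∑ i, if p i = 0 then 0 else p i ^ α * q i ^ (1 - α)) : ℝ) : EReal)
    else (⊤ : EReal))

/-- The common support of a tuple of vectors. -/
def suppIdx {d n : ℕ} (P : Fin d → Fin n → ℝ) : Finset (Fin n) :=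
  Finset.univ.filter fun i => ∃ k, P k i ≠ 0

/-- `f_α(P) = ∑_{i ∈ I} ∏_k (p_i^{(k)})^{α_k}` with `I` the common support. -/
def fMat {d n : ℕ} (α : Fin d → ℝ) (P : Fin d → Fin n → ℝ) : ℝ :=
  ∑ i ∈ suppIdx P, ∏ k, P k i ^ α k

/-- The matrix `α`-divergence `D_α`. -/
def Dmat {d n : ℕ} (α : Fin d → ℝ) (P : Fin d → Fin n → ℝ) : ℝ :=
  (1 / ((⨆ k, α k) - 1)) * Real.log (∑ i ∈ suppIdx P, ∏ k, P k i ^ α k)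

/-- The tropical matrix divergence `D^𝕋_β`. -/
def DmatT {d n : ℕ} (β : Fin d → ℝ) (P : Fin d → Fin n → ℝ) : ℝ :=
  (1 / (⨆ k, β k)) * Real.log (⨆ i ∈ suppIdx P, ∏ k, P k i ^ β k)

/-- Membership in `A₊`: entries summing to `1`, all nonnegative. -/
def memAplus {d : ℕ} (α : Fin d → ℝ) : Prop := (∑ k, α k = 1) ∧ ∀ k, 0 ≤ α k

/-- Membership in `A₋`: entries summing to `1`, one entry `≥ 1`, the others `≤ 0`. -/
def memAminus {d : ℕ} (α : Fin d → ℝ) : Prop :=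
  (∑ k, α k = 1) ∧ ∃ k, 1 ≤ α k ∧ ∀ l, l ≠ k → α l ≤ 0

/-- Membership in `B₋`: entries summing to `0`, one entry `≥ 0`, the others `≤ 0`. -/
def memBminus {d : ℕ} (β : Fin d → ℝ) : Prop :=
  (∑ k, β k = 0) ∧ ∃ k, 0 ≤ β k ∧ ∀ l, l ≠ k → β l ≤ 0

/-- `α` is none of the standard basis vectors `e₁, …, e_d`. -/
def notBasis {d : ℕ} (α : Fin d → ℝ) : Prop := ∀ k, α ≠ Pi.single k 1

/-- ℓ¹-distance of two vectors, padding with zeros to a common length. -/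
def l1PadDist {m n : ℕ} (p : Fin m → ℝ) (q : Fin n → ℝ) : ℝ :=
  ∑ i : Fin (max m n),
    |(if h : (i : ℕ) < m then p ⟨(i : ℕ), h⟩ else 0) -
      (if h : (i : ℕ) < n then q ⟨(i : ℕ), h⟩ else 0)|

/-- Index type of the direct sum `⨁_{s=0}^{n-1} p^{⊗(n-1-s)} ⊗ q^{⊗s}`. -/
abbrev TrickIdx (m m' n : ℕ) : Type :=
  Σ s : Fin n, (Fin (n - 1 - (s : ℕ)) → Fin m) × (Fin (s : ℕ) → Fin m')

/-- The standard catalyst `(1/n) ⨁_{s=0}^{n-1} p^{⊗(n-1-s)} ⊗ q^{⊗s}`. -/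
def trick {m m' : ℕ} (p : Fin m → ℝ) (q : Fin m' → ℝ) (n : ℕ) : TrickIdx m m' n → ℝ :=
  fun x => (1 / (n : ℝ)) * (kpow p (n - 1 - (x.1 : ℕ)) x.2.1 * kpow q (x.1 : ℕ) x.2.2)

/-- A valid tuple: nonnegative entries and common support across the tuple. -/
def TupOK {d n : ℕ} (P : Fin d → Fin n → ℝ) : Prop :=
  (∀ k i, 0 ≤ P k i) ∧ ∀ k l i, P k i ≠ 0 ↔ P l i ≠ 0

/-- Matrix majorization of tuples: a single stochastic matrix carrying each column
of `P` to the corresponding column of `Q`. -/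
def TupMaj {d m n : ℕ} (P : Fin d → Fin m → ℝ) (Q : Fin d → Fin n → ℝ) : Prop :=
  ∃ T : Fin n → Fin m → ℝ, IsStochastic T ∧ ∀ k, matVec T (P k) = Q k

namespace CMM

/-- Abstract ordered-cone data. -/
structure CS (K : Type*) [CommRing K] [Algebra ℝ K] where
  T : Set K
  C : Set K
  e : K
  add_mem : ∀ {x y}, x ∈ C → y ∈ C → x + y ∈ C
  smul_mem : ∀ {r : ℝ} {x}, 0 ≤ r → x ∈ C → r • x ∈ C
  mul_mem : ∀ {b x}, b ∈ T → x ∈ C → b * x ∈ C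
  e_mem : e ∈ C
  T_mul : ∀ {b c}, b ∈ T → c ∈ T → b * c ∈ T

namespace CS
variable {K : Type*} [CommRing K] [Algebra ℝ K] (S : CS K)

lemma zero_mem : (0 : K) ∈ S.C := by
  simpa using S.smul_mem le_rfl S.e_mem

lemma bound_mono {x : K} {M M' : ℝ} (h : M ≤ M') (hx : M • S.e - x ∈ S.C) :
    M' • S.e - x ∈ S.C := by
  have := S.add_mem hx (S.smul_mem (sub_nonneg.2 h) S.e_mem)
  convert this using 1
  rw [sub_smul]; abel

lemma bound_mono' {x : K} {M M' : ℝ} (h : M ≤ M') (hx : M • S.e + x ∈ S.C) :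
    M' • S.e + x ∈ S.C := by
  have := S.add_mem hx (S.smul_mem (sub_nonneg.2 h) S.e_mem)
  convert this using 1
  rw [sub_smul]; abel

/-- Order-unit space generated by `e`. -/
def E : Submodule ℝ K where
  carrier := {x | ∃ M : ℝ, 0 ≤ M ∧ M • S.e - x ∈ S.C ∧ M • S.e + x ∈ S.C}
  zero_mem' := ⟨0, le_rfl, by simpa using S.zero_mem, by simpa using S.zero_mem⟩
  add_mem' := by
    rintro x y ⟨M, hM, h1, h2⟩ ⟨N, hN, h3, h4⟩
    refine ⟨M + N, by positivity, ?_, ?_⟩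
    · convert S.add_mem h1 h3 using 1; rw [add_smul]; abel
    · convert S.add_mem h2 h4 using 1; rw [add_smul]; abel
  smul_mem' := by
    rintro c x ⟨M, hM, h1, h2⟩
    refine ⟨|c| * M, by positivity, ?_, ?_⟩
    · rcases le_total 0 c with hc | hc
      · rw [abs_of_nonneg hc, mul_smul, ← smul_sub]; exact S.smul_mem hc h1
      · rw [abs_of_nonpos hc]
        convert S.smul_mem (neg_nonneg.2 hc) h2 using 1
        rw [smul_add, mul_smul]; simp [neg_smul, sub_eq_add_neg]
    · rcases le_total 0 c with hc | hc
      · rw [abs_of_nonneg hc, mul_smul, ← smul_add]; exact S.smul_mem hc h2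
      · rw [abs_of_nonpos hc]
        convert S.smul_mem (neg_nonneg.2 hc) h1 using 1
        rw [smul_sub, mul_smul]; simp [neg_smul]

lemma mem_E {x : K} : x ∈ S.E ↔ ∃ M : ℝ, 0 ≤ M ∧ M • S.e - x ∈ S.C ∧ M • S.e + x ∈ S.C := Iff.rfl

lemma mem_E_of_le {x : K} (M : ℝ) (hx : x ∈ S.C) (h : M • S.e - x ∈ S.C) : x ∈ S.E := by
  refine ⟨max M 0, le_max_right _ _, S.bound_mono (le_max_left _ _) h, ?_⟩
  exact S.add_mem (S.smul_mem (le_max_right _ _) S.e_mem) hx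

lemma e_mem_E : S.e ∈ S.E := S.mem_E_of_le 1 S.e_mem (by simpa using S.zero_mem)

lemma mul_mem_E {b x : K} (hb : b ∈ S.T) (hb' : 1 - b ∈ S.T) (hx : x ∈ S.E) : b * x ∈ S.E := by
  obtain ⟨M, hM, h1, h2⟩ := hx
  have h3 := S.smul_mem hM (S.mul_mem hb' S.e_mem)
  refine ⟨M, hM, ?_, ?_⟩
  · convert S.add_mem (S.mul_mem hb h1) h3 using 1
    simp only [Algebra.smul_def]; ring
  · convert S.add_mem (S.mul_mem hb h2) h3 using 1
    simp only [Algebra.smul_def]; ring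

/-- States. -/
structure IsState (L : K →ₗ[ℝ] ℝ) : Prop where
  map_e : L S.e = 1
  nonneg : ∀ x ∈ S.C, x ∈ S.E → 0 ≤ L x
  mul : ∀ b ∈ S.T, 1 - b ∈ S.T → ∀ x ∈ S.E, L (b * x) = L (b * S.e) * L x

/-- Unit of `E`. -/
def u : S.E := ⟨S.e, S.e_mem_E⟩

lemma exists_pos_functional (y : S.E) (hy : (y : K) ∉ S.C) :
    ∃ g : S.E →ₗ[ℝ] ℝ, (∀ x : S.E, (x : K) ∈ S.C → 0 ≤ g x) ∧ g S.u = 1 ∧ g y ≤ 0 := by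
  have hne : -S.e ∉ S.C := by
    intro h
    obtain ⟨M, hM, h1, h2⟩ := y.2
    apply hy
    convert S.add_mem h2 (S.smul_mem hM h) using 1
    simp
  let c : PointedCone ℝ S.E :=
    { carrier := {x | ∃ t : ℝ, 0 ≤ t ∧ (x : K) + t • (y : K) ∈ S.C}
      zero_mem' := ⟨0, le_rfl, by simpa using S.zero_mem⟩
      add_mem' := by
        rintro a b ⟨t, ht, h1⟩ ⟨s, hs, h2⟩
        refine ⟨t + s, by positivity, ?_⟩
        convert S.add_mem h1 h2 using 1
        simp [add_smul]; abel
      smul_mem' := by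
        rintro ⟨r, hr⟩ a ⟨t, ht, h1⟩
        refine ⟨r * t, by positivity, ?_⟩
        convert S.smul_mem hr h1 using 1
        rw [smul_add, mul_smul]; rfl }
  have hu : S.u ≠ 0 := by
    intro h
    have : S.e = 0 := congrArg Subtype.val h
    apply hne
    rw [this]; simpa using S.zero_mem
  obtain ⟨g, hg1, hg2⟩ := riesz_extension c (LinearPMap.mkSpanSingleton S.u (1 : ℝ) hu) (by
      rintro ⟨x, hx⟩ hxs
      obtain ⟨r, rfl⟩ := Submodule.mem_span_singleton.1 hx
      have : (LinearPMap.mkSpanSingleton S.u (1 : ℝ) hu) ⟨r • S.u, hx⟩ = r := by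
        erw [LinearPMap.mkSpanSingleton'_apply]; simp
      rw [this]
      by_contra hr
      push Not at hr
      obtain ⟨t, ht, h1⟩ := hxs
      have h1 : r • S.e + t • (y : K) ∈ S.C := h1
      rcases ht.eq_or_lt with rfl | ht
      · apply hne
        have := S.smul_mem (r := (-r)⁻¹) (by simpa using hr.le) h1
        convert this using 1
        rw [zero_smul, add_zero, smul_smul]
        have : (-r)⁻¹ * r = -1 := by
          rw [inv_neg, neg_mul, inv_mul_cancel₀ hr.ne]
        rw [this]; simp
      · apply hy
        have := S.smul_mem (r := t⁻¹) (by positivity) (S.add_mem h1 (S.smul_mem (r := -r) (by linarith) S.e_mem))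
        convert this using 1
        have : r • S.e + t • (y : K) + (-r) • S.e = t • (y : K) := by rw [neg_smul]; abel
        rw [this, smul_smul, inv_mul_cancel₀ ht.ne', one_smul])
    (by
      intro x
      obtain ⟨M, hM, h1, h2⟩ := x.2
      refine ⟨⟨M • S.u, Submodule.mem_span_singleton.2 ⟨M, rfl⟩⟩, 0, le_rfl, ?_⟩
      rw [zero_smul, add_zero]; exact h2)
  refine ⟨g, fun x hx => hg2 x ⟨0, le_rfl, by simpa using hx⟩, ?_, ?_⟩
  · have := hg1 ⟨S.u, Submodule.mem_span_singleton_self _⟩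
    rw [this]; exact LinearPMap.mkSpanSingleton_apply ℝ ℝ hu 1
  · have := hg2 (-y) ⟨1, zero_le_one, by simpa using S.zero_mem⟩
    rw [map_neg] at this; linarith

/-- The set of normalised positive functionals, as plain functions. -/
def Om : Set (S.E → ℝ) :=
  {g | (∀ x y, g (x + y) = g x + g y) ∧ (∀ (r : ℝ) x, g (r • x) = r * g x) ∧
    (∀ x : S.E, (x : K) ∈ S.C → 0 ≤ g x) ∧ g S.u = 1}

lemma Om_of_linear (g : S.E →ₗ[ℝ] ℝ) (h1 : ∀ x : S.E, (x : K) ∈ S.C → 0 ≤ g x) (h2 : g S.u = 1) :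
    (g : S.E → ℝ) ∈ S.Om :=
  ⟨fun x y => g.map_add x y, fun r x => by simp, h1, h2⟩

lemma Om_bound {g : S.E → ℝ} (hg : g ∈ S.Om) (x : S.E) (M : ℝ)
    (h1 : M • S.e - (x : K) ∈ S.C) (h2 : M • S.e + (x : K) ∈ S.C) : |g x| ≤ M := by
  obtain ⟨ga, gs, gp, gu⟩ := hg
  have a1 : g (M • S.u + (-1 : ℝ) • x) = M + -1 * g x := by rw [ga, gs, gs, gu]; ring
  have a2 : g (M • S.u + x) = M + g x := by rw [ga, gs, gu]; ring
  have b1 := gp (M • S.u + (-1 : ℝ) • x) (by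
    convert h1 using 1
    simp [u, sub_eq_add_neg])
  have b2 := gp (M • S.u + x) h2
  rw [abs_le]; constructor <;> linarith

lemma Om_compact : IsCompact S.Om := by
  choose M hM h1 h2 using fun x : S.E => x.2
  apply IsCompact.of_isClosed_subset
    (isCompact_univ_pi (fun x : S.E => (isCompact_Icc : IsCompact (Set.Icc (-(M x)) (M x)))))
  · have c1 : IsClosed {g : S.E → ℝ | ∀ x y, g (x + y) = g x + g y} := by
      simp only [Set.ofPred_forall]
      exact isClosed_iInter fun x => isClosed_iInter fun y =>
        isClosed_eq (continuous_apply _) ((continuous_apply x).add (continuous_apply y))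
    have c2 : IsClosed {g : S.E → ℝ | ∀ (r : ℝ) x, g (r • x) = r * g x} := by
      simp only [Set.ofPred_forall]
      exact isClosed_iInter fun x => isClosed_iInter fun y =>
        isClosed_eq (continuous_apply _) (continuous_const.mul (continuous_apply _))
    have c3 : IsClosed {g : S.E → ℝ | ∀ x : S.E, (x : K) ∈ S.C → 0 ≤ g x} := by
      simp only [Set.ofPred_forall]
      exact isClosed_iInter fun x => isClosed_iInter fun y =>
        isClosed_le continuous_const (continuous_apply _)
    have c4 : IsClosed {g : S.E → ℝ | g S.u = 1} :=
      isClosed_eq (continuous_apply _) continuous_const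
    exact c1.inter (c2.inter (c3.inter c4))
  · intro g hg x _
    exact abs_le.1 (S.Om_bound hg x (M x) (h1 x) (h2 x))

lemma Om_extreme_mul {g : S.E → ℝ} (hg : g ∈ S.Om.extremePoints ℝ) {b : K} (hb : b ∈ S.T)
    (hb' : 1 - b ∈ S.T) (x : S.E) :
    g ⟨b * x, S.mul_mem_E hb hb' x.2⟩ = g ⟨b * S.e, S.mul_mem_E hb hb' S.e_mem_E⟩ * g x := by
  obtain ⟨hgO, hge⟩ := hg
  have key : ∀ (b : K) (hb : b ∈ S.T) (hb' : 1 - b ∈ S.T) (x : S.E),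
      g ⟨b * S.e, S.mul_mem_E hb hb' S.e_mem_E⟩ = 0 → g ⟨b * x, S.mul_mem_E hb hb' x.2⟩ = 0 := by
    intro b hb hb' x h0
    obtain ⟨M, hM, h1, h2⟩ := x.2
    obtain ⟨ga, gs, gp, gu⟩ := hgO
    have a1 : g (M • (⟨b * S.e, S.mul_mem_E hb hb' S.e_mem_E⟩ : S.E) + (-1 : ℝ) • ⟨b * x, S.mul_mem_E hb hb' x.2⟩)
      = - g ⟨b * x, S.mul_mem_E hb hb' x.2⟩ := by rw [ga, gs, gs, h0]; ring
    have a2 : g (M • (⟨b * S.e, S.mul_mem_E hb hb' S.e_mem_E⟩ : S.E) + ⟨b * x, S.mul_mem_E hb hb' x.2⟩)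
      = g ⟨b * x, S.mul_mem_E hb hb' x.2⟩ := by rw [ga, gs, h0]; ring
    have b1 := gp (M • (⟨b * S.e, S.mul_mem_E hb hb' S.e_mem_E⟩ : S.E) + (-1 : ℝ) • ⟨b * x, S.mul_mem_E hb hb' x.2⟩) (by
      convert S.mul_mem hb h1 using 1
      simp [mul_add, sub_eq_add_neg])
    have b2 := gp (M • (⟨b * S.e, S.mul_mem_E hb hb' S.e_mem_E⟩ : S.E) + ⟨b * x, S.mul_mem_E hb hb' x.2⟩) (by
      convert S.mul_mem hb h2 using 1
      simp [mul_add])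
    linarith
  have hb1 : 1 - (1 - b) ∈ S.T := by simpa using hb
  obtain ⟨ga, gs, gp, gu⟩ := hgO
  have hsum : ∀ x : S.E, g ⟨(1 - b) * x, S.mul_mem_E hb' hb1 x.2⟩ = g x - g ⟨b * x, S.mul_mem_E hb hb' x.2⟩ := by
    intro x
    have := ga ⟨(1 - b) * x, S.mul_mem_E hb' hb1 x.2⟩ ⟨b * x, S.mul_mem_E hb hb' x.2⟩
    have h2 : (⟨(1 - b) * x, S.mul_mem_E hb' hb1 x.2⟩ : S.E) + ⟨b * x, S.mul_mem_E hb hb' x.2⟩ = x := by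
      ext; simp; ring
    rw [h2] at this; linarith
  set t := g ⟨b * S.e, S.mul_mem_E hb hb' S.e_mem_E⟩ with ht
  have ht0 : 0 ≤ t := gp _ (S.mul_mem hb S.e_mem)
  have hsu := hsum S.u
  have ht1 : 0 ≤ 1 - t := by
    have := gp ⟨(1 - b) * S.e, S.mul_mem_E hb' hb1 S.e_mem_E⟩ (S.mul_mem hb' S.e_mem)
    change g ⟨(1 - b) * S.e, _⟩ = _ - t at hsu
    rw [gu] at hsu; linarith
  rcases ht0.eq_or_lt with h0 | h0
  · rw [key b hb hb' x h0.symm, ← h0, zero_mul]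
  rcases ht1.eq_or_lt with h1 | h1
  · have h2 := key (1 - b) hb' hb1 x (by
      change g ⟨(1 - b) * S.e, _⟩ = _ - t at hsu
      rw [gu] at hsu; rw [hsu]; linarith)
    rw [hsum] at h2
    have : t = 1 := by linarith
    rw [this]; linarith
  · have hlin : ∀ (b : K) (hb : b ∈ S.T) (hb' : 1 - b ∈ S.T) (t : ℝ), 0 < t → g ⟨b * S.e, S.mul_mem_E hb hb' S.e_mem_E⟩ = t →
        (fun x : S.E => t⁻¹ * g ⟨b * x, S.mul_mem_E hb hb' x.2⟩) ∈ S.Om := by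
      intro b hb hb' t ht0 ht
      refine ⟨?_, ?_, ?_, ?_⟩
      · intro x y
        have : (⟨b * ((x + y : S.E) : K), S.mul_mem_E hb hb' (x + y).2⟩ : S.E)
          = ⟨b * x, S.mul_mem_E hb hb' x.2⟩ + ⟨b * y, S.mul_mem_E hb hb' y.2⟩ := by
          ext; simp [mul_add]
        simp only [this, ga]; ring
      · intro r x
        have : (⟨b * ((r • x : S.E) : K), S.mul_mem_E hb hb' (r • x).2⟩ : S.E)
          = r • ⟨b * x, S.mul_mem_E hb hb' x.2⟩ := by
          ext; simp
        simp only [this, gs]; ring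
      · intro x hx
        have := gp ⟨b * x, S.mul_mem_E hb hb' x.2⟩ (S.mul_mem hb hx)
        positivity
      · change t⁻¹ * g ⟨b * S.e, _⟩ = 1
        rw [ht]; field_simp
    have e1 := hge (hlin b hb hb' t h0 rfl) (hlin (1 - b) hb' hb1 (1 - t) h1 (by
      change g ⟨(1 - b) * S.e, _⟩ = _ - t at hsu
      rw [gu] at hsu; exact hsu)) ⟨t, 1 - t, h0, h1, by ring, by
        funext x
        simp only [Pi.add_apply, Pi.smul_apply, smul_eq_mul]
        rw [hsum]; field_simp; ring⟩
    have := congrFun e1 x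
    rw [← this]; field_simp

theorem exists_gap {y : K} (hy : y ∈ S.E) (hpos : ∀ L : K →ₗ[ℝ] ℝ, S.IsState L → 0 < L y) :
    ∃ η : ℝ, 0 < η ∧ y - η • S.e ∈ S.C := by
  by_cases hne : S.Om.Nonempty
  · set y' : S.E := ⟨y, hy⟩
    obtain ⟨g0, hg0, hmin⟩ := S.Om_compact.exists_isMinOn hne
      (continuous_apply y' : Continuous fun g : S.E → ℝ => g y').continuousOn
    set m := g0 y' with hm
    have hmin : ∀ g ∈ S.Om, m ≤ g y' := fun g hg => hmin hg
    have hF : IsCompact (S.Om ∩ {g | g y' = m}) :=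
      S.Om_compact.inter_right (isClosed_eq (continuous_apply _) continuous_const)
    obtain ⟨g, hg⟩ := hF.extremePoints_nonempty ⟨g0, hg0, rfl⟩
    have hgO : g ∈ S.Om.extremePoints ℝ := by
      refine ⟨hg.1.1, ?_⟩
      intro g1 h1 g2 h2 hseg
      obtain ⟨a, b, ha, hb, hab, rfl⟩ := id hseg
      have e := hg.1.2
      simp only [Set.mem_ofPred_eq, Pi.add_apply, Pi.smul_apply, smul_eq_mul] at e
      have l1 := hmin g1 h1
      have l2 := hmin g2 h2
      have q1 : g1 y' = m := by
        by_contra hne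
        have : m < g1 y' := lt_of_le_of_ne l1 (Ne.symm hne)
        have z1 := mul_lt_mul_of_pos_left this ha
        have z2 := mul_le_mul_of_nonneg_left l2 hb.le
        have z3 : a * m + b * m = m := by rw [← add_mul, hab, one_mul]
        linarith
      have q2 : g2 y' = m := by
        by_contra hne
        have : m < g2 y' := lt_of_le_of_ne l2 (Ne.symm hne)
        have z1 := mul_lt_mul_of_pos_left this hb
        have z2 := mul_le_mul_of_nonneg_left l1 ha.le
        have z3 : a * m + b * m = m := by rw [← add_mul, hab, one_mul]
        linarith
      exact hg.2 ⟨h1, q1⟩ ⟨h2, q2⟩ hseg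
    have hgO' := hgO.1
    let gl : S.E →ₗ[ℝ] ℝ :=
      { toFun := g, map_add' := hgO'.1, map_smul' := fun r x => by simpa using hgO'.2.1 r x }
    obtain ⟨L, hL⟩ := LinearMap.exists_extend gl
    have hL' : ∀ x : S.E, L x = g x := fun x => by
      exact LinearMap.congr_fun hL x
    have hst : S.IsState L := by
      refine ⟨?_, ?_, ?_⟩
      · exact (hL' S.u).trans hgO'.2.2.2
      · intro x hx hxE
        rw [hL' ⟨x, hxE⟩]; exact hgO'.2.2.1 _ hx
      · intro b hb hb' x hx
        have := S.Om_extreme_mul hgO hb hb' ⟨x, hx⟩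
        rw [← hL', ← hL', ← hL'] at this
        exact this
    have hmpos : 0 < m := by
      have := hpos L hst
      rw [hL' y', hg.1.2] at this
      exact this
    refine ⟨m / 2, by positivity, ?_⟩
    by_contra hcon
    obtain ⟨q, hq1, hq2, hq3⟩ := S.exists_pos_functional (y' - (m / 2) • S.u) hcon
    have := hmin q (S.Om_of_linear q hq1 hq2)
    rw [map_sub, map_smul, hq2] at hq3
    simp at hq3
    linarith
  · refine ⟨1, one_pos, ?_⟩
    by_contra hcon
    obtain ⟨q, hq1, hq2, hq3⟩ := S.exists_pos_functional (⟨y, hy⟩ - (1 : ℝ) • S.u) hcon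
    exact hne ⟨q, S.Om_of_linear q hq1 hq2⟩

end CS
end CMM

namespace CMM

/-- Group algebra of `ℝ^d`. -/
abbrev RR (d : ℕ) := AddMonoidAlgebra ℝ (Fin d → ℝ)

variable {d : ℕ}

/-- Monomials. -/
def X (v : Fin d → ℝ) : RR d := AddMonoidAlgebra.single v 1

/-- Entrywise exponential. -/
def ex (v : Fin d → ℝ) : Fin d → ℝ := fun l => Real.exp (v l)

lemma ex_pos (v : Fin d → ℝ) (l) : 0 < ex v l := Real.exp_pos _

lemma X_zero : X (0 : Fin d → ℝ) = 1 := rfl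

lemma X_add (v w : Fin d → ℝ) : X (v + w) = X v * X w := by
  simp [X, AddMonoidAlgebra.single_mul_single]

lemma X_sum {ι : Type*} (s : Finset ι) (v : ι → Fin d → ℝ) : X (∑ i ∈ s, v i) = ∏ i ∈ s, X (v i) := by
  classical
  induction s using Finset.induction_on with
  | empty => simp [X_zero]
  | insert a s ha ih => rw [Finset.sum_insert ha, Finset.prod_insert ha, X_add, ih]

lemma X_nsmul (n : ℕ) (v : Fin d → ℝ) : X (n • v) = X v ^ n := by
  induction n with
  | zero => simp [X_zero]
  | succ n ih => rw [succ_nsmul, X_add, ih, pow_succ]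

lemma X_mul_neg (v : Fin d → ℝ) : X v * X (-v) = 1 := by
  rw [← X_add]; simp [X_zero]

lemma coeff_X (v : Fin d → ℝ) : (X v).coeff = Finsupp.single v 1 := rfl

lemma eq_sum (x : RR d) : x = ∑ v ∈ x.coeff.support, x.coeff v • X v := by
  conv_lhs => rw [← AddMonoidAlgebra.sum_coeff_single x]
  rw [Finsupp.sum]
  refine Finset.sum_congr rfl fun v _ => ?_
  simp [X]

lemma lin_ext {M : Type*} [AddCommMonoid M] [Module ℝ M] {f g : RR d →ₗ[ℝ] M} (h : ∀ v, f (X v) = g (X v)) : f = g := by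
  refine LinearMap.ext fun x => ?_
  rw [eq_sum x]
  simp [h]

/-- Linear functional with prescribed values on monomials. -/
def lin (h : (Fin d → ℝ) → ℝ) : RR d →ₗ[ℝ] ℝ where
  toFun x := Finsupp.linearCombination ℝ h x.coeff
  map_add' x y := by simp
  map_smul' r x := by simp

@[simp] lemma lin_X (h : (Fin d → ℝ) → ℝ) (v) : lin h (X v) = h v := by
  simp [lin, coeff_X]

/-- Evaluation at hypothesis `l`. -/
def ev (l : Fin d) : RR d →ₐ[ℝ] ℝ :=
  AddMonoidAlgebra.lift ℝ ℝ (Fin d → ℝ)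
    { toFun := fun v => Real.exp (v.toAdd l), map_one' := by simp, map_mul' := fun v w => by simp [Real.exp_add] }

@[simp] lemma ev_X (l : Fin d) (v) : ev l (X v) = Real.exp (v l) := by
  simp [ev, X, AddMonoidAlgebra.lift_single]

/-- Nonnegative elements. -/
def Rpos (d : ℕ) : Set (RR d) := {x | ∀ v, 0 ≤ x.coeff v}

lemma Rpos_zero : (0 : RR d) ∈ Rpos d := fun v => by simp
lemma Rpos_X (v : Fin d → ℝ) : X v ∈ Rpos d := fun w => by
  rw [coeff_X, Finsupp.single_apply]; split_ifs <;> simp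
lemma Rpos_one : (1 : RR d) ∈ Rpos d := Rpos_X 0
lemma Rpos_add {x y : RR d} (hx : x ∈ Rpos d) (hy : y ∈ Rpos d) : x + y ∈ Rpos d := fun v => by
  simpa using add_nonneg (hx v) (hy v)
lemma Rpos_smul {r : ℝ} {x : RR d} (hr : 0 ≤ r) (hx : x ∈ Rpos d) : r • x ∈ Rpos d := fun v => by
  simpa using mul_nonneg hr (hx v)
lemma Rpos_sum {ι : Type*} {s : Finset ι} {f : ι → RR d} (h : ∀ i ∈ s, f i ∈ Rpos d) :
    ∑ i ∈ s, f i ∈ Rpos d := by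
  classical
  induction s using Finset.induction_on with
  | empty => simpa using Rpos_zero
  | insert a s ha ih =>
    rw [Finset.sum_insert ha]
    exact Rpos_add (h a (by simp)) (ih fun i hi => h i (by simp [hi]))

lemma Rpos_mul {x y : RR d} (hx : x ∈ Rpos d) (hy : y ∈ Rpos d) : x * y ∈ Rpos d := by
  rw [eq_sum x, eq_sum y, Finset.sum_mul_sum]
  refine Rpos_sum fun i _ => Rpos_sum fun j _ => ?_
  rw [smul_mul_smul_comm, ← X_add]
  exact Rpos_smul (mul_nonneg (hx _) (hy _)) (Rpos_X _)

lemma Rpos_pow {x : RR d} (hx : x ∈ Rpos d) (n : ℕ) : x ^ n ∈ Rpos d := by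
  induction n with
  | zero => simpa using Rpos_one
  | succ n ih => rw [pow_succ]; exact Rpos_mul ih hx

lemma Rpos_add_ne {x y : RR d} (hx : x ∈ Rpos d) (hy : y ∈ Rpos d) (h : x ≠ 0) : x + y ≠ 0 := by
  intro h0
  apply h
  ext v
  have := congrArg (fun z : RR d => z.coeff v) h0
  simp at this
  have h1 := hx v
  have h2 := hy v
  simp; linarith

lemma X_ne (v : Fin d → ℝ) : X v ≠ 0 := by
  intro h
  have := congrArg (fun z : RR d => z.coeff v) h
  simp [coeff_X] at this

lemma ev_pos {x : RR d} (hx : x ∈ Rpos d) (h : x ≠ 0) (l : Fin d) : 0 < ev l x := by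
  rw [eq_sum x]
  simp only [map_sum, map_smul, ev_X, smul_eq_mul]
  refine Finset.sum_pos (fun v hv => mul_pos ?_ (Real.exp_pos _)) ?_
  · exact lt_of_le_of_ne (hx v) (Ne.symm (Finsupp.mem_support_iff.1 hv))
  · rw [Finset.nonempty_iff_ne_empty]
    intro h0
    apply h
    rw [eq_sum x, h0]; simp

/-- Sublinear functions. -/
def Sublin (φ : (Fin d → ℝ) → ℝ) : Prop :=
  (∀ x y, φ (x + y) ≤ φ x + φ y) ∧ ∀ (t : ℝ) x, 0 ≤ t → φ (t • x) = t * φ x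

lemma Sublin.zero {φ : (Fin d → ℝ) → ℝ} (h : Sublin φ) : φ 0 = 0 := by
  simpa using h.2 0 0 le_rfl

lemma Sublin.sum {φ : (Fin d → ℝ) → ℝ} (h : Sublin φ) {ι : Type*} (s : Finset ι) (c : ι → ℝ)
    (hc : ∀ i ∈ s, 0 ≤ c i) (x : ι → Fin d → ℝ) :
    φ (∑ i ∈ s, c i • x i) ≤ ∑ i ∈ s, c i * φ (x i) := by
  classical
  induction s using Finset.induction_on with
  | empty => simp [h.zero]
  | insert a s ha ih =>
    rw [Finset.sum_insert ha, Finset.sum_insert ha]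
    refine (h.1 _ _).trans (add_le_add (h.2 _ _ (hc a (by simp))).le (ih fun i hi => hc i (by simp [hi])))

/-- Pairing with a sublinear function. -/
def pair (φ : (Fin d → ℝ) → ℝ) : RR d →ₗ[ℝ] ℝ := lin fun v => φ (ex v)

@[simp] lemma pair_X (φ : (Fin d → ℝ) → ℝ) (v) : pair φ (X v) = φ (ex v) := by simp [pair]

/-- The main cone. -/
def CC (d : ℕ) : Set (RR d) := {x | ∀ φ, Sublin φ → 0 ≤ pair φ x}

lemma CC_zero : (0 : RR d) ∈ CC d := fun φ _ => by simp
lemma CC_add {x y : RR d} (hx : x ∈ CC d) (hy : y ∈ CC d) : x + y ∈ CC d := fun φ h => by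
  rw [map_add]; exact add_nonneg (hx φ h) (hy φ h)
lemma CC_smul {r : ℝ} {x : RR d} (hr : 0 ≤ r) (hx : x ∈ CC d) : r • x ∈ CC d := fun φ h => by
  rw [map_smul]; exact mul_nonneg hr (hx φ h)
lemma CC_sum {ι : Type*} {s : Finset ι} {f : ι → RR d} (h : ∀ i ∈ s, f i ∈ CC d) :
    ∑ i ∈ s, f i ∈ CC d := by
  classical
  induction s using Finset.induction_on with
  | empty => simpa using CC_zero
  | insert a s ha ih =>
    rw [Finset.sum_insert ha]
    exact CC_add (h a (by simp)) (ih fun i hi => h i (by simp [hi]))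

lemma CC_X_mul (v : Fin d → ℝ) {x : RR d} (hx : x ∈ CC d) : X v * x ∈ CC d := fun φ h => by
  have h1 : (pair φ).comp (LinearMap.mulLeft ℝ (X v)) = pair fun y => φ fun l => Real.exp (v l) * y l := by
    apply lin_ext
    intro w
    simp only [LinearMap.comp_apply, LinearMap.mulLeft_apply, ← X_add, pair_X]
    congr 1
    funext l
    simp [ex, Real.exp_add]
  have h2 := LinearMap.congr_fun h1 x
  simp only [LinearMap.comp_apply, LinearMap.mulLeft_apply] at h2
  rw [h2]
  refine hx _ ⟨fun a b => ?_, fun t a ht => ?_⟩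
  · refine le_trans (le_of_eq ?_) (h.1 _ _)
    refine congrArg φ (funext fun l => ?_); simp [mul_add]
  · rw [← h.2 t _ ht]
    refine congrArg φ (funext fun l => ?_); simp; ring

lemma CC_mul {r x : RR d} (hr : r ∈ Rpos d) (hx : x ∈ CC d) : r * x ∈ CC d := by
  rw [eq_sum r, Finset.sum_mul]
  refine CC_sum fun v _ => ?_
  rw [smul_mul_assoc]
  exact CC_smul (hr v) (CC_X_mul v hx)

lemma CC_ev {x : RR d} (hx : x ∈ CC d) (l : Fin d) : ev l x = 0 := by
  have h1 : ∀ c : ℝ, pair (fun y => c * y l) = c • (ev l).toLinearMap := by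
    intro c
    apply lin_ext
    intro v
    simp [ex]
  have h2 : ∀ c : ℝ, 0 ≤ c * ev l x := by
    intro c
    have := hx (fun y => c * y l) ⟨fun a b => by simp [mul_add], fun t a _ => by simp; ring⟩
    rw [h1] at this
    simpa using this
  have := h2 1
  have := h2 (-1)
  linarith

/-- Jensen. -/
lemma CC_jensen {h : RR d} (hh : h ∈ Rpos d) (w : Fin d → ℝ) (hw : ∀ l, ev l h = Real.exp (w l)) :
    h - X w ∈ CC d := by
  intro φ hφ
  rw [map_sub, sub_nonneg, pair_X]
  have h1 : ex w = ∑ v ∈ h.coeff.support, h.coeff v • ex v := by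
    funext l
    have := hw l
    rw [eq_sum h] at this
    simp only [map_sum, map_smul, ev_X, smul_eq_mul] at this
    simp [ex, ← this]
  rw [h1]
  conv_rhs => rw [eq_sum h]
  simp only [map_sum, map_smul, pair_X, smul_eq_mul]
  exact hφ.sum _ _ (fun i _ => hh i) _

lemma CC_const (c : ℝ) : X (fun _ => c) - Real.exp c • 1 ∈ CC d := by
  intro φ hφ
  rw [map_sub, map_smul, ← X_zero, pair_X, pair_X]
  have : ex (fun _ : Fin d => c) = Real.exp c • ex (0 : Fin d → ℝ) := by
    funext l; simp [ex]
  rw [this, hφ.2 _ _ (Real.exp_pos _).le]; simp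

lemma CC_const' (c : ℝ) : -(X (fun _ => c) - Real.exp c • 1) ∈ CC d := by
  intro φ hφ
  rw [map_neg, map_sub, map_smul, ← X_zero, pair_X, pair_X]
  have : ex (fun _ : Fin d => c) = Real.exp c • ex (0 : Fin d → ℝ) := by
    funext l; simp [ex]
  rw [this, hφ.2 _ _ (Real.exp_pos _).le]; simp

/-- Normalised elements. -/
def Norm1 (h : RR d) : Prop := ∀ l, ev l h = 1

lemma CC_norm {h : RR d} (hh : h ∈ Rpos d) (hn : Norm1 h) : h - 1 ∈ CC d := by
  rw [← X_zero]; exact CC_jensen hh 0 (fun l => by simp [hn l])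

lemma Norm1.mul {a b : RR d} (ha : Norm1 a) (hb : Norm1 b) : Norm1 (a * b) := fun l => by
  simp [ha l, hb l]
lemma Norm1.pow {a : RR d} (ha : Norm1 a) (n : ℕ) : Norm1 (a ^ n) := fun l => by
  simp [ha l]
lemma Norm1.ne [NeZero d] {a : RR d} (ha : Norm1 a) : a ≠ 0 := by
  rintro rfl
  have := ha 0
  simp at this

/-- The fraction field. -/
abbrev KK (d : ℕ) := FractionRing (RR d)

/-- Embedding into the fraction field. -/
abbrev emb : RR d →+* KK d := algebraMap (RR d) (KK d)

lemma emb_ne {s : RR d} (h : s ≠ 0) : emb s ≠ 0 := by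
  intro h0
  exact h ((IsFractionRing.injective (RR d) (KK d)) (by simpa using h0))

lemma emb_smul (r : ℝ) (x : RR d) : emb (r • x) = r • emb x := by
  rw [Algebra.algebraMap_eq_smul_one, smul_assoc, ← Algebra.algebraMap_eq_smul_one]

/-- Positive fractions. -/
def TK (d : ℕ) : Set (KK d) := {b | ∃ r ∈ Rpos d, ∃ s ∈ Rpos d, s ≠ 0 ∧ b * emb s = emb r}

/-- Localised cone. -/
def CK (d : ℕ) : Set (KK d) := {b | ∃ c ∈ CC d, ∃ s ∈ Rpos d, s ≠ 0 ∧ b * emb s = emb c}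

/-- Concrete ordered-cone data. -/
def cs (e : RR d) (he : e ∈ CC d) : CS (KK d) where
  T := TK d
  C := CK d
  e := emb e
  add_mem := by
    rintro x y ⟨c, hc, s, hs, hs0, h1⟩ ⟨c', hc', s', hs', hs0', h2⟩
    refine ⟨s' * c + s * c', CC_add (CC_mul hs' hc) (CC_mul hs hc'), s * s', Rpos_mul hs hs', mul_ne_zero hs0 hs0', ?_⟩
    rw [map_add, map_mul, map_mul, map_mul, ← h1, ← h2]; ring
  smul_mem := by
    rintro r x hr ⟨c, hc, s, hs, hs0, h1⟩
    refine ⟨r • c, CC_smul hr hc, s, hs, hs0, ?_⟩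
    rw [emb_smul, ← h1, smul_mul_assoc]
  mul_mem := by
    rintro b x ⟨c, hc, s, hs, hs0, h1⟩ ⟨c', hc', s', hs', hs0', h2⟩
    refine ⟨c * c', CC_mul hc hc', s * s', Rpos_mul hs hs', mul_ne_zero hs0 hs0', ?_⟩
    rw [map_mul, map_mul, ← h1, ← h2]; ring
  e_mem := ⟨e, he, 1, Rpos_one, one_ne_zero, by simp⟩
  T_mul := by
    rintro b x ⟨c, hc, s, hs, hs0, h1⟩ ⟨c', hc', s', hs', hs0', h2⟩
    refine ⟨c * c', Rpos_mul hc hc', s * s', Rpos_mul hs hs', mul_ne_zero hs0 hs0', ?_⟩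
    rw [map_mul, map_mul, ← h1, ← h2]; ring

lemma CK_of_CC {c : RR d} (hc : c ∈ CC d) : emb c ∈ CK d :=
  ⟨c, hc, 1, Rpos_one, one_ne_zero, by simp⟩

lemma TK_of_Rpos {c : RR d} (hc : c ∈ Rpos d) : emb c ∈ TK d :=
  ⟨c, hc, 1, Rpos_one, one_ne_zero, by simp⟩

lemma CC_of_CK {y : RR d} (h : emb y ∈ CK d) : ∃ s ∈ Rpos d, s ≠ 0 ∧ s * y ∈ CC d := by
  obtain ⟨c, hc, s, hs, hs0, h1⟩ := h
  refine ⟨s, hs, hs0, ?_⟩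
  rw [← map_mul] at h1
  have := IsFractionRing.injective (RR d) (KK d) h1
  rw [mul_comm, this]; exact hc

lemma TK_frac {r s : RR d} (hr : r ∈ Rpos d) (hs : s ∈ Rpos d) (h0 : s ≠ 0) : emb r / emb s ∈ TK d :=
  ⟨r, hr, s, hs, h0, by rw [div_mul_cancel₀]; exact emb_ne h0⟩

lemma TK_frac' {r s : RR d} (hr : s - r ∈ Rpos d) (hs : s ∈ Rpos d) (h0 : s ≠ 0) : 1 - emb r / emb s ∈ TK d :=
  ⟨s - r, hr, s, hs, h0, by rw [sub_mul, div_mul_cancel₀ _ (emb_ne h0), map_sub, one_mul]⟩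

end CMM

namespace CMM
namespace CS
variable {K : Type*} [CommRing K] [Algebra ℝ K] {S : CS K} {L : K →ₗ[ℝ] ℝ} (hL : S.IsState L)

/-- Character attached to a state. -/
def chi (_hL : S.IsState L) (b : K) : ℝ := L (b * S.e)

/-- Multipliers of a state. -/
def B (hL : S.IsState L) : Subalgebra ℝ K where
  carrier := {b | ∀ x ∈ S.E, b * x ∈ S.E ∧ L (b * x) = L (b * S.e) * L x}
  mul_mem' := by
    intro a b ha hb x hx
    have h1 := hb x hx
    have h2 := ha _ h1.1
    refine ⟨by rw [mul_assoc]; exact h2.1, ?_⟩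
    have h3 := hb _ S.e_mem_E
    have h4 := ha _ h3.1
    rw [mul_assoc, h2.2, h1.2, mul_assoc a b, h4.2]; ring
  add_mem' := by
    intro a b ha hb x hx
    refine ⟨by rw [add_mul]; exact AddMemClass.add_mem (ha x hx).1 (hb x hx).1, ?_⟩
    rw [add_mul, add_mul, map_add, map_add, (ha x hx).2, (hb x hx).2]; ring
  algebraMap_mem' := by
    intro r x hx
    refine ⟨by rw [← Algebra.smul_def]; exact S.E.smul_mem _ hx, ?_⟩
    rw [← Algebra.smul_def, ← Algebra.smul_def, map_smul, map_smul, hL.map_e]; simp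

lemma B_mul_E {b x : K} (hb : b ∈ B hL) (hx : x ∈ S.E) : b * x ∈ S.E := (hb x hx).1
lemma B_L {b x : K} (hb : b ∈ B hL) (hx : x ∈ S.E) : L (b * x) = chi hL b * L x := (hb x hx).2

lemma B_of_T {b : K} (hb : b ∈ S.T) (hb' : 1 - b ∈ S.T) : b ∈ B hL := fun x hx =>
  ⟨S.mul_mem_E hb hb' hx, hL.mul b hb hb' x hx⟩

lemma chi_one : chi hL 1 = 1 := by rw [chi, one_mul, hL.map_e]
lemma chi_add (a b : K) : chi hL (a + b) = chi hL a + chi hL b := by simp [chi, add_mul]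
lemma chi_sub (a b : K) : chi hL (a - b) = chi hL a - chi hL b := by simp [chi, sub_mul]
lemma chi_smul (r : ℝ) (b : K) : chi hL (r • b) = r * chi hL b := by simp [chi]
lemma chi_sum {ι : Type*} (s : Finset ι) (b : ι → K) : chi hL (∑ i ∈ s, b i) = ∑ i ∈ s, chi hL (b i) := by
  simp [chi, Finset.sum_mul]
lemma chi_mul {a b : K} (ha : a ∈ B hL) (hb : b ∈ B hL) : chi hL (a * b) = chi hL a * chi hL b := by
  have := B_L hL ha (B_mul_E hL hb S.e_mem_E)
  rw [chi, mul_assoc, this]; rfl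
lemma chi_pow {a : K} (ha : a ∈ B hL) (n : ℕ) : chi hL (a ^ n) = chi hL a ^ n := by
  induction n with
  | zero => simp [chi_one]
  | succ n ih => rw [pow_succ, chi_mul hL (pow_mem ha n) ha, ih, pow_succ]
lemma chi_nonneg {b : K} (hb : b ∈ B hL) (hT : b ∈ S.T) : 0 ≤ chi hL b :=
  hL.nonneg _ (S.mul_mem hT S.e_mem) (B_mul_E hL hb S.e_mem_E)

lemma chi_key {w ξ : K} (h1 : S.e * w ∈ B hL) (h2 : ξ ∈ S.E) : chi hL (w * ξ) = chi hL (S.e * w) * L ξ := by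
  rw [← B_L hL h1 h2, chi]; congr 1; ring

/-- Denominators. -/
def Den (hL : S.IsState L) (b : K) : Prop := b ∈ B hL ∧ b ∈ S.T ∧ chi hL b ≠ 0

lemma Den.mul {a b : K} (ha : Den hL a) (hb : Den hL b) : Den hL (a * b) :=
  ⟨MulMemClass.mul_mem ha.1 hb.1, S.T_mul ha.2.1 hb.2.1, by
    rw [chi_mul hL ha.1 hb.1]; exact mul_ne_zero ha.2.2 hb.2.2⟩

open Classical in
/-- Extended character. -/
def Fh (hL : S.IsState L) (x : K) : ℝ :=
  if h : ∃ b, Den hL b ∧ b * x ∈ B hL then chi hL (h.choose * x) / chi hL h.choose else 0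

lemma Fh_eq {b x : K} (hb : Den hL b) (hx : b * x ∈ B hL) : Fh hL x = chi hL (b * x) / chi hL b := by
  have h : ∃ b, Den hL b ∧ b * x ∈ B hL := ⟨b, hb, hx⟩
  rw [Fh, dif_pos h]
  obtain ⟨h1, h2⟩ := h.choose_spec
  set c := h.choose
  rw [div_eq_div_iff h1.2.2 hb.2.2, ← chi_mul hL h2 hb.1, ← chi_mul hL hx h1.1]
  congr 1; ring

open Classical in
/-- Extended functional. -/
def Lh (hL : S.IsState L) (x : K) : ℝ :=
  if h : ∃ b, Den hL b ∧ b * x ∈ S.E then L (h.choose * x) / chi hL h.choose else 0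

lemma Lh_eq {b x : K} (hb : Den hL b) (hx : b * x ∈ S.E) : Lh hL x = L (b * x) / chi hL b := by
  have h : ∃ b, Den hL b ∧ b * x ∈ S.E := ⟨b, hb, hx⟩
  rw [Lh, dif_pos h]
  obtain ⟨h1, h2⟩ := h.choose_spec
  set c := h.choose
  rw [div_eq_div_iff h1.2.2 hb.2.2, mul_comm, mul_comm _ (chi hL c), ← B_L hL hb.1 h2, ← B_L hL h1.1 hx]
  congr 1; ring

/-- Domain of the extended character. -/
def V (hL : S.IsState L) (x : K) : Prop := ∃ b, Den hL b ∧ b * x ∈ B hL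

/-- Domain of the extended functional. -/
def W (hL : S.IsState L) (x : K) : Prop := ∃ b, Den hL b ∧ b * x ∈ S.E

lemma V_add {x y : K} (hx : V hL x) (hy : V hL y) : V hL (x + y) ∧ Fh hL (x + y) = Fh hL x + Fh hL y := by
  obtain ⟨b, hb, h1⟩ := hx
  obtain ⟨c, hc, h2⟩ := hy
  have e1 : b * c * (x + y) = c * (b * x) + b * (c * y) := by ring
  have h3 : b * c * (x + y) ∈ B hL := by
    rw [e1]; exact AddMemClass.add_mem (MulMemClass.mul_mem hc.1 h1) (MulMemClass.mul_mem hb.1 h2)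
  refine ⟨⟨b * c, hb.mul hL hc, h3⟩, ?_⟩
  have := hb.2.2
  have := hc.2.2
  rw [Fh_eq hL (hb.mul hL hc) h3, Fh_eq hL hb h1, Fh_eq hL hc h2, e1, chi_add, chi_mul hL hc.1 h1,
    chi_mul hL hb.1 h2, chi_mul hL hb.1 hc.1]
  field_simp

lemma V_mul {x y : K} (hx : V hL x) (hy : V hL y) : V hL (x * y) ∧ Fh hL (x * y) = Fh hL x * Fh hL y := by
  obtain ⟨b, hb, h1⟩ := hx
  obtain ⟨c, hc, h2⟩ := hy
  have e1 : b * c * (x * y) = (b * x) * (c * y) := by ring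
  have h3 : b * c * (x * y) ∈ B hL := by
    rw [e1]; exact MulMemClass.mul_mem h1 h2
  refine ⟨⟨b * c, hb.mul hL hc, h3⟩, ?_⟩
  have := hb.2.2
  have := hc.2.2
  rw [Fh_eq hL (hb.mul hL hc) h3, Fh_eq hL hb h1, Fh_eq hL hc h2, e1, chi_mul hL h1 h2, chi_mul hL hb.1 hc.1]
  field_simp

lemma W_add {x y : K} (hx : W hL x) (hy : W hL y) : W hL (x + y) ∧ Lh hL (x + y) = Lh hL x + Lh hL y := by
  obtain ⟨b, hb, h1⟩ := hx
  obtain ⟨c, hc, h2⟩ := hy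
  have e1 : b * c * (x + y) = c * (b * x) + b * (c * y) := by ring
  have h3 : b * c * (x + y) ∈ S.E := by
    rw [e1]; exact AddMemClass.add_mem (B_mul_E hL hc.1 h1) (B_mul_E hL hb.1 h2)
  refine ⟨⟨b * c, hb.mul hL hc, h3⟩, ?_⟩
  have := hb.2.2
  have := hc.2.2
  rw [Lh_eq hL (hb.mul hL hc) h3, Lh_eq hL hb h1, Lh_eq hL hc h2, e1, map_add, B_L hL hc.1 h1,
    B_L hL hb.1 h2, chi_mul hL hb.1 hc.1]
  field_simp

lemma W_mul {x y : K} (hx : V hL x) (hy : W hL y) : W hL (x * y) ∧ Lh hL (x * y) = Fh hL x * Lh hL y := by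
  obtain ⟨b, hb, h1⟩ := hx
  obtain ⟨c, hc, h2⟩ := hy
  have e1 : b * c * (x * y) = (b * x) * (c * y) := by ring
  have h3 : b * c * (x * y) ∈ S.E := by
    rw [e1]; exact B_mul_E hL h1 h2
  refine ⟨⟨b * c, hb.mul hL hc, h3⟩, ?_⟩
  have := hb.2.2
  have := hc.2.2
  rw [Lh_eq hL (hb.mul hL hc) h3, Fh_eq hL hb h1, Lh_eq hL hc h2, e1, B_L hL h1 h2, chi_mul hL hb.1 hc.1]
  field_simp

lemma W_nonneg {x : K} (hx : W hL x) (hC : x ∈ S.C) : 0 ≤ Lh hL x := by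
  obtain ⟨b, hb, h1⟩ := hx
  rw [Lh_eq hL hb h1]
  exact div_nonneg (hL.nonneg _ (S.mul_mem hb.2.1 hC) h1) (chi_nonneg hL hb.1 hb.2.1)

end CS

variable {d : ℕ}

/-- Point data. -/
structure Pt (e : RR d) (F : RR d →ₐ[ℝ] ℝ) (Φ : RR d →ₗ[ℝ] ℝ) : Prop where
  pos : ∀ v, 0 < F (X v)
  nonneg : ∀ x ∈ CC d, 0 ≤ Φ x
  mul : ∀ r x, (∀ l, ev l x = 0) → Φ (r * x) = F r * Φ x
  one : Φ e = 1

/-- Power universality. -/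
def PU (f : RR d) : Prop := ∀ h ∈ Rpos d, Norm1 h → ∃ n, ∀ m, n ≤ m → f ^ m - h ∈ CC d

/-- Tropical hypothesis, ring form. -/
def TropR (f : RR d) (a : Fin d → ℝ) : Prop :=
  ∀ u, ∃ t : ℕ, 1 ≤ t ∧ ∃ y ∈ Rpos d, ∃ κ : ℝ, 0 < κ ∧ f ^ t - κ • y ∈ Rpos d ∧ y - X (t • a + u) ∈ CC d

lemma exists_diff (x : RR d) : ∃ p ∈ Rpos d, ∃ q ∈ Rpos d, p ≠ 0 ∧ x = p - q := by
  have h1 : ∃ p ∈ Rpos d, ∃ q ∈ Rpos d, x = p - q := by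
    rw [eq_sum x]
    induction x.coeff.support using Finset.induction_on with
    | empty => exact ⟨0, Rpos_zero, 0, Rpos_zero, by simp⟩
    | insert a s ha ih =>
      obtain ⟨p, hp, q, hq, h⟩ := ih
      rw [Finset.sum_insert ha, h]
      rcases le_total 0 (x.coeff a) with hc | hc
      · exact ⟨_, Rpos_add (Rpos_smul hc (Rpos_X a)) hp, q, hq, by abel⟩
      · refine ⟨p, hp, _, Rpos_add (Rpos_smul (neg_nonneg.2 hc) (Rpos_X a)) hq, ?_⟩
        rw [neg_smul]; abel
  obtain ⟨p, hp, q, hq, h⟩ := h1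
  exact ⟨1 + p, Rpos_add Rpos_one hp, 1 + q, Rpos_add Rpos_one hq,
    Rpos_add_ne Rpos_one hp one_ne_zero, by rw [h]; abel⟩

end CMM

namespace CMM
open CS
variable {d : ℕ}

lemma B_frac {e : RR d} {he : e ∈ CC d} {L : KK d →ₗ[ℝ] ℝ} (hL : (cs e he).IsState L) {r s : RR d}
    (hr : r ∈ Rpos d) (hs : s ∈ Rpos d) (h0 : s ≠ 0) (h : s - r ∈ Rpos d) : emb r / emb s ∈ B hL :=
  B_of_T hL (TK_frac hr hs h0) (TK_frac' h hs h0)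

lemma Rpos_pow_sub {f g : RR d} (hf : f ∈ Rpos d) (hg : g ∈ Rpos d) (h : g - f ∈ Rpos d) (n : ℕ) :
    g ^ n - f ^ n ∈ Rpos d := by
  induction n with
  | zero => simpa using Rpos_zero
  | succ n ih =>
    have : g ^ (n + 1) - f ^ (n + 1) = g ^ n * (g - f) + (g ^ n - f ^ n) * f := by ring
    rw [this]
    exact Rpos_add (Rpos_mul (Rpos_pow hg n) h) (Rpos_mul ih hf)

lemma CK_div {c s : RR d} (hc : c ∈ CC d) (hs : s ∈ Rpos d) (h0 : s ≠ 0) : emb c / emb s ∈ CK d :=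
  ⟨c, hc, s, hs, h0, by rw [div_mul_cancel₀]; exact emb_ne h0⟩

lemma e_memCC {f g : RR d} (hf : f ∈ Rpos d) (hg : g ∈ Rpos d) (nf : Norm1 f) (ng : Norm1 g) : f + g - 2 ∈ CC d := by
  have := CC_add (CC_norm hf nf) (CC_norm hg ng)
  convert this using 1
  ring

lemma geo_ne {f : RR d} (hf : f ∈ Rpos d) {n : ℕ} (hn : 1 ≤ n) :
    (∑ i ∈ Finset.range n, f ^ i) ∈ Rpos d ∧ (∑ i ∈ Finset.range n, f ^ i) - 1 ∈ Rpos d ∧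
      (∑ i ∈ Finset.range n, f ^ i) ≠ 0 := by
  obtain ⟨m, rfl⟩ : ∃ m, n = m + 1 := ⟨n - 1, by omega⟩
  have h1 : (∑ i ∈ Finset.range (m + 1), f ^ i) = 1 + ∑ i ∈ Finset.range m, f ^ (i + 1) := by
    rw [Finset.sum_range_succ']; simp [add_comm]
  have h2 : ∑ i ∈ Finset.range m, f ^ (i + 1) ∈ Rpos d := Rpos_sum fun i _ => Rpos_pow hf _
  rw [h1]
  exact ⟨Rpos_add Rpos_one h2, by simpa using h2, Rpos_add_ne Rpos_one h2 one_ne_zero⟩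

lemma caseII_zero {f g : RR d} (hf : f ∈ Rpos d) (hg : g ∈ Rpos d) (nf : Norm1 f) (ng : Norm1 g)
    (he : f + g - 2 ∈ CC d) {L : KK d →ₗ[ℝ] ℝ} (hL : (cs (f + g - 2) he).IsState L) (u : Fin d → ℝ)
    (hu : chi hL (1 / emb (1 + X u)) = 0) (a : Fin d → ℝ) (ha : f + g + 1 - X a ∈ Rpos d)
    (hT : TropR f a) : chi hL (emb (X a) / emb (f + g + 1)) = 0 := by
  obtain ⟨t, ht, y, hy, κ, hκ, h1, h2⟩ := hT u
  set σ := f + g + 1 with hσ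
  have σp : σ ∈ Rpos d := Rpos_add (Rpos_add hf hg) Rpos_one
  have σ0 : σ ≠ 0 := by
    rw [hσ, add_comm]; exact Rpos_add_ne Rpos_one (Rpos_add hf hg) one_ne_zero
  have σf : σ - f ∈ Rpos d := by
    convert Rpos_add hg (Rpos_one) using 1; rw [hσ]; ring
  have σ1 : σ - 1 ∈ Rpos d := by
    convert Rpos_add hf hg using 1; rw [hσ]; ring
  obtain ⟨sp, sp1, s0⟩ := geo_ne hf ht
  set s := ∑ i ∈ Finset.range t, f ^ i with hs
  set x := y - X (t • a + u) with hx
  have h3 : f ^ t - κ • x - 1 ∈ CC d := by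
    apply CC_norm
    · have : f ^ t - κ • x = (f ^ t - κ • y) + κ • X (t • a + u) := by
        rw [hx, smul_sub]; abel
      rw [this]
      exact Rpos_add h1 (Rpos_smul hκ.le (Rpos_X _))
    · intro l
      simp [nf l, CC_ev h2 l]
  have h4 : s * (f - 1) = f ^ t - 1 := geom_sum_mul f t
  have h5 : s * (f + g - 2) - κ • x ∈ CC d := by
    convert CC_add h3 (CC_mul sp (CC_norm hg ng)) using 1
    have : s * (f + g - 2) = s * (f - 1) + s * (g - 1) := by ring
    rw [this, h4]; ring
  have es := emb_ne s0
  have eσ := emb_ne σ0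
  have hξ : emb (κ • x) / emb s ∈ (cs (f + g - 2) he).E := by
    apply CS.mem_E_of_le _ 1 (CK_div (CC_smul hκ.le h2) sp s0)
    have h6 := CK_div h5 sp s0
    have h7 : (1 : ℝ) • emb (f + g - 2) - emb (κ • x) / emb s = emb (s * (f + g - 2) - κ • x) / emb s := by
      rw [map_sub emb (s * _), map_mul, sub_div, mul_comm, mul_div_assoc, div_self es, one_smul, mul_one]
    rw [← h7] at h6
    exact h6
  have u0 : (1 + X u : RR d) ≠ 0 := Rpos_add_ne Rpos_one (Rpos_X u) one_ne_zero
  have up : (1 + X u : RR d) ∈ Rpos d := Rpos_add Rpos_one (Rpos_X u)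
  have eu := emb_ne u0
  have Bu : 1 / emb (1 + X u) ∈ B hL := by
    have := B_frac hL Rpos_one up u0 (by simpa using Rpos_X u)
    simpa using this
  have Bu' : emb (X u) / emb (1 + X u) ∈ B hL :=
    B_frac hL (Rpos_X u) up u0 (by simpa using Rpos_one)
  have B1 : emb 1 / emb σ ∈ B hL := B_frac hL Rpos_one σp σ0 σ1
  have Bf : emb f / emb σ ∈ B hL := B_frac hL hf σp σ0 σf
  have Be : emb (f + g - 2) / emb σ ∈ B hL := by
    have : emb (f + g - 2) / emb σ = 1 - (3 : ℝ) • (emb 1 / emb σ) := by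
      have : (f + g - 2 : RR d) = σ - (3 : ℝ) • 1 := by
        rw [hσ, ← sub_eq_zero]
        have : ((3 : ℝ) • 1 : RR d) = 3 := by
          rw [Algebra.smul_def, mul_one]; exact map_ofNat _ 3
        rw [this]; ring
      rw [this, map_sub, sub_div, div_self eσ, emb_smul, smul_div_assoc]
    rw [this]
    exact sub_mem (one_mem _) (Subalgebra.smul_mem _ B1 _)
  have Bs : emb s / emb σ ^ (t - 1) ∈ B hL := by
    have : emb s / emb σ ^ (t - 1) = ∑ i ∈ Finset.range t, (emb f / emb σ) ^ i * (emb 1 / emb σ) ^ (t - 1 - i) := by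
      rw [hs, map_sum, Finset.sum_div]
      refine Finset.sum_congr rfl fun i hi => ?_
      have hi : i ≤ t - 1 := by have := Finset.mem_range.1 hi; omega
      rw [div_pow, div_pow, map_one, one_pow, div_mul_div_comm, ← pow_add, Nat.add_sub_cancel' hi, mul_one, map_pow]
    rw [this]
    exact sum_mem fun i _ => MulMemClass.mul_mem (pow_mem Bf _) (pow_mem B1 _)
  have hew : (cs (f + g - 2) he).e * (emb s / (emb σ ^ t * emb (1 + X u))) =
      (emb (f + g - 2) / emb σ) * (emb s / emb σ ^ (t - 1)) * (1 / emb (1 + X u)) := by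
    obtain ⟨m, rfl⟩ : ∃ m, t = m + 1 := ⟨t - 1, by omega⟩
    change emb (f + g - 2) * _ = _
    simp only [Nat.add_sub_cancel]
    rw [pow_succ]; field_simp
  have hkey := chi_key hL (w := emb s / (emb σ ^ t * emb (1 + X u))) (by
    rw [hew]; exact MulMemClass.mul_mem (MulMemClass.mul_mem Be Bs) Bu) hξ
  rw [hew, chi_mul hL (MulMemClass.mul_mem Be Bs) Bu, hu, mul_zero, zero_mul] at hkey
  have Ba : emb (X a) / emb σ ∈ B hL := B_frac hL (Rpos_X a) σp σ0 ha
  have By : emb (κ • y) / emb (σ ^ t) ∈ B hL := by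
    refine B_frac hL (Rpos_smul hκ.le hy) (Rpos_pow σp t) (pow_ne_zero _ σ0) ?_
    have := Rpos_add (Rpos_pow_sub hf σp σf t) h1
    convert this using 1; abel
  have hw : emb s / (emb σ ^ t * emb (1 + X u)) * (emb (κ • x) / emb s) =
     (emb (κ • y) / emb (σ ^ t)) * (1 / emb (1 + X u)) -
      κ • ((emb (X a) / emb σ) ^ t * (emb (X u) / emb (1 + X u))) := by
    rw [hx, smul_sub, map_sub, X_add, X_nsmul, emb_smul κ (X a ^ t * X u), map_mul, map_pow, map_pow, div_pow]
    simp only [Algebra.smul_def]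
    field_simp
  rw [hw, chi_sub, chi_smul, chi_mul hL By Bu, hu, chi_mul hL (pow_mem Ba t) Bu', chi_pow hL Ba] at hkey
  have hu1 : chi hL (emb (X u) / emb (1 + X u)) = 1 := by
    have : emb (X u) / emb (1 + X u) = 1 - 1 / emb (1 + X u) := by
      rw [eq_sub_iff_add_eq, ← add_div, ← map_one emb, ← map_add, add_comm, map_one, div_self eu]
    rw [this, chi_sub, hu, chi_one]; ring
  rw [hu1] at hkey
  have : κ * chi hL (emb (X a) / emb σ) ^ t = 0 := by linarith
  rcases mul_eq_zero.1 this with h | h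
  · exact absurd h hκ.ne'
  · exact pow_eq_zero_iff (by omega) |>.1 h

lemma caseII {f g : RR d} (hf : f ∈ Rpos d) (hg : g ∈ Rpos d) (nf : Norm1 f) (ng : Norm1 g)
    {κ : Type*} [Fintype κ] (w : κ → Fin d → ℝ) (hgw : g = ∑ j, X (w j))
    (he : f + g - 2 ∈ CC d) {L : KK d →ₗ[ℝ] ℝ} (hL : (cs (f + g - 2) he).IsState L) (u : Fin d → ℝ)
    (hu : chi hL (1 / emb (1 + X u)) = 0) (hT0 : TropR f 0) (hT : ∀ j, TropR f (w j))
    (hyE : emb (f - g) ∈ (cs (f + g - 2) he).E) : 0 < L (emb (f - g)) := by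
  set σ := f + g + 1 with hσ
  have σp : σ ∈ Rpos d := Rpos_add (Rpos_add hf hg) Rpos_one
  have σ0 : σ ≠ 0 := by
    rw [hσ, add_comm]; exact Rpos_add_ne Rpos_one (Rpos_add hf hg) one_ne_zero
  have σ1 : σ - 1 ∈ Rpos d := by
    convert Rpos_add hf hg using 1; rw [hσ]; ring
  have eσ := emb_ne σ0
  have z1 : chi hL (1 / emb σ) = 0 := by
    have := caseII_zero hf hg nf ng he hL u hu 0 (by rw [X_zero]; exact σ1) hT0
    rwa [X_zero, map_one] at this
  have zg : chi hL (emb g / emb σ) = 0 := by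
    have hgs : emb g / emb σ = ∑ j, emb (X (w j)) / emb σ := by
      rw [← Finset.sum_div, ← map_sum, ← hgw]
    rw [hgs, chi_sum]
    refine Finset.sum_eq_zero fun j _ => caseII_zero hf hg nf ng he hL u hu (w j) ?_ (hT j)
    classical
    have : g - X (w j) ∈ Rpos d := by
      rw [hgw, ← Finset.add_sum_erase _ _ (Finset.mem_univ j), add_sub_cancel_left]
      exact Rpos_sum fun i _ => Rpos_X _
    convert Rpos_add (Rpos_add hf Rpos_one) this using 1
    ring
  have Be' : emb (f + g - 2) * (1 / emb σ) = 1 - (3 : ℝ) • (1 / emb σ) := by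
    have : (f + g - 2 : RR d) = σ - (3 : ℝ) • 1 := by
      rw [hσ, ← sub_eq_zero]
      have : ((3 : ℝ) • 1 : RR d) = 3 := by
        rw [Algebra.smul_def, mul_one]; exact map_ofNat _ 3
      rw [this]; ring
    rw [this, map_sub, sub_mul, mul_one_div_cancel eσ, emb_smul, map_one, smul_mul_assoc, one_mul]
  have B1 : 1 / emb σ ∈ B hL := by
    have := B_frac hL Rpos_one σp σ0 σ1
    rwa [map_one] at this
  have hkey := chi_key hL (w := 1 / emb σ) (by
    change emb (f + g - 2) * (1 / emb σ) ∈ B hL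
    rw [Be']
    exact sub_mem (one_mem _) (Subalgebra.smul_mem _ B1 _)) hyE
  change _ = chi hL (emb (f + g - 2) * (1 / emb σ)) * _ at hkey
  rw [Be', chi_sub, chi_smul, chi_one, z1] at hkey
  have : 1 / emb σ * emb (f - g) = 1 - (2 : ℝ) • (emb g / emb σ) - 1 / emb σ := by
    have : f - g = σ - (2 : ℝ) • g - 1 := by
      rw [hσ, two_smul]; ring
    rw [this, map_sub, map_sub, emb_smul, mul_sub, mul_sub, one_div_mul_cancel eσ, map_one, mul_smul_comm]
    ring_nf
  rw [this, chi_sub, chi_sub, chi_smul, chi_one, zg, z1] at hkey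
  linarith

end CMM

namespace CMM
open CS
variable {d : ℕ}

/-- The ideal of elements with vanishing evaluations, as a subspace. -/
def II (d : ℕ) : Submodule ℝ (RR d) := ⨅ l, LinearMap.ker (ev l).toLinearMap

lemma mem_II {x : RR d} : x ∈ II d ↔ ∀ l, ev l x = 0 := by
  simp [II]

lemma caseI {f g : RR d} (hf : f ∈ Rpos d) (hg : g ∈ Rpos d) (nf : Norm1 f) (ng : Norm1 g)
    (hPU : PU f) (he : f + g - 2 ∈ CC d) {L : KK d →ₗ[ℝ] ℝ} (hL : (cs (f + g - 2) he).IsState L)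
    (hu : ∀ u, chi hL (1 / emb (1 + X u)) ≠ 0)
    (hyE : emb (f - g) ∈ (cs (f + g - 2) he).E) :
    ∃ F Φ, Pt (f + g - 2) F Φ ∧ Φ (f - g) = L (emb (f - g)) := by
  have D1 : Den hL 1 := ⟨one_mem _, by
    have := TK_of_Rpos (d := d) Rpos_one
    rwa [map_one] at this, by rw [chi_one]; exact one_ne_zero⟩
  have hVc : ∀ c : ℝ, V hL (algebraMap ℝ (KK d) c) ∧ Fh hL (algebraMap ℝ (KK d) c) = c := by
    intro c
    have h1 : 1 * algebraMap ℝ (KK d) c ∈ B hL := by rw [one_mul]; exact Subalgebra.algebraMap_mem _ _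
    refine ⟨⟨1, D1, h1⟩, ?_⟩
    rw [Fh_eq hL D1 h1, chi_one, one_mul, div_one, Algebra.algebraMap_eq_smul_one, chi_smul, chi_one, mul_one]
  have hVX : ∀ v, V hL (emb (X v)) := by
    intro v
    have u0 : (1 + X v : RR d) ≠ 0 := Rpos_add_ne Rpos_one (Rpos_X v) one_ne_zero
    have up : (1 + X v : RR d) ∈ Rpos d := Rpos_add Rpos_one (Rpos_X v)
    have Bu := B_frac hL Rpos_one up u0 (by simpa using Rpos_X v)
    have Tu := TK_frac Rpos_one up u0
    rw [map_one] at Bu Tu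
    refine ⟨1 / emb (1 + X v), ⟨Bu, Tu, hu v⟩, ?_⟩
    rw [one_div, mul_comm, ← div_eq_mul_inv]
    exact B_frac hL (Rpos_X v) up u0 (by simpa using Rpos_one)
  have hV : ∀ r : RR d, V hL (emb r) := by
    intro r
    rw [eq_sum r, map_sum]
    induction r.coeff.support using Finset.induction_on with
    | empty => 
      rw [Finset.sum_empty]
      have := (hVc 0).1
      rwa [map_zero] at this
    | insert a s ha ih =>
      rw [Finset.sum_insert ha]
      refine (V_add hL ?_ ih).1
      rw [emb_smul, Algebra.smul_def]
      exact (V_mul hL (hVc _).1 (hVX a)).1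
  let F : RR d →ₐ[ℝ] ℝ :=
    { toFun := fun r => Fh hL (emb r)
      map_one' := by
        have := (hVc 1).2
        rwa [map_one] at this ⊢
      map_zero' := by
        have := (hVc 0).2
        rwa [map_zero] at this ⊢
      map_add' := fun x y => by rw [map_add]; exact (V_add hL (hV x) (hV y)).2
      map_mul' := fun x y => by rw [map_mul]; exact (V_mul hL (hV x) (hV y)).2
      commutes' := fun c => by
        have := (hVc c).2
        rwa [IsScalarTower.algebraMap_apply ℝ (RR d) (KK d)] at this }
  have hF : ∀ r, F r = Fh hL (emb r) := fun r => rfl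
  have hW1 : ∀ p : RR d, p ∈ Rpos d → Norm1 p → W hL (emb (p - 1)) := by
    intro p hp np
    obtain ⟨n, hn⟩ := hPU p hp np
    have hn := hn (n + 1) (by omega)
    obtain ⟨sp, sp1, s0⟩ := geo_ne hf (n := n + 1) (by omega)
    set s := ∑ i ∈ Finset.range (n + 1), f ^ i with hs
    have es := emb_ne s0
    have B1 := B_frac hL Rpos_one sp s0 sp1
    have T1 := TK_frac Rpos_one sp s0
    rw [map_one] at B1 T1
    have hchi : chi hL (1 / emb s) ≠ 0 := by
      obtain ⟨b, hb, hbs⟩ := hV s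
      intro h0
      apply hb.2.2
      have : b = (b * emb s) * (1 / emb s) := by field_simp
      rw [this, chi_mul hL hbs B1, h0, mul_zero]
    refine ⟨1 / emb s, ⟨B1, T1, hchi⟩, ?_⟩
    have h4 : s * (f - 1) = f ^ (n + 1) - 1 := geom_sum_mul f (n + 1)
    have h5 : s * (f + g - 2) - (p - 1) ∈ CC d := by
      convert CC_add hn (CC_mul sp (CC_norm hg ng)) using 1
      have : s * (f + g - 2) = s * (f - 1) + s * (g - 1) := by ring
      rw [this, h4]; ring
    rw [one_div, mul_comm, ← div_eq_mul_inv]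
    apply CS.mem_E_of_le _ 1 (CK_div (CC_norm hp np) sp s0)
    have h6 := CK_div h5 sp s0
    have h7 : (1 : ℝ) • emb (f + g - 2) - emb (p - 1) / emb s = emb (s * (f + g - 2) - (p - 1)) / emb s := by
      rw [map_sub emb (s * _), map_mul, sub_div, mul_comm, mul_div_assoc, div_self es, one_smul, mul_one]
    rw [← h7] at h6
    exact h6
  have hW2 : ∀ (p : RR d) (w : Fin d → ℝ), p ∈ Rpos d → (∀ l, ev l p = Real.exp (w l)) → W hL (emb (p - X w)) := by
    intro p w hp hw
    have h1 := hW1 (X (-w) * p) (Rpos_mul (Rpos_X _) hp) (fun l => by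
      rw [map_mul, ev_X, hw, ← Real.exp_add]; simp)
    have h2 : emb (p - X w) = emb (X w) * emb (X (-w) * p - 1) := by
      rw [← map_mul, mul_sub, ← mul_assoc, X_mul_neg, one_mul, mul_one]
    rw [h2]
    exact (W_mul hL (hV _) h1).1
  have hW : ∀ x ∈ II d, W hL (emb x) := by
    intro x hx
    rw [mem_II] at hx
    obtain ⟨p, hp, q, hq, p0, rfl⟩ := exists_diff x
    have e1 : ∀ l, ev l p = Real.exp (Real.log (ev l p)) := fun l => (Real.exp_log (ev_pos hp p0 l)).symm
    have e2 : ∀ l, ev l q = Real.exp (Real.log (ev l p)) := fun l => by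
      rw [← e1]; have := hx l; rw [map_sub] at this; linarith
    have w1 := hW2 p _ hp e1
    have w2 := hW2 q _ hq e2
    have w3 := (W_mul hL (hVc (-1)).1 w2).1
    have := (W_add hL w1 w3).1
    convert this using 1
    simp only [map_sub, map_neg, map_one]; ring
  let Φ0 : II d →ₗ[ℝ] ℝ :=
    { toFun := fun x => Lh hL (emb (x : RR d))
      map_add' := fun x y => by
        rw [Submodule.coe_add, map_add]; exact (W_add hL (hW _ x.2) (hW _ y.2)).2
      map_smul' := fun c x => by
        rw [Submodule.coe_smul, emb_smul, Algebra.smul_def, (W_mul hL (hVc c).1 (hW _ x.2)).2, (hVc c).2]; rfl }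
  obtain ⟨Φ, hΦ⟩ := LinearMap.exists_extend Φ0
  have hΦ' : ∀ x ∈ II d, Φ x = Lh hL (emb x) := fun x hx => LinearMap.congr_fun hΦ ⟨x, hx⟩
  have hE : ∀ x ∈ II d, emb x ∈ (cs (f + g - 2) he).E → Φ x = L (emb x) := by
    intro x hx hxE
    rw [hΦ' x hx, Lh_eq hL D1 (by rwa [one_mul]), chi_one, one_mul, div_one]
  refine ⟨F, Φ, ⟨?_, ?_, ?_, ?_⟩, ?_⟩
  · intro v
    have hnn : ∀ v, 0 ≤ F (X v) := by
      intro v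
      obtain ⟨b, hb, h1⟩ := hVX v
      rw [hF, Fh_eq hL hb h1]
      exact div_nonneg (chi_nonneg hL h1 ((cs (f + g - 2) he).T_mul hb.2.1 (TK_of_Rpos (Rpos_X v)))) (chi_nonneg hL hb.1 hb.2.1)
    refine lt_of_le_of_ne (hnn v) fun h0 => ?_
    have h1 : F (X v) * F (X (-v)) = 1 := by rw [← map_mul, X_mul_neg, map_one]
    rw [← h0] at h1; simp at h1
  · intro x hx
    have hxI : x ∈ II d := mem_II.2 (CC_ev hx)
    rw [hΦ' x hxI]
    exact W_nonneg hL (hW x hxI) (CK_of_CC hx)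
  · intro r x hx
    have hxI : x ∈ II d := mem_II.2 hx
    have hrx : r * x ∈ II d := mem_II.2 fun l => by rw [map_mul, hx l, mul_zero]
    rw [hΦ' _ hrx, hΦ' _ hxI, hF, map_mul]
    exact (W_mul hL (hV r) (hW x hxI)).2
  · rw [hE _ (mem_II.2 (CC_ev he)) (CS.e_mem_E _)]; exact hL.map_e
  · refine hE _ (mem_II.2 fun l => ?_) hyE
    rw [map_sub, nf l, ng l, sub_self]

theorem thmB {f g : RR d} (hf : f ∈ Rpos d) (hg : g ∈ Rpos d) (nf : Norm1 f) (ng : Norm1 g)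
    {κ : Type*} [Fintype κ] (w : κ → Fin d → ℝ) (hgw : g = ∑ j, X (w j))
    (hPU : PU f) (hT0 : TropR f 0) (hT : ∀ j, TropR f (w j))
    (hI : ∀ F Φ, Pt (f + g - 2) F Φ → 0 < Φ (f - g)) :
    ∃ η : ℝ, 0 < η ∧ ∃ h ∈ Rpos d, h ≠ 0 ∧ h * (f - g - η • (f + g - 2)) ∈ CC d := by
  have he := e_memCC hf hg nf ng
  have hyE : emb (f - g) ∈ (cs (f + g - 2) he).E := by
    refine ⟨1, zero_le_one, ?_, ?_⟩
    · have := CK_of_CC (CC_smul (r := 2) (by norm_num) (CC_norm hg ng))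
      have h2 : (1 : ℝ) • emb (f + g - 2) - emb (f - g) = emb ((2 : ℝ) • (g - 1)) := by
        rw [one_smul, ← map_sub]; congr 1; rw [two_smul]; ring
      rw [← h2] at this; exact this
    · have := CK_of_CC (CC_smul (r := 2) (by norm_num) (CC_norm hf nf))
      have h2 : (1 : ℝ) • emb (f + g - 2) + emb (f - g) = emb ((2 : ℝ) • (f - 1)) := by
        rw [one_smul, ← map_add]; congr 1; rw [two_smul]; ring
      rw [← h2] at this; exact this
  obtain ⟨η, hη, h⟩ := (cs (f + g - 2) he).exists_gap hyE (by
    intro L hL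
    by_cases hu : ∃ u, chi hL (1 / emb (1 + X u)) = 0
    · obtain ⟨u, hu⟩ := hu
      exact caseII hf hg nf ng w hgw he hL u hu hT0 hT hyE
    · push Not at hu
      obtain ⟨F, Φ, hP, h1⟩ := caseI hf hg nf ng hPU he hL hu hyE
      rw [← h1]; exact hI F Φ hP)
  refine ⟨η, hη, ?_⟩
  have h2 : emb (f - g - η • (f + g - 2)) ∈ CK d := by
    rw [map_sub, emb_smul]; exact h
  exact CC_of_CK h2

end CMM

namespace CMM
open Filter Topology
variable {d : ℕ}

lemma matrix_lemma (A : ℕ → Matrix (Fin d) (Fin d) ℝ) (hA : Tendsto A atTop (𝓝 1)) (b : Fin d → ℝ)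
    (hb : ∀ i, 0 < b i) : ∀ᶠ t in atTop, (A t).det ≠ 0 ∧ ∃ x : Fin d → ℝ, (∀ i, 0 ≤ x i) ∧ (A t).mulVec x = b := by
  have h1 : Tendsto (fun t => (A t).det) atTop (𝓝 1) := by
    have : Continuous fun M : Matrix (Fin d) (Fin d) ℝ => M.det := continuous_id.matrix_det
    simpa [Function.comp_def] using (this.tendsto 1).comp hA
  have h2 : Tendsto (fun t => (A t).adjugate) atTop (𝓝 1) := by
    have : Continuous fun M : Matrix (Fin d) (Fin d) ℝ => M.adjugate := continuous_id.matrix_adjugate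
    simpa [Function.comp_def] using (this.tendsto 1).comp hA
  have h3 : Tendsto (fun t => ((A t).det)⁻¹ • ((A t).adjugate).mulVec b) atTop (𝓝 b) := by
    have h4 : Tendsto (fun t => ((A t).adjugate).mulVec b) atTop (𝓝 b) := by
      have : Continuous fun M : Matrix (Fin d) (Fin d) ℝ => M.mulVec b :=
        Continuous.matrix_mulVec continuous_id continuous_const
      simpa [Function.comp_def] using (this.tendsto 1).comp h2
    have := (h1.inv₀ one_ne_zero).smul h4
    simpa using this
  have h4 : ∀ᶠ t in atTop, ∀ i, 0 < (((A t).det)⁻¹ • ((A t).adjugate).mulVec b) i := by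
    rw [eventually_all]
    intro i
    exact ((tendsto_pi_nhds.1 h3) i).eventually (lt_mem_nhds (hb i))
  have h5 : ∀ᶠ t in atTop, (A t).det ≠ 0 := h1.eventually_ne one_ne_zero
  filter_upwards [h4, h5] with t h6 h7
  refine ⟨h7, _, fun i => (h6 i).le, ?_⟩
  rw [Matrix.mulVec_smul, Matrix.mulVec_mulVec, Matrix.mul_adjugate, Matrix.smul_mulVec, Matrix.one_mulVec,
    smul_smul, inv_mul_cancel₀ h7, one_smul]

lemma Rpos_prod_sub {ι : Type*} (s : Finset ι) (x g : ι → RR d) (hx : ∀ i, x i ∈ Rpos d)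
    (hg : ∀ i, g i ∈ Rpos d) (h : ∀ i, g i - x i ∈ Rpos d) :
    (∏ i ∈ s, g i - ∏ i ∈ s, x i ∈ Rpos d) ∧ ∏ i ∈ s, x i ∈ Rpos d := by
  classical
  induction s using Finset.induction_on with
  | empty => simpa using ⟨Rpos_zero, Rpos_one⟩
  | insert a s ha ih =>
    rw [Finset.prod_insert ha, Finset.prod_insert ha]
    refine ⟨?_, Rpos_mul (hx a) ih.2⟩
    have : g a * ∏ i ∈ s, g i - x a * ∏ i ∈ s, x i =
      g a * (∏ i ∈ s, g i - ∏ i ∈ s, x i) + (g a - x a) * ∏ i ∈ s, x i := by ring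
    rw [this]
    exact Rpos_add (Rpos_mul (hg a) ih.1) (Rpos_mul (h a) ih.2)

/-- Tropical hypothesis, explicit form. -/
def Trop {ι : Type*} [Fintype ι] (v : ι → Fin d → ℝ) (a : Fin d → ℝ) : Prop :=
  ∀ k, ∃ lam : ι → ℝ, (∀ i, 0 ≤ lam i) ∧ ∑ i, lam i = 1 ∧
    ∀ l, l ≠ k → a k - a l < ∑ i, lam i * (v i k - v i l)

/-- Sum of monomials. -/
def mon {ι : Type*} [Fintype ι] (v : ι → Fin d → ℝ) : RR d := ∑ i, X (v i)

lemma mon_pos {ι : Type*} [Fintype ι] (v : ι → Fin d → ℝ) : mon v ∈ Rpos d :=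
  Rpos_sum fun _ _ => Rpos_X _

lemma mon_sub {ι : Type*} [Fintype ι] (v : ι → Fin d → ℝ) (i : ι) : mon v - X (v i) ∈ Rpos d := by
  classical
  rw [mon, ← Finset.add_sum_erase _ _ (Finset.mem_univ i), add_sub_cancel_left]
  exact Rpos_sum fun i _ => Rpos_X _

lemma mon_pow {ι : Type*} [Fintype ι] (v : ι → Fin d → ℝ) (n : ℕ) :
    mon v ^ n = mon fun p : Fin n → ι => ∑ t, v (p t) := by
  classical
  rw [mon, mon, Fintype.sum_pow]
  exact Finset.sum_congr rfl fun p _ => by rw [X_sum]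

lemma exists_counts {ι : Type*} [Fintype ι] (lam : ι → ℝ) (h0 : ∀ i, 0 ≤ lam i) (h1 : ∑ i, lam i = 1) (t : ℕ) :
    ∃ n : ι → ℕ, ∑ i, n i = t ∧ ∀ i, |(n i : ℝ) - t * lam i| ≤ Fintype.card ι := by
  classical
  have hne : Nonempty ι := by
    by_contra h
    rw [not_nonempty_iff] at h
    simp at h1
  obtain ⟨i0⟩ := hne
  set m : ι → ℕ := fun i => ⌊(t : ℝ) * lam i⌋₊ with hm
  have hm1 : ∀ i, (m i : ℝ) ≤ t * lam i := fun i => Nat.floor_le (mul_nonneg (Nat.cast_nonneg _) (h0 i))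
  have hm2 : ∀ i, (t : ℝ) * lam i < m i + 1 := fun i => Nat.lt_floor_add_one _
  have hsum : (∑ i, (m i : ℝ)) ≤ t := by
    calc (∑ i, (m i : ℝ)) ≤ ∑ i, t * lam i := Finset.sum_le_sum fun i _ => hm1 i
      _ = t := by rw [← Finset.mul_sum, h1, mul_one]
  have hsum2 : (t : ℝ) ≤ (∑ i, (m i : ℝ)) + Fintype.card ι := by
    calc (t : ℝ) = ∑ i, t * lam i := by rw [← Finset.mul_sum, h1, mul_one]
      _ ≤ ∑ i, ((m i : ℝ) + 1) := Finset.sum_le_sum fun i _ => (hm2 i).le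
      _ = _ := by simp [Finset.sum_add_distrib]
  have hsN : ∑ i, m i ≤ t := by exact_mod_cast hsum
  have hcard : (1 : ℝ) ≤ Fintype.card ι := by
    have : 0 < Fintype.card ι := Fintype.card_pos_iff.2 ⟨i0⟩
    exact_mod_cast this
  refine ⟨fun i => m i + if i = i0 then t - ∑ i, m i else 0, ?_, ?_⟩
  · rw [Finset.sum_add_distrib]; simp; omega
  · intro i
    have a1 := hm1 i
    have a2 := hm2 i
    by_cases hi : i = i0
    · simp only [hi, if_true]
      rw [hi] at a1 a2
      push_cast [Nat.cast_sub hsN]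
      have hle : (m i0 : ℝ) + (t - ∑ i, (m i : ℝ)) - t * lam i0 ≤ Fintype.card ι := by linarith
      rw [abs_le]; constructor <;> linarith
    · simp only [hi, if_false]
      rw [abs_le]; push_cast; constructor <;> linarith

lemma TropR_of_Trop {ι : Type*} [Fintype ι] (v : ι → Fin d → ℝ) (a : Fin d → ℝ) (h : Trop v a) :
    TropR (mon v) a := by
  classical
  intro u
  choose lam h0 h1 h2 using h
  choose n hn1 hn2 using fun (t : ℕ) (k : Fin d) => exists_counts (lam k) (h0 k) (h1 k) t
  set b : ℕ → Fin d → Fin d → ℝ := fun t k => ∑ i, n t k i • v i with hb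
  set A : ℕ → Matrix (Fin d) (Fin d) ℝ := fun t => Matrix.of fun j k =>
    Real.exp ((b t k j - t * a j) - (b t k k - t * a k)) with hAdef
  have hA : Tendsto A atTop (𝓝 1) := by
    refine tendsto_pi_nhds.2 fun j => tendsto_pi_nhds.2 fun k => ?_
    by_cases hjk : j = k
    · subst hjk
      simp [hAdef]
    · rw [Matrix.one_apply_ne hjk]
      simp only [hAdef, Matrix.of_apply]
      refine Real.tendsto_exp_atBot.comp ?_
      have hδ := h2 k j hjk
      set δ := ∑ i, lam k i * (v i k - v i j) - (a k - a j) with hδd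
      have hδ : 0 < δ := by linarith
      set N := (Fintype.card ι : ℝ) * ∑ i, |v i j - v i k| with hN
      have hbound : ∀ t : ℕ, (b t k j - t * a j) - (b t k k - t * a k) ≤ N - t * δ := by
        intro t
        have e1 : (b t k j - t * a j) - (b t k k - t * a k) =
            ∑ i, ((n t k i : ℝ) - t * lam k i) * (v i j - v i k) - t * δ := by
          have hbe : ∀ q, b t k q = ∑ i, (n t k i : ℝ) * v i q := fun q => by
            simp only [hb, Finset.sum_apply]
            exact Finset.sum_congr rfl fun i _ => nsmul_eq_mul _ _
          simp only [hbe, hδd]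
          have : ∀ i, ((n t k i : ℝ) - t * lam k i) * (v i j - v i k) =
            (n t k i : ℝ) * v i j - n t k i * v i k + t * (lam k i * (v i k - v i j)) := fun i => by ring
          simp only [this, Finset.sum_add_distrib, Finset.sum_sub_distrib, ← Finset.mul_sum]
          ring
        rw [e1]
        refine sub_le_sub_right ?_ _
        rw [hN, Finset.mul_sum]
        refine Finset.sum_le_sum fun i _ => ?_
        refine (le_abs_self _).trans ?_
        rw [abs_mul]
        exact mul_le_mul_of_nonneg_right (hn2 t k i) (abs_nonneg _)
      refine tendsto_atBot_mono hbound ?_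
      have : Tendsto (fun t : ℕ => (t : ℝ) * δ) atTop atTop :=
        tendsto_natCast_atTop_atTop.atTop_mul_const hδ
      exact tendsto_atBot_add_const_left atTop N (tendsto_neg_atTop_atBot.comp this)
  obtain ⟨t, ⟨-, x, hx0, hx⟩, ht⟩ := ((matrix_lemma A hA (ex u) (ex_pos u)).and (eventually_ge_atTop 1)).exists
  refine ⟨t, ht, ∑ k, (x k * Real.exp (-(b t k k - t * a k))) • X (b t k), ?_, ?_⟩
  · exact Rpos_sum fun k _ => Rpos_smul (mul_nonneg (hx0 k) (Real.exp_pos _).le) (Rpos_X _)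
  set c : Fin d → ℝ := fun k => x k * Real.exp (-(b t k k - t * a k)) with hc
  have hc0 : ∀ k, 0 ≤ c k := fun k => mul_nonneg (hx0 k) (Real.exp_pos _).le
  have hs0 : 0 ≤ ∑ k, c k := Finset.sum_nonneg fun k _ => hc0 k
  refine ⟨1 / (1 + ∑ k, c k), by positivity, ?_, ?_⟩
  · set κ := 1 / (1 + ∑ k, c k)
    have hκ : 0 < κ := by positivity
    have hX : ∀ k, mon v ^ t - X (b t k) ∈ Rpos d := by
      intro k
      have e1 : mon v ^ t = ∏ i, mon v ^ (n t k i) := by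
        rw [Finset.prod_pow_eq_pow_sum, hn1]
      have e2 : X (b t k) = ∏ i, X (v i) ^ (n t k i) := by
        simp only [hb, X_sum, X_nsmul]
      rw [e1, e2]
      refine (Rpos_prod_sub _ _ _ (fun i => Rpos_pow (Rpos_X _) _) (fun i => Rpos_pow (mon_pos v) _) fun i => ?_).1
      exact Rpos_pow_sub (Rpos_X _) (mon_pos v) (mon_sub v i) _
    have e3 : mon v ^ t - κ • ∑ k, c k • X (b t k) =
        (1 - κ * ∑ k, c k) • mon v ^ t + ∑ k, (κ * c k) • (mon v ^ t - X (b t k)) := by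
      simp only [smul_sub, Finset.sum_sub_distrib, ← Finset.sum_smul, ← Finset.mul_sum, sub_smul, one_smul, Finset.smul_sum, smul_smul]
      abel
    rw [e3]
    refine Rpos_add (Rpos_smul ?_ (Rpos_pow (mon_pos v) t)) (Rpos_sum fun k _ => Rpos_smul (mul_nonneg hκ.le (hc0 k)) (hX k))
    rw [sub_nonneg, div_mul_eq_mul_div, one_mul]
    rw [div_le_one (by positivity)]; linarith
  · refine CC_jensen (Rpos_sum fun k _ => Rpos_smul (hc0 k) (Rpos_X _)) _ fun l => ?_
    simp only [map_sum, map_smul, ev_X, smul_eq_mul, Pi.add_apply, Pi.smul_apply, nsmul_eq_mul]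
    have := congrFun hx l
    simp only [Matrix.mulVec, dotProduct, hAdef, Matrix.of_apply, ex] at this
    rw [Real.exp_add, ← this, Finset.mul_sum]
    refine Finset.sum_congr rfl fun k _ => ?_
    simp only [hc]
    have e5 : ((t : Fin d → ℝ) * a) l = t * a l := rfl
    rw [e5, mul_assoc, ← Real.exp_add, ← mul_assoc, ← Real.exp_add, mul_comm (x k)]
    congr 2; ring

end CMM

namespace CMM
open Filter Topology
variable {d : ℕ}

lemma amgm (x y : ℝ) : Real.exp ((x + y) / 2) ≤ (Real.exp x + Real.exp y) / 2 := by
  have e1 : Real.exp x = Real.exp (x/2) ^ 2 := by rw [← Real.exp_nat_mul]; congr 1; push_cast; ring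
  have e2 : Real.exp y = Real.exp (y/2) ^ 2 := by rw [← Real.exp_nat_mul]; congr 1; push_cast; ring
  have e3 : Real.exp ((x + y) / 2) = Real.exp (x/2) * Real.exp (y/2) := by rw [← Real.exp_add]; congr 1; ring
  rw [e1, e2, e3]; nlinarith [sq_nonneg (Real.exp (x/2) - Real.exp (y/2))]

lemma amgm_lt {x y : ℝ} (h : x ≠ y) : Real.exp ((x + y) / 2) < (Real.exp x + Real.exp y) / 2 := by
  have e1 : Real.exp x = Real.exp (x/2) ^ 2 := by rw [← Real.exp_nat_mul]; congr 1; push_cast; ring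
  have e2 : Real.exp y = Real.exp (y/2) ^ 2 := by rw [← Real.exp_nat_mul]; congr 1; push_cast; ring
  have e3 : Real.exp ((x + y) / 2) = Real.exp (x/2) * Real.exp (y/2) := by rw [← Real.exp_add]; congr 1; ring
  have : Real.exp (x/2) - Real.exp (y/2) ≠ 0 := by
    rw [sub_ne_zero]; intro h0
    have := Real.exp_injective h0
    exact h (by linarith)
  have := pow_pos (abs_pos.2 this) 2
  rw [sq_abs] at this
  rw [e1, e2, e3]; nlinarith

lemma pair_mon {ι : Type*} [Fintype ι] (φ : (Fin d → ℝ) → ℝ) (v : ι → Fin d → ℝ) :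
    pair φ (mon v) = ∑ i, φ (ex (v i)) := by simp [mon]

lemma PU_of {ι : Type*} [Fintype ι] (v : ι → Fin d → ℝ) (hn : Norm1 (mon v))
    (hv : ∀ k l, k ≠ l → ∃ i, v i k ≠ v i l) : PU (mon v) := by
  classical
  rcases isEmpty_or_nonempty (Fin d) with hd | hd
  · intro h hh hn'
    refine ⟨0, fun m _ => ?_⟩
    have hex : ∀ w : Fin d → ℝ, ex w = 0 := fun w => Subsingleton.elim _ _
    intro φ hφ
    have : pair φ = 0 := lin_ext fun w => by simp [hex, hφ.zero]
    rw [this]; simp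
  intro h hh hn'
  have hs1 : ∀ l, ∑ i, Real.exp (v i l) = 1 := fun l => by simpa [mon] using hn l
  -- the assignment
  have hc : ∀ w : Fin d → ℝ, ∃ c, ∀ l, w l ≤ w c := fun w => Finite.exists_max w
  choose c hc using hc
  set V : (n : ℕ) → (Fin n → ι) → Fin d → ℝ := fun n p => ∑ t, v (p t) with hV
  set M : ℕ → Matrix (Fin d) (Fin d) ℝ := fun n => Matrix.of fun l j =>
    ∑ p : Fin n → ι, if c (V n p) = j then Real.exp (V n p l) else 0 with hM
  have hM0 : ∀ n l j, 0 ≤ M n l j := fun n l j => by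
    simp only [hM, Matrix.of_apply]
    exact Finset.sum_nonneg fun p _ => by split_ifs <;> positivity
  have hrow : ∀ n l, ∑ j, M n l j = 1 := by
    intro n l
    simp only [hM, Matrix.of_apply]
    rw [Finset.sum_comm]
    simp only [Finset.sum_ite_eq, Finset.mem_univ, if_true]
    have := (hn.pow n) l
    rw [mon_pow] at this
    simpa [mon, hV] using this
  have hoff : ∀ l j, l ≠ j → Tendsto (fun n => M n l j) atTop (𝓝 0) := by
    intro l j hlj
    set r := ∑ i, Real.exp ((v i l + v i j) / 2) with hr
    have hr0 : 0 ≤ r := Finset.sum_nonneg fun i _ => (Real.exp_pos _).le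
    have hr1 : r < 1 := by
      obtain ⟨i0, hi0⟩ := hv l j hlj
      calc r < ∑ i, (Real.exp (v i l) + Real.exp (v i j)) / 2 :=
            Finset.sum_lt_sum (fun i _ => amgm _ _) ⟨i0, Finset.mem_univ _, amgm_lt hi0⟩
        _ = 1 := by rw [← Finset.sum_div, Finset.sum_add_distrib, hs1, hs1]; norm_num
    refine squeeze_zero (fun n => hM0 n l j) (fun n => ?_) (tendsto_pow_atTop_nhds_zero_of_lt_one hr0 hr1)
    rw [hr, Fintype.sum_pow]
    simp only [hM, Matrix.of_apply]
    refine Finset.sum_le_sum fun p _ => ?_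
    rw [← Real.exp_sum]
    have e1 : ∑ t, (v (p t) l + v (p t) j) / 2 = (V n p l + V n p j) / 2 := by
      rw [← Finset.sum_div, Finset.sum_add_distrib]; simp [hV]
    rw [e1]
    split_ifs with hcp
    · have := hc (V n p) l
      rw [hcp] at this
      exact Real.exp_le_exp.2 (by linarith)
    · positivity
  have hM1 : Tendsto M atTop (𝓝 1) := by
    refine tendsto_pi_nhds.2 fun l => tendsto_pi_nhds.2 fun j => ?_
    by_cases hlj : l = j
    · subst hlj
      rw [Matrix.one_apply_eq]
      have e : ∀ n, M n l l = 1 - ∑ j ∈ Finset.univ.erase l, M n l j := fun n => by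
        rw [← hrow n l, ← Finset.add_sum_erase _ _ (Finset.mem_univ l)]; ring
      simp only [e]
      have : Tendsto (fun n => ∑ j ∈ Finset.univ.erase l, M n l j) atTop (𝓝 (∑ j ∈ Finset.univ.erase l, (0:ℝ))) :=
        tendsto_finsetSum _ fun j hj => hoff l j (Finset.ne_of_mem_erase hj).symm
      simpa using this.const_sub 1
    · rw [Matrix.one_apply_ne hlj]; exact hoff l j hlj
  have hev : ∀ᶠ n in atTop, ∀ w ∈ h.coeff.support, (M n).det ≠ 0 ∧ ∃ x : Fin d → ℝ, (∀ i, 0 ≤ x i) ∧ (M n).mulVec x = ex w := by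
    rw [Filter.eventually_all_finset]
    intro w _
    exact matrix_lemma M hM1 (ex w) (ex_pos w)
  have hdet : ∀ᶠ n in atTop, (M n).det ≠ 0 :=
    (matrix_lemma M hM1 (ex 0) (ex_pos 0)).mono fun n hn => hn.1
  obtain ⟨n0, hn0⟩ := (hev.and hdet).exists_forall_of_atTop
  refine ⟨n0, fun n hnn φ hφ => ?_⟩
  obtain ⟨h1, h2⟩ := hn0 n hnn
  choose! x hx0 hx using fun w hw => (h1 w hw).2
  set y : Fin d → ℝ := ∑ w ∈ h.coeff.support, h.coeff w • x w with hy
  have hMy : (M n).mulVec y = 1 := by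
    rw [hy, Matrix.mulVec_sum]
    funext l
    have := hn' l
    rw [eq_sum h] at this
    simp only [map_sum, map_smul, ev_X, smul_eq_mul] at this
    rw [Finset.sum_apply, Pi.one_apply, ← this]
    refine Finset.sum_congr rfl fun w hw => ?_
    rw [Matrix.mulVec_smul, hx w hw]; simp [ex]
  have hM1' : (M n).mulVec 1 = 1 := by
    funext l
    simp [Matrix.mulVec, dotProduct, hrow]
  have hy1 : y = 1 := by
    have : IsUnit (M n) := by
      rw [Matrix.isUnit_iff_isUnit_det]; exact isUnit_iff_ne_zero.2 h2
    exact Matrix.mulVec_injective_of_isUnit this (hMy.trans hM1'.symm)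
  rw [map_sub, sub_nonneg, mon_pow, pair_mon]
  have hcol : ∀ w ∈ h.coeff.support, ex w = ∑ j, x w j • fun l => M n l j := by
    intro w hw
    rw [← hx w hw]
    funext l
    simp [Matrix.mulVec, dotProduct, mul_comm]
  calc pair φ h = ∑ w ∈ h.coeff.support, h.coeff w * φ (ex w) := by
        conv_lhs => rw [eq_sum h]
        simp
    _ ≤ ∑ w ∈ h.coeff.support, h.coeff w * ∑ j, x w j * φ fun l => M n l j := by
        refine Finset.sum_le_sum fun w hw => mul_le_mul_of_nonneg_left ?_ (hh w)
        rw [hcol w hw]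
        exact hφ.sum _ _ (fun j _ => hx0 w hw j) _
    _ = ∑ j, y j * φ fun l => M n l j := by
        simp only [hy, Finset.sum_apply, Pi.smul_apply, smul_eq_mul, Finset.sum_mul, Finset.mul_sum]
        rw [Finset.sum_comm]
        simp only [mul_assoc]
    _ = ∑ j, φ fun l => M n l j := by simp [hy1]
    _ ≤ ∑ j, ∑ p : Fin n → ι, (if c (V n p) = j then 1 else 0) * φ (ex (V n p)) := by
        refine Finset.sum_le_sum fun j _ => ?_
        have e : (fun l => M n l j) = ∑ p : Fin n → ι, (if c (V n p) = j then (1:ℝ) else 0) • ex (V n p) := by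
          funext l
          simp only [hM, Matrix.of_apply, Finset.sum_apply, Pi.smul_apply, ex, smul_eq_mul, ite_mul, one_mul, zero_mul]
        rw [e]
        exact hφ.sum _ _ (fun p _ => by split_ifs <;> norm_num) _
    _ = ∑ p : Fin n → ι, φ (ex (V n p)) := by
        rw [Finset.sum_comm]
        refine Finset.sum_congr rfl fun p _ => ?_
        rw [← Finset.sum_mul]; simp

lemma PU_pow {f : RR d} (h : PU f) {K : ℕ} (hK : 1 ≤ K) : PU (f ^ K) := by
  intro g hg hn
  obtain ⟨n, hn⟩ := h g hg hn
  refine ⟨n, fun m hm => ?_⟩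
  rw [← pow_mul]
  exact hn _ (hm.trans (Nat.le_mul_of_pos_left m hK))

end CMM

namespace CMM
open Filter Topology
variable {d : ℕ}

lemma blackwell {ι κ : Type*} [Fintype ι] [Fintype κ] [Nonempty κ] (A : ι → Fin d → ℝ) (B : κ → Fin d → ℝ)
    (h : ∀ φ, Sublin φ → ∑ j, φ (B j) ≤ ∑ i, φ (A i)) :
    ∃ T : κ → ι → ℝ, (∀ j i, 0 ≤ T j i) ∧ (∀ i, ∑ j, T j i = 1) ∧ ∀ j k, ∑ i, T j i * A i k = B j k := by
  classical
  set D : Set (ι → κ → ℝ) := Set.pi Set.univ fun _ => stdSimplex ℝ κ with hD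
  set L : (ι → κ → ℝ) →ₗ[ℝ] (κ → Fin d → ℝ) :=
    { toFun := fun T j => ∑ i, T i j • A i
      map_add' := fun S T => by
        funext j; simp [add_smul, Finset.sum_add_distrib]
      map_smul' := fun r T => by
        funext j; simp [mul_smul, Finset.smul_sum] } with hL
  have hLc : Continuous L := LinearMap.continuous_of_finiteDimensional L
  have hDc : IsCompact D := isCompact_univ_pi fun _ => isCompact_stdSimplex ℝ κ
  have hDv : Convex ℝ D := convex_pi fun _ _ => convex_stdSimplex ℝ κ
  have hSc : IsCompact (L '' D) := hDc.image hLc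
  have hSv : Convex ℝ (L '' D) := hDv.linear_image L
  by_cases hB : B ∈ L '' D
  · obtain ⟨T, hT, hTB⟩ := hB
    have hT' : ∀ i, T i ∈ stdSimplex ℝ κ := fun i => hT i (Set.mem_univ i)
    refine ⟨fun j i => T i j, fun j i => (hT' i).1 j, fun i => (hT' i).2, fun j k => ?_⟩
    rw [← hTB]
    simp [hL]
  · exfalso
    obtain ⟨F, u, h1, h2⟩ := geometric_hahn_banach_closed_point hSv hSc.isClosed hB
    set G : κ → (Fin d → ℝ) → ℝ := fun j x => F (Pi.single j x) with hG
    have hGa : ∀ j x y, G j (x + y) = G j x + G j y := fun j x y => by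
      simp only [hG]; rw [Pi.single_add, map_add]
    have hGs : ∀ j (t : ℝ) x, G j (t • x) = t * G j x := fun j t x => by
      simp only [hG]; rw [Pi.single_smul, map_smul]; rfl
    have hmax : ∀ x, ∃ c, ∀ j, G j x ≤ G c x := fun x => Finite.exists_max fun j => G j x
    choose c hc using hmax
    have hFs : ∀ Y : κ → Fin d → ℝ, F Y = ∑ j, G j (Y j) := fun Y => by
      simp only [hG]
      rw [← map_sum, Finset.univ_sum_single]
    have hφ : Sublin fun x => G (c x) x := by
      refine ⟨fun x y => ?_, fun t x ht => ?_⟩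
      · simp only [hGa]
        exact add_le_add (hc _ _) (hc _ _)
      · apply le_antisymm
        · simp only [hGs]
          exact mul_le_mul_of_nonneg_left (hc _ _) ht
        · simp only [← hGs]
          exact hc _ _
    have h3 := h _ hφ
    have h4 : F B ≤ ∑ j, G (c (B j)) (B j) := by
      rw [hFs]; exact Finset.sum_le_sum fun j _ => hc _ _
    have h5 : L (fun i => Pi.single (c (A i)) 1) ∈ L '' D := by
      refine ⟨_, fun i _ => ?_, rfl⟩
      exact single_mem_stdSimplex ℝ (c (A i))
    have h6 : F (L (fun i => Pi.single (c (A i)) 1)) = ∑ i, G (c (A i)) (A i) := by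
      rw [hFs]
      have e0 : ∀ j, G j 0 = 0 := fun j => by simpa using hGs j 0 0
      have e : ∀ j (s : Finset ι) (r : ι → ℝ), G j (∑ i ∈ s, r i • A i) = ∑ i ∈ s, r i * G j (A i) := by
        intro j s r
        induction s using Finset.induction_on with
        | empty => simp [e0]
        | insert a s ha ih => rw [Finset.sum_insert ha, Finset.sum_insert ha, hGa, hGs, ih]
      have : ∀ j, L (fun i => Pi.single (c (A i)) 1) j = ∑ i, (Pi.single (c (A i)) (1:ℝ) : κ → ℝ) j • A i := fun j => rfl
      simp only [this, e]
      rw [Finset.sum_comm]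
      refine Finset.sum_congr rfl fun i _ => ?_
      rw [Finset.sum_eq_single (c (A i))]
      · simp
      · intro j _ hj; rw [Pi.single_eq_of_ne hj]; simp
      · simp
    have := h1 _ h5
    linarith

end CMM

namespace CMM
open Filter Topology
variable {d : ℕ}

lemma large_n (hd : 1 ≤ d) {f g h : RR d} (hf : f ∈ Rpos d) (hg : g ∈ Rpos d) (ng : Norm1 g)
    (hPU : PU f) (hh : h ∈ Rpos d) (h0 : h ≠ 0) (K : ℕ) (hK : h * (f ^ K - g ^ (K + 1)) ∈ CC d) :
    ∃ N, ∀ n, N ≤ n → f ^ n - g ^ n ∈ CC d := by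
  set h' : RR d := X (fun l => -Real.log (ev l h)) * h with hh'
  have hp : h' ∈ Rpos d := Rpos_mul (Rpos_X _) hh
  have hn : Norm1 h' := fun l => by
    rw [hh', map_mul, ev_X, Real.exp_neg, Real.exp_log (ev_pos hh h0 l), inv_mul_cancel₀ (ev_pos hh h0 l).ne']
  have hK' : h' * (f ^ K - g ^ (K + 1)) ∈ CC d := by
    rw [hh', mul_assoc]; exact CC_X_mul _ hK
  have hind : ∀ n : ℕ, h' * ((f ^ K) ^ n - (g ^ (K + 1)) ^ n) ∈ CC d := by
    intro n
    induction n with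
    | zero => simpa using CC_zero
    | succ n ih =>
      have : h' * ((f ^ K) ^ (n + 1) - (g ^ (K + 1)) ^ (n + 1)) =
        f ^ K * (h' * ((f ^ K) ^ n - (g ^ (K + 1)) ^ n)) + (g ^ (K + 1)) ^ n * (h' * (f ^ K - g ^ (K + 1))) := by ring
      rw [this]
      exact CC_add (CC_mul (Rpos_pow hf _) ih) (CC_mul (Rpos_pow (Rpos_pow hg _) _) hK')
  obtain ⟨m0, hm0⟩ := hPU h' hp hn
  refine ⟨(K + 1) * (K + m0), fun N hN => ?_⟩
  set n := N / (K + 1) + 1 with hnd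
  have h1 : (K + 1) * (N / (K + 1)) + N % (K + 1) = N := Nat.div_add_mod N (K + 1)
  have h2 : N % (K + 1) < K + 1 := Nat.mod_lt _ (Nat.succ_pos _)
  have h3 : K + m0 ≤ N / (K + 1) := by
    rw [Nat.le_div_iff_mul_le (Nat.succ_pos _)]; linarith
  have h4 : N ≤ (K + 1) * n := by rw [hnd]; nlinarith
  have h5 : K * n + m0 ≤ N := by
    rw [hnd]; generalize N / (K + 1) = q at *
    have e1 : (K + 1) * q = K * q + q := by ring
    have e2 : K * (q + 1) = K * q + K := by ring
    omega
  have a1 := CC_mul (Rpos_pow hf (K * n)) (hm0 (N - K * n) (by omega))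
  have a2 := hind n
  have a3 := CC_mul (Rpos_pow hg ((K + 1) * n)) (CC_norm hp hn)
  have a4 := CC_mul (Rpos_pow hg N) (CC_norm (Rpos_pow hg ((K + 1) * n - N)) (ng.pow _))
  have := CC_add (CC_add a1 a2) (CC_add a3 a4)
  have e1 : f ^ (K * n) * f ^ (N - K * n) = f ^ N := by rw [← pow_add]; congr 1; omega
  have e2 : g ^ N * g ^ ((K + 1) * n - N) = g ^ ((K + 1) * n) := by rw [← pow_add]; congr 1; omega
  convert this using 1
  rw [mul_sub, mul_sub, mul_sub, mul_sub, e1, e2, ← pow_mul, ← pow_mul]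
  ring

/-- Log vectors. -/
def lv {m : ℕ} (P : Fin d → Fin m → ℝ) : {i // i ∈ suppIdx P} → Fin d → ℝ := fun i k => Real.log (P k i)

lemma lv_pos {m : ℕ} {P : Fin d → Fin m → ℝ} (hP : ∀ k, IsProbVec (P k))
    (hPs : ∀ k l i, P k i ≠ 0 ↔ P l i ≠ 0) (i : {i // i ∈ suppIdx P}) (k) : 0 < P k i := by
  obtain ⟨i, hi⟩ := i
  simp only [suppIdx, Finset.mem_filter, Finset.mem_univ, true_and] at hi
  obtain ⟨l, hl⟩ := hi
  exact lt_of_le_of_ne ((hP k).1 i) ((hPs k l i).2 hl).symm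

lemma lv_not {m : ℕ} {P : Fin d → Fin m → ℝ} {i} (hi : i ∉ suppIdx P) (k) : P k i = 0 := by
  simp only [suppIdx, Finset.mem_filter, Finset.mem_univ, true_and] at hi
  by_contra h
  exact hi ⟨k, h⟩

lemma lv_sum {m : ℕ} {P : Fin d → Fin m → ℝ} (F : Fin m → ℝ) (hF : ∀ i, i ∉ suppIdx P → F i = 0) :
    ∑ i : {i // i ∈ suppIdx P}, F i = ∑ i, F i := by
  refine Fintype.sum_of_injective Subtype.val Subtype.val_injective _ _ (fun i hi => ?_) fun i => rfl
  refine hF i fun h => hi ⟨⟨i, h⟩, rfl⟩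

lemma lv_norm {m : ℕ} {P : Fin d → Fin m → ℝ} (hP : ∀ k, IsProbVec (P k))
    (hPs : ∀ k l i, P k i ≠ 0 ↔ P l i ≠ 0) : Norm1 (mon (lv P)) := fun l => by
  simp only [mon, map_sum, ev_X, lv]
  rw [← (hP l).2, ← lv_sum (P := P) (P l) fun i hi => lv_not hi l]
  exact Finset.sum_congr rfl fun i _ => Real.exp_log (lv_pos hP hPs i l)

lemma pair_pow {m : ℕ} {P : Fin d → Fin m → ℝ} (hP : ∀ k, IsProbVec (P k))
    (hPs : ∀ k l i, P k i ≠ 0 ↔ P l i ≠ 0) (n : ℕ) {φ} (hφ : Sublin φ) :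
    pair φ (mon (lv P) ^ n) = ∑ p : Fin n → Fin m, φ fun k => kpow (P k) n p := by
  rw [mon_pow, pair_mon]
  refine Fintype.sum_of_injective (fun p t => (p t).1) (fun p q h => ?_) _ _ (fun p hp => ?_) fun p => ?_
  · funext t; exact Subtype.ext (congrFun h t)
  · have : ∃ t, p t ∉ suppIdx P := by
      by_contra hc
      push Not at hc
      exact hp ⟨fun t => ⟨p t, hc t⟩, rfl⟩
    obtain ⟨t, ht⟩ := this
    have : (fun k => kpow (P k) n p) = 0 := by
      funext k
      exact Finset.prod_eq_zero (Finset.mem_univ t) (lv_not ht k)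
    rw [this, hφ.zero]
  · congr 1
    funext k
    simp only [ex, kpow, Finset.sum_apply, lv, Real.exp_sum]
    exact Finset.prod_congr rfl fun t _ => Real.exp_log (lv_pos hP hPs _ k)

lemma kpow_nonneg {m : ℕ} {p : Fin m → ℝ} (hp : IsProbVec p) (n f) : 0 ≤ kpow p n f :=
  Finset.prod_nonneg fun _ _ => hp.1 _

lemma kpow_sum {m : ℕ} {p : Fin m → ℝ} (hp : IsProbVec p) (n) : ∑ f, kpow p n f = 1 := by
  have := Fintype.sum_pow p n
  rw [hp.2, one_pow] at this
  exact this.symm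

lemma trick_prob {m m' : ℕ} {p : Fin m → ℝ} {q : Fin m' → ℝ} (hp : IsProbVec p) (hq : IsProbVec q) {n : ℕ}
    (hn : 1 ≤ n) : IsProbVec (trick p q n) := by
  refine ⟨fun x => ?_, ?_⟩
  · exact mul_nonneg (by positivity) (mul_nonneg (kpow_nonneg hp _ _) (kpow_nonneg hq _ _))
  · rw [Fintype.sum_sigma]
    simp only [trick]
    have : ∀ s : Fin n, ∑ y : (Fin (n - 1 - (s : ℕ)) → Fin m) × (Fin (s : ℕ) → Fin m'),
        (1 / (n : ℝ)) * (kpow p (n - 1 - (s : ℕ)) y.1 * kpow q (s : ℕ) y.2) = 1 / n := fun s => by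
      rw [← Finset.mul_sum, Fintype.sum_prod_type]
      simp only [← Finset.mul_sum, kpow_sum hq, mul_one, kpow_sum hp]
    rw [Finset.sum_congr rfl fun s _ => this s]
    have : (n : ℝ) ≠ 0 := by positivity
    simp; field_simp

/-- Mixed power sums. -/
def SS {m m' : ℕ} (P : Fin d → Fin m → ℝ) (Q : Fin d → Fin m' → ℝ) (φ : (Fin d → ℝ) → ℝ) (a b : ℕ) : ℝ :=
  ∑ p : Fin a → Fin m, ∑ q : Fin b → Fin m', φ fun k => kpow (P k) a p * kpow (Q k) b q

lemma SS_left {m m' : ℕ} (P : Fin d → Fin m → ℝ) (Q : Fin d → Fin m' → ℝ) {φ} (hφ : Sublin φ) (a b : ℕ)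
    {c : ℝ} (hc : 0 ≤ c) :
    ∑ i, ∑ y : (Fin a → Fin m) × (Fin b → Fin m'), φ (fun k => P k i * (c * (kpow (P k) a y.1 * kpow (Q k) b y.2)))
      = c * SS P Q φ (a + 1) b := by
  rw [SS, ← (Fin.consEquiv fun _ => Fin m).sum_comp, Fintype.sum_prod_type, Finset.mul_sum]
  refine Finset.sum_congr rfl fun i _ => ?_
  rw [Fintype.sum_prod_type, Finset.mul_sum]
  refine Finset.sum_congr rfl fun p _ => ?_
  rw [Finset.mul_sum]
  refine Finset.sum_congr rfl fun q _ => ?_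
  rw [← hφ.2 c _ hc]
  refine congrArg φ (funext fun k => ?_)
  simp [kpow, Fin.prod_univ_succ, Fin.consEquiv]; ring

lemma SS_right {m m' : ℕ} (P : Fin d → Fin m → ℝ) (Q : Fin d → Fin m' → ℝ) {φ} (hφ : Sublin φ) (a b : ℕ)
    {c : ℝ} (hc : 0 ≤ c) :
    ∑ i, ∑ y : (Fin a → Fin m) × (Fin b → Fin m'), φ (fun k => Q k i * (c * (kpow (P k) a y.1 * kpow (Q k) b y.2)))
      = c * SS P Q φ a (b + 1) := by
  rw [SS, Finset.sum_comm, Finset.mul_sum, Fintype.sum_prod_type]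
  refine Finset.sum_congr rfl fun p _ => ?_
  rw [← (Fin.consEquiv fun _ => Fin m').sum_comp, Fintype.sum_prod_type_right, Finset.mul_sum]
  refine Finset.sum_congr rfl fun q _ => ?_
  rw [Finset.mul_sum]
  refine Finset.sum_congr rfl fun i _ => ?_
  rw [← hφ.2 c _ hc]
  refine congrArg φ (funext fun k => ?_)
  simp [kpow, Fin.prod_univ_succ, Fin.consEquiv]; ring

lemma assemble {m m' : ℕ} (hd : 1 ≤ d) (P : Fin d → Fin m → ℝ) (Q : Fin d → Fin m' → ℝ)
    (hP : ∀ k, IsProbVec (P k)) (hQ : ∀ k, IsProbVec (Q k))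
    (hPs : ∀ k l i, P k i ≠ 0 ↔ P l i ≠ 0)
    (hQs : ∀ k l i, Q k i ≠ 0 ↔ Q l i ≠ 0) (n : ℕ) (hn : 1 ≤ n)
    (h : mon (lv P) ^ n - mon (lv Q) ^ n ∈ CC d) :
    (∀ k, IsProbVec (trick (P k) (Q k) n)) ∧
      ∃ T : (Fin m' × TrickIdx m m' n) → (Fin m × TrickIdx m m' n) → ℝ,
        IsStochastic T ∧
        ∀ k, matVec T (kron (P k) (trick (P k) (Q k) n)) =
          kron (Q k) (trick (P k) (Q k) n) := by
  have ht := fun k => trick_prob (hP k) (hQ k) hn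
  refine ⟨ht, ?_⟩
  have hne : Nonempty (Fin m' × TrickIdx m m' n) := by
    have k : Fin d := ⟨0, hd⟩
    have h1 : Nonempty (Fin m') := by
      by_contra hc
      rw [not_nonempty_iff] at hc
      have := (hQ k).2
      simp at this
    have h2 : Nonempty (TrickIdx m m' n) := by
      by_contra hc
      rw [not_nonempty_iff] at hc
      have := (ht k).2
      simp at this
    infer_instance
  obtain ⟨T, hT0, hT1, hT⟩ := blackwell (fun x k => kron (P k) (trick (P k) (Q k) n) x)
    (fun x k => kron (Q k) (trick (P k) (Q k) n) x) (fun φ hφ => by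
      have hc : (0:ℝ) ≤ 1 / n := by positivity
      have eL : ∑ x, φ (fun k => kron (P k) (trick (P k) (Q k) n) x) =
          ∑ s ∈ Finset.range n, 1 / (n:ℝ) * SS P Q φ (n - s) s := by
        rw [Fintype.sum_prod_type, ← Fin.sum_univ_eq_sum_range]
        simp only [Fintype.sum_sigma]
        rw [Finset.sum_comm]
        refine Finset.sum_congr rfl fun s _ => ?_
        have : n - (s : ℕ) = n - 1 - s + 1 := by have := s.2; omega
        rw [this]
        exact SS_left P Q hφ _ _ hc
      have eR : ∑ x, φ (fun k => kron (Q k) (trick (P k) (Q k) n) x) =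
          ∑ s ∈ Finset.range n, 1 / (n:ℝ) * SS P Q φ (n - (s + 1)) (s + 1) := by
        rw [Fintype.sum_prod_type, ← Fin.sum_univ_eq_sum_range fun s => 1 / (n:ℝ) * SS P Q φ (n - (s + 1)) (s + 1)]
        simp only [Fintype.sum_sigma]
        rw [Finset.sum_comm]
        refine Finset.sum_congr rfl fun s _ => ?_
        have : n - ((s : ℕ) + 1) = n - 1 - s := by have := s.2; omega
        rw [this]
        exact SS_right P Q hφ _ _ hc
      rw [eL, eR, ← sub_nonneg, ← Finset.sum_sub_distrib,
        Finset.sum_range_sub' fun s => 1 / (n:ℝ) * SS P Q φ (n - s) s, ← mul_sub]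
      refine mul_nonneg hc ?_
      have h1 := h φ hφ
      rw [map_sub, pair_pow hP hPs n hφ, pair_pow hQ hQs n hφ] at h1
      rw [show n - n = 0 from Nat.sub_self n, Nat.sub_zero]
      simp only [SS]
      simpa [kpow] using h1)
  exact ⟨T, ⟨hT0, hT1⟩, fun k => funext fun x => hT x k⟩

end CMM

namespace CMM
open Filter Topology
variable {d : ℕ}

lemma cont_of_nonneg (Ψ : RR d →ₗ[ℝ] ℝ) (h : ∀ x ∈ CC d, 0 ≤ Ψ x) : Continuous fun v => Ψ (X v) := by
  set U : Set (Fin d → ℝ) := {A | ∀ i, 0 < A i} with hU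
  have hUo : IsOpen U := by
    have : U = ⋂ i, {A : Fin d → ℝ | 0 < A i} := by ext; simp [hU]
    rw [this]
    exact isOpen_iInter_of_finite fun i => isOpen_lt continuous_const (continuous_apply i)
  set G : (Fin d → ℝ) → ℝ := fun A => Ψ (X fun l => Real.log (A l)) with hG
  have hUc : Convex ℝ U := by
    intro A hA B hB a b ha hb hab i
    simp only [Pi.add_apply, Pi.smul_apply, smul_eq_mul]
    rcases ha.lt_or_eq with h1 | h1
    · exact add_pos_of_pos_of_nonneg (mul_pos h1 (hA i)) (mul_nonneg hb (hB i).le)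
    · have : b = 1 := by linarith
      rw [← h1, this]; simpa using hB i
  have hGc : ConvexOn ℝ U G := by
    refine ⟨hUc, fun A hA B hB a b ha hb hab => ?_⟩
    have hAB := hUc hA hB ha hb hab
    have h1 : a • X (fun l => Real.log (A l)) + b • X (fun l => Real.log (B l)) ∈ Rpos d :=
      Rpos_add (Rpos_smul ha (Rpos_X _)) (Rpos_smul hb (Rpos_X _))
    have h2 := h _ (CC_jensen h1 (fun l => Real.log ((a • A + b • B) l)) fun l => by
      simp only [map_add, map_smul, ev_X, smul_eq_mul]
      rw [Real.exp_log (hA l), Real.exp_log (hB l), Real.exp_log (hAB l)]; simp)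
    simp only [map_sub, map_add, map_smul] at h2
    simp only [hG]
    linarith
  have h3 := hGc.continuousOn hUo
  have h4 : Continuous (fun v : Fin d → ℝ => ex v) := by
    refine continuous_pi fun l => ?_
    exact Real.continuous_exp.comp (continuous_apply l)
  have h5 : Continuous fun v => G (ex v) := h3.comp_continuous h4 fun v l => ex_pos v l
  convert h5 using 2 with v
  simp [hG, ex]

lemma lin_form (δ : (Fin d → ℝ) → ℝ) (hadd : ∀ u w, δ (u + w) = δ u + δ w) (hc : Continuous δ) :
    ∃ γ : Fin d → ℝ, ∀ v, δ v = ∑ k, γ k * v k := by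
  classical
  set L := AddMonoidHom.toRealLinearMap (AddMonoidHom.mk' δ hadd) hc
  refine ⟨fun k => L (Pi.single k 1), fun v => ?_⟩
  have : δ v = L v := rfl
  rw [this]
  conv_lhs => rw [← Finset.univ_sum_single v]
  rw [map_sum]
  refine Finset.sum_congr rfl fun k _ => ?_
  have e : (Pi.single k (v k) : Fin d → ℝ) = v k • Pi.single k 1 := by
    rw [← Pi.single_smul]; simp
  rw [e, map_smul, smul_eq_mul, mul_comm]

lemma Pt_eq {e : RR d} {F : RR d →ₐ[ℝ] ℝ} {Φ : RR d →ₗ[ℝ] ℝ} (hp : Pt e F Φ) (he : ∀ l, ev l e = 0) {x : RR d}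
    (hx : ∀ l, ev l x = 0) : F x = F e * Φ x := by
  have h1 := hp.mul x e he
  have h2 := hp.mul e x hx
  rw [hp.one, mul_one] at h1
  rw [← h1, ← h2, mul_comm]

lemma F_const {e : RR d} {F : RR d →ₐ[ℝ] ℝ} {Φ : RR d →ₗ[ℝ] ℝ} (hp : Pt e F Φ) (he : ∀ l, ev l e = 0) (c : ℝ) :
    F (X fun _ => c) = Real.exp c := by
  have h1 := hp.nonneg _ (CC_const c)
  have h2 := hp.nonneg _ (CC_const' c)
  rw [map_neg] at h2
  have h3 := Pt_eq hp he (CC_ev (CC_const (d := d) c))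
  have h4 : Φ (X (fun _ => c) - Real.exp c • 1) = 0 := by linarith
  rw [h4, mul_zero, map_sub, map_smul, map_one] at h3
  simp only [smul_eq_mul, mul_one] at h3
  linarith

lemma exp_form {e : RR d} {F : RR d →ₐ[ℝ] ℝ} {Φ : RR d →ₗ[ℝ] ℝ} (hp : Pt e F Φ) (he : ∀ l, ev l e = 0)
    (h0 : F e ≠ 0) : ∃ α : Fin d → ℝ, (∀ v, F (X v) = Real.exp (∑ k, α k * v k)) ∧ ∑ k, α k = 1 := by
  have hcont : Continuous fun v => F (X v) := by
    have h1 := cont_of_nonneg ((F e)⁻¹ • F.toLinearMap) fun x hx => by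
      have := Pt_eq hp he (CC_ev hx)
      simp only [LinearMap.smul_apply, AlgHom.toLinearMap_apply, smul_eq_mul, this]
      rw [inv_mul_cancel_left₀ h0]; exact hp.nonneg x hx
    have h2 := h1.const_smul (F e)
    refine h2.congr fun v => ?_
    simp [h0]
  obtain ⟨α, hα⟩ := lin_form (fun v => Real.log (F (X v))) (fun u w => by
    rw [X_add, map_mul, Real.log_mul (hp.pos u).ne' (hp.pos w).ne'])
    (hcont.log fun v => (hp.pos v).ne')
  have h1 : ∀ v, F (X v) = Real.exp (∑ k, α k * v k) := fun v => by rw [← hα, Real.exp_log (hp.pos v)]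
  refine ⟨α, h1, ?_⟩
  have := F_const hp he 1
  rw [h1] at this
  simpa using Real.exp_injective this

lemma notBasis_of {e : RR d} {F : RR d →ₐ[ℝ] ℝ} (he : ∀ l, ev l e = 0) (h0 : F e ≠ 0) {α : Fin d → ℝ}
    (hα : ∀ v, F (X v) = Real.exp (∑ k, α k * v k)) : notBasis α := by
  rintro k rfl
  have : F.toLinearMap = (ev k).toLinearMap := lin_ext fun v => by
    simp [hα, Pi.single_apply]
  have h1 := LinearMap.congr_fun this e
  simp only [AlgHom.toLinearMap_apply] at h1
  exact h0 (h1.trans (he k))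

lemma aminus_of {F : RR d →ₐ[ℝ] ℝ} (hF : ∀ x ∈ CC d, 0 ≤ F x) {α : Fin d → ℝ}
    (hα : ∀ v, F (X v) = Real.exp (∑ k, α k * v k)) (hs : ∑ k, α k = 1) : memAminus α := by
  classical
  have hone : ∀ k l, k ≠ l → 0 < α k → 0 < α l → False := by
    intro k l hkl hk hl
    set t := min (α k) (α l) / 2 with ht
    have ht0 : 0 < t := half_pos (lt_min hk hl)
    have hm1 : min (α k) (α l) ≤ α k := min_le_left _ _
    have hm2 : min (α k) (α l) ≤ α l := min_le_right _ _
    have htk : t / α k < 1 := (div_lt_one hk).2 (by linarith)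
    have htl : t / α l < 1 := (div_lt_one hl).2 (by linarith)
    have hk0 : 0 < t / α k := by positivity
    have hl0 : 0 < t / α l := by positivity
    set w1 : Fin d → ℝ := Pi.single k (Real.log (1 + t / α k)) + Pi.single l (Real.log (1 - t / α l)) with hw1
    set w2 : Fin d → ℝ := Pi.single k (Real.log (1 - t / α k)) + Pi.single l (Real.log (1 + t / α l)) with hw2
    have hr : (1/2 : ℝ) • X w1 + (1/2 : ℝ) • X w2 ∈ Rpos d :=
      Rpos_add (Rpos_smul (by norm_num) (Rpos_X _)) (Rpos_smul (by norm_num) (Rpos_X _))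
    have h1 := hF _ (CC_jensen hr 0 fun j => by
      simp only [map_add, map_smul, ev_X, smul_eq_mul, hw1, hw2, Pi.add_apply, Pi.zero_apply, Real.exp_zero]
      by_cases hjk : j = k
      · subst hjk
        rw [Pi.single_eq_same, Pi.single_eq_same, Pi.single_eq_of_ne hkl, Pi.single_eq_of_ne hkl, add_zero, add_zero,
          Real.exp_log (by linarith), Real.exp_log (by linarith)]
        ring
      · by_cases hjl : j = l
        · subst hjl
          rw [Pi.single_eq_same, Pi.single_eq_same, Pi.single_eq_of_ne hjk, Pi.single_eq_of_ne hjk, zero_add, zero_add,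
            Real.exp_log (by linarith), Real.exp_log (by linarith)]
          ring
        · rw [Pi.single_eq_of_ne hjk, Pi.single_eq_of_ne hjk, Pi.single_eq_of_ne hjl, Pi.single_eq_of_ne hjl]
          norm_num)
    have hsum : ∀ a b : ℝ, ∑ j, α j * ((Pi.single k a + Pi.single l b : Fin d → ℝ) j) = α k * a + α l * b := by
      intro a b
      simp only [Pi.add_apply, mul_add, Finset.sum_add_distrib, Pi.single_apply, mul_ite, mul_zero,
        Finset.sum_ite_eq', Finset.mem_univ, if_true]
    simp only [map_sub, map_add, map_smul, hα, hw1, hw2, hsum, smul_eq_mul] at h1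
    have b1 : Real.log (1 + t / α k) < t / α k := by
      have := Real.log_lt_sub_one_of_pos (x := 1 + t / α k) (by linarith) (by linarith)
      linarith
    have b2 : Real.log (1 - t / α k) < -(t / α k) := by
      have := Real.log_lt_sub_one_of_pos (x := 1 - t / α k) (by linarith) (by linarith)
      linarith
    have b3 : Real.log (1 + t / α l) < t / α l := by
      have := Real.log_lt_sub_one_of_pos (x := 1 + t / α l) (by linarith) (by linarith)
      linarith
    have b4 : Real.log (1 - t / α l) < -(t / α l) := by
      have := Real.log_lt_sub_one_of_pos (x := 1 - t / α l) (by linarith) (by linarith)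
      linarith
    have c1 := mul_lt_mul_of_pos_left b1 hk
    have c2 := mul_lt_mul_of_pos_left b2 hk
    have c3 := mul_lt_mul_of_pos_left b3 hl
    have c4 := mul_lt_mul_of_pos_left b4 hl
    have ek : α k * (t / α k) = t := by field_simp
    have el : α l * (t / α l) = t := by field_simp
    rw [mul_neg, ek] at c2
    rw [mul_neg, el] at c4
    rw [ek] at c1
    rw [el] at c3
    have d1 : Real.exp (α k * Real.log (1 + t / α k) + α l * Real.log (1 - t / α l)) < 1 := by
      rw [Real.exp_lt_one_iff]; linarith
    have d2 : Real.exp (α k * Real.log (1 - t / α k) + α l * Real.log (1 + t / α l)) < 1 := by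
      rw [Real.exp_lt_one_iff]; linarith
    have d3 : Real.exp (∑ x, α x * (0 : Fin d → ℝ) x) = 1 := by simp
    rw [d3] at h1
    linarith
  have hex : ∃ k, 0 < α k := by
    by_contra hc
    push Not at hc
    have := Finset.sum_nonpos fun k (_ : k ∈ Finset.univ) => hc k
    linarith
  obtain ⟨k, hk⟩ := hex
  have hl : ∀ l, l ≠ k → α l ≤ 0 := fun l hl => by
    by_contra hc
    push Not at hc
    exact hone l k hl hc hk
  refine ⟨hs, k, ?_, hl⟩
  rw [← Finset.add_sum_erase _ _ (Finset.mem_univ k)] at hs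
  have := Finset.sum_nonpos fun l (h : l ∈ Finset.univ.erase k) => hl l (Finset.ne_of_mem_erase h)
  linarith

lemma aplus_of {F : RR d →ₐ[ℝ] ℝ} (hF : ∀ x ∈ CC d, F x ≤ 0) {α : Fin d → ℝ}
    (hα : ∀ v, F (X v) = Real.exp (∑ k, α k * v k)) (hs : ∑ k, α k = 1) : memAplus α := by
  classical
  refine ⟨hs, fun k => ?_⟩
  by_contra hk
  push Not at hk
  set v : Fin d → ℝ := fun j => -1 + (Pi.single k (1 / α k) : Fin d → ℝ) j with hv
  have hv0 : ∀ j, v j < 0 := fun j => by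
    simp only [hv, Pi.single_apply]
    have : 1 / α k < 0 := one_div_neg.2 hk
    split_ifs <;> linarith
  have hv1 : ∀ j, 0 < 1 - Real.exp (v j) := fun j => by
    have := Real.exp_lt_one_iff.2 (hv0 j); linarith
  have h1 := hF _ (CC_jensen (Rpos_add (Rpos_X v) (Rpos_X fun j => Real.log (1 - Real.exp (v j)))) 0 fun j => by
    simp only [map_add, ev_X]
    rw [Real.exp_log (hv1 j)]; simp)
  rw [map_sub, map_add, X_zero, map_one] at h1
  have h2 : 0 < F (X fun j => Real.log (1 - Real.exp (v j))) := by rw [hα]; exact Real.exp_pos _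
  have h3 : F (X v) = 1 := by
    rw [hα]
    have : ∑ j, α j * v j = 0 := by
      simp only [hv, mul_add, Finset.sum_add_distrib, Pi.single_apply, mul_ite, mul_zero,
        Finset.sum_ite_eq', Finset.mem_univ, if_true, mul_neg, mul_one, Finset.sum_neg_distrib, hs]
      field_simp [hk.ne]; norm_num
    rw [this, Real.exp_zero]
  linarith


/-- Relative entropies of log vectors. -/
def KLv {ι : Type*} [Fintype ι] (v : ι → Fin d → ℝ) (k l : Fin d) : ℝ :=
  ∑ i, Real.exp (v i k) * (v i k - v i l)

lemma F_eq_ev {e : RR d} {F : RR d →ₐ[ℝ] ℝ} {Φ : RR d →ₗ[ℝ] ℝ} (hp : Pt e F Φ) (he : ∀ l, ev l e = 0)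
    (h0 : F e = 0) : ∃ k, ∀ x, F x = ev k x := by
  by_contra hc
  have h1 : ∀ k, ∃ v, F (X v) ≠ ev k (X v) := by
    intro k
    by_contra h2
    push Not at h2
    apply hc
    refine ⟨k, fun x => ?_⟩
    have : F.toLinearMap = (ev k).toLinearMap := lin_ext h2
    exact LinearMap.congr_fun this x
  choose v hv using h1
  set y : RR d := ∏ l, (X (v l) - algebraMap ℝ _ (ev l (X (v l)))) with hy
  have h2 : ∀ l, ev l y = 0 := fun l => by
    rw [hy, map_prod]
    refine Finset.prod_eq_zero (Finset.mem_univ l) ?_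
    rw [map_sub, AlgHom.commutes]; exact sub_self _
  have h3 := Pt_eq hp he h2
  rw [h0, zero_mul, hy, map_prod, Finset.prod_eq_zero_iff] at h3
  obtain ⟨l, -, h4⟩ := h3
  rw [map_sub, AlgHom.commutes] at h4
  exact hv l (by simpa [sub_eq_zero] using h4)

lemma caseC {e : RR d} {F : RR d →ₐ[ℝ] ℝ} {Φ : RR d →ₗ[ℝ] ℝ} (hp : Pt e F Φ) (he : ∀ l, ev l e = 0)
    (k : Fin d) (hk : ∀ x, F x = ev k x) : ∃ γ : Fin d → ℝ, (∀ l, l ≠ k → 0 ≤ γ l) ∧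
      ∀ (ι : Type) [Fintype ι] (v : ι → Fin d → ℝ), Norm1 (mon v) →
        Φ (mon v - 1) = ∑ l, γ l * KLv v k l := by
  classical
  set E : ℝ := (Real.exp 1 - 1)⁻¹ with hE
  have hE1 : Real.exp 1 - 1 ≠ 0 := by
    have := Real.add_one_lt_exp (one_ne_zero (α := ℝ)); linarith
  set π : RR d := E • (X (Pi.single k 1) - 1) with hπ
  have hπk : ev k π = 1 := by
    simp [hπ, hE, hE1]
  have hπl : ∀ l, l ≠ k → ev l π = 0 := fun l hl => by
    simp [hπ, Pi.single_eq_of_ne hl]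
  set Ψ : RR d →ₗ[ℝ] ℝ := Φ.comp (LinearMap.mulLeft ℝ π) with hΨ
  have hΨa : ∀ x, Ψ x = Φ (π * x) := fun x => rfl
  have hΨI : ∀ x, (∀ l, ev l x = 0) → Ψ x = Φ x := fun x hx => by
    rw [hΨa, hp.mul π x hx, hk, hπk, one_mul]
  have hΨ0 : ∀ x ∈ CC d, 0 ≤ Ψ x := fun x hx => by rw [hΨI x (CC_ev hx)]; exact hp.nonneg x hx
  set D : (Fin d → ℝ) → ℝ := fun u => Ψ (X u) - Real.exp (u k) * Ψ 1 with hD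
  have hmul : ∀ u w, Ψ (X u * X w) = Real.exp (w k) * D u + Real.exp (u k) * Ψ (X w) := by
    intro u w
    have h1 := hp.mul (X w) (π * (X u - Real.exp (u k) • 1)) fun l => by
      rw [map_mul]
      by_cases hl : l = k
      · subst hl; simp
      · rw [hπl l hl, zero_mul]
    have e1 : X w * (π * (X u - Real.exp (u k) • 1)) = π * (X u * X w - Real.exp (u k) • X w) := by
      simp only [Algebra.smul_def, mul_one]; ring
    rw [e1, ← hΨa, ← hΨa, hk, ev_X, map_sub, map_sub, map_smul, map_smul] at h1
    simp only [hD]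
    simp only [smul_eq_mul] at h1
    linarith
  have hDadd : ∀ u w, D (u + w) = Real.exp (w k) * D u + Real.exp (u k) * D w := by
    intro u w
    have := hmul u w
    simp only [hD, X_add, Pi.add_apply, Real.exp_add] at this ⊢
    rw [this]; ring
  have hDc : Continuous D := by
    refine (cont_of_nonneg Ψ hΨ0).sub ?_
    exact (Real.continuous_exp.comp (continuous_apply k)).mul continuous_const
  obtain ⟨γ, hγ⟩ := lin_form (fun u => Real.exp (-(u k)) * D u) (fun u w => by
    simp only [hDadd, Pi.add_apply, neg_add, Real.exp_add]
    have a1 : Real.exp (-(u k)) * Real.exp (u k) = 1 := by rw [← Real.exp_add]; simp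
    have a2 : Real.exp (-(w k)) * Real.exp (w k) = 1 := by rw [← Real.exp_add]; simp
    linear_combination (Real.exp (-(w k)) * D w) * a1 + (Real.exp (-(u k)) * D u) * a2)
    ((Real.continuous_exp.comp (continuous_apply k).neg).mul hDc)
  have hγD : ∀ u, D u = Real.exp (u k) * ∑ l, γ l * u l := fun u => by
    rw [← hγ u, ← mul_assoc, ← Real.exp_add]; simp
  have hγs : ∑ l, γ l = 0 := by
    have h1 := hΨ0 _ (CC_const 1)
    have h2 := hΨ0 _ (CC_const' 1)
    rw [map_neg] at h2
    have h3 : Ψ (X (fun _ => 1) - Real.exp 1 • 1) = 0 := by linarith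
    rw [map_sub, map_smul, smul_eq_mul] at h3
    have h4 := hγD fun _ => 1
    simp only [hD] at h4
    rw [h3] at h4
    have : Real.exp 1 ≠ 0 := (Real.exp_pos 1).ne'
    simpa [this] using h4.symm
  refine ⟨fun l => -γ l, fun l hl => ?_, fun ι _ v hv => ?_⟩
  · set w1 : Fin d → ℝ := Pi.single l (Real.log (1/2)) with hw1
    set w2 : Fin d → ℝ := Pi.single l (Real.log (3/2)) with hw2
    have hr : (1/2 : ℝ) • X w1 + (1/2 : ℝ) • X w2 ∈ Rpos d :=
      Rpos_add (Rpos_smul (by norm_num) (Rpos_X _)) (Rpos_smul (by norm_num) (Rpos_X _))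
    have h1 := hΨ0 _ (CC_jensen hr 0 fun j => by
      simp only [map_add, map_smul, ev_X, smul_eq_mul, hw1, hw2, Pi.zero_apply, Real.exp_zero]
      by_cases hjk : j = l
      · subst hjk
        rw [Pi.single_eq_same, Pi.single_eq_same,
          Real.exp_log (by norm_num), Real.exp_log (by norm_num)]
        norm_num
      · rw [Pi.single_eq_of_ne hjk, Pi.single_eq_of_ne hjk]
        norm_num)
    have h2 : ∀ a, Ψ (X (Pi.single l a : Fin d → ℝ)) = γ l * a + Ψ 1 := fun a => by
      have := hγD (Pi.single l a)
      simp only [hD, Pi.single_eq_of_ne hl.symm, Pi.single_apply, mul_ite, mul_zero,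
        Finset.sum_ite_eq', Finset.mem_univ, if_true, Real.exp_zero, one_mul] at this
      linarith
    rw [map_sub, map_add, map_smul, map_smul, hw1, hw2, h2, h2, X_zero] at h1
    simp only [smul_eq_mul] at h1
    have h3 : Real.log (1/2) + Real.log (3/2) < 0 := by
      rw [← Real.log_mul (by norm_num) (by norm_num)]
      exact Real.log_neg (by norm_num) (by norm_num)
    have h4 : 0 ≤ γ l * (Real.log (1/2) + Real.log (3/2)) := by linarith
    show 0 ≤ -γ l
    nlinarith
  · rw [← hΨI _ fun l => by rw [map_sub, hv l, map_one, sub_self]]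
    have h1 : ∀ i, Ψ (X (v i)) = Real.exp (v i k) * ∑ l, γ l * v i l + Real.exp (v i k) * Ψ 1 := fun i => by
      have := hγD (v i)
      simp only [hD] at this
      linarith
    have h2 : ∑ i, Real.exp (v i k) = 1 := by simpa [mon] using hv k
    rw [mon, map_sub, map_sum, Finset.sum_congr rfl fun i _ => h1 i, Finset.sum_add_distrib, ← Finset.sum_mul, h2, one_mul,
      add_sub_cancel_right]
    simp only [KLv]
    have h3 : ∀ i, ∑ l, -γ l * (Real.exp (v i k) * (v i k - v i l)) = Real.exp (v i k) * ∑ l, γ l * v i l := fun i => by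
      have : ∀ l, -γ l * (Real.exp (v i k) * (v i k - v i l)) =
        Real.exp (v i k) * (γ l * v i l) - (Real.exp (v i k) * v i k) * γ l := fun l => by ring
      simp only [this, Finset.sum_sub_distrib, ← Finset.mul_sum, hγs]; ring
    simp only [← h3, Finset.mul_sum]
    rw [Finset.sum_comm]

end CMM

namespace CMM
open Filter Topology
variable {d : ℕ}

/-- The hypotheses in logarithmic form. -/
structure Hyp {ι κ : Type} [Fintype ι] [Fintype κ] (v : ι → Fin d → ℝ) (w : κ → Fin d → ℝ) : Prop where
  nv : Norm1 (mon v)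
  nw : Norm1 (mon w)
  am : ∀ α, memAminus α → notBasis α → ∑ j, Real.exp (∑ k, α k * w j k) < ∑ i, Real.exp (∑ k, α k * v i k)
  ap : ∀ α, memAplus α → notBasis α → ∑ i, Real.exp (∑ k, α k * v i k) < ∑ j, Real.exp (∑ k, α k * w j k)
  bm : ∀ (β : Fin d → ℝ) (k : Fin d), ∑ l, β l = 0 → (∀ l, l ≠ k → β l ≤ 0) → β ≠ 0 →
    ∃ i, ∀ j, ∑ l, β l * w j l < ∑ l, β l * v i l
  kl : ∀ k l, k ≠ l → KLv w k l < KLv v k l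

lemma gibbs {κ : Type*} [Fintype κ] (w : κ → Fin d → ℝ) (nw : Norm1 (mon w)) (k l) : 0 ≤ KLv w k l := by
  have h1 : ∀ l, ∑ i, Real.exp (w i l) = 1 := fun l => by simpa [mon] using nw l
  have h2 : ∑ i, (Real.exp (w i k) - Real.exp (w i l)) ≤ KLv w k l := by
    refine Finset.sum_le_sum fun i _ => ?_
    have a1 := Real.add_one_le_exp (w i l - w i k)
    have a2 := mul_le_mul_of_nonneg_left a1 (Real.exp_pos (w i k)).le
    rw [← Real.exp_add] at a2
    rw [show w i k + (w i l - w i k) = w i l by ring] at a2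
    linarith
  rw [Finset.sum_sub_distrib, h1, h1] at h2
  linarith

lemma farkas {ι : Type*} [Fintype ι] [Nonempty ι] (δ : ι → Fin d → ℝ) (k : Fin d)
    (h : ∀ c : Fin d → ℝ, (∀ l, l ≠ k → 0 ≤ c l) → c k = 0 → c ≠ 0 → ∃ i, 0 < ∑ l, c l * δ i l) :
    ∃ lam : ι → ℝ, (∀ i, 0 ≤ lam i) ∧ ∑ i, lam i = 1 ∧ ∀ l, l ≠ k → 0 < ∑ i, lam i * δ i l := by
  classical
  set L : (ι → ℝ) →ₗ[ℝ] (Fin d → ℝ) := 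
    { toFun := fun lam l => ∑ i, lam i * δ i l
      map_add' := fun S T => by funext j; simp [add_mul, Finset.sum_add_distrib]
      map_smul' := fun r T => by funext j; simp [mul_assoc, Finset.mul_sum] } with hL
  set S : Set (Fin d → ℝ) := L '' stdSimplex ℝ ι with hS
  set O : Set (Fin d → ℝ) := {x | ∀ l, l ≠ k → 0 < x l} with hO
  have hOo : IsOpen O := by
    have : O = ⋂ l, ⋂ (_ : l ≠ k), {A : Fin d → ℝ | 0 < A l} := by ext; simp [hO]
    rw [this]
    exact isOpen_iInter_of_finite fun i => isOpen_iInter_of_finite fun _ => isOpen_lt continuous_const (continuous_apply i)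
  have hOc : Convex ℝ O := by
    intro A hA B hB a b ha hb hab i hi
    simp only [Pi.add_apply, Pi.smul_apply, smul_eq_mul]
    rcases ha.lt_or_eq with h1 | h1
    · exact add_pos_of_pos_of_nonneg (mul_pos h1 (hA i hi)) (mul_nonneg hb (hB i hi).le)
    · have : b = 1 := by linarith
      rw [← h1, this]; simpa using hB i hi
  have hSc : Convex ℝ S := (convex_stdSimplex ℝ ι).linear_image L
  by_cases hd : Disjoint O S
  · exfalso
    obtain ⟨f, u, h1, h2⟩ := geometric_hahn_banach_open hOc hOo hSc hd
    have hLs : ∀ i, δ i ∈ S := fun i => by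
      refine ⟨_, single_mem_stdSimplex ℝ i, ?_⟩
      funext l
      simp [hL, Pi.single_apply]
    have hfs : ∀ x, f x = ∑ l, f (Pi.single l 1) * x l := fun x => by
      conv_lhs => rw [← Finset.univ_sum_single x]
      rw [map_sum]
      refine Finset.sum_congr rfl fun k _ => ?_
      have e : (Pi.single k (x k) : Fin d → ℝ) = x k • Pi.single k 1 := by
        rw [← Pi.single_smul]; simp
      rw [e, map_smul, smul_eq_mul, mul_comm]
    have hone : (1 : Fin d → ℝ) ∈ O := fun l _ => one_pos
    have hu : 0 ≤ u := by
      by_contra hu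
      push Not at hu
      -- scale 1 toward zero
      have h3 : ∀ t : ℝ, 0 < t → t * f 1 < u := fun t ht => by
        have := h1 (t • 1) fun l _ => by simpa using ht
        rwa [map_smul, smul_eq_mul] at this
      have h4 := h3 1 one_pos
      have h5 : f 1 < 0 := by linarith
      have h6 := h3 (u / (2 * f 1)) (div_pos_of_neg_of_neg hu (by linarith))
      rw [div_mul_eq_mul_div, div_lt_iff_of_neg (by linarith)] at h6
      nlinarith
    have hnp : ∀ x, (∀ l, l ≠ k → 0 ≤ x l) → f x ≤ 0 := by
      intro x hx
      by_contra hc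
      push Not at hc
      -- f (s•x + 1) = s f x + f 1 < u
      have h3 : ∀ s : ℝ, 0 ≤ s → s * f x + f 1 < u := fun s hs => by
        have := h1 (s • x + 1) fun l hl => by
          have := mul_nonneg hs (hx l hl)
          simp; linarith
        rwa [map_add, map_smul, smul_eq_mul] at this
      have h4 := h3 ((|u| + |f 1|) / f x) (by positivity)
      rw [div_mul_cancel₀ _ hc.ne'] at h4
      have := neg_abs_le (f 1)
      have := le_abs_self u
      linarith
    set c : Fin d → ℝ := fun l => -f (Pi.single l 1) with hc
    have hck : c k = 0 := by
      have a1 := hnp (Pi.single k 1) fun l hl => by simp [Pi.single_eq_of_ne hl]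
      have a2 := hnp (-Pi.single k 1) fun l hl => by simp [Pi.single_eq_of_ne hl]
      rw [map_neg] at a2
      simp only [hc]; linarith
    have hcl : ∀ l, l ≠ k → 0 ≤ c l := fun l hl => by
      have := hnp (Pi.single l 1) fun j _ => by
        rw [Pi.single_apply]; split_ifs <;> norm_num
      simp only [hc]; linarith
    have hcf : ∀ x, ∑ l, c l * x l = -f x := fun x => by
      rw [hfs x]; simp [hc]
    have hc0 : c ≠ 0 := by
      intro h0
      have hf0 : ∀ x, f x = 0 := fun x => by
        have := hcf x
        rw [h0] at this; simp at this; linarith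
      obtain ⟨i⟩ := ‹Nonempty ι›
      have a1 := h1 1 hone
      have a2 := h2 _ (hLs i)
      rw [hf0] at a1 a2
      linarith
    obtain ⟨i, hi⟩ := h c hcl hck hc0
    rw [hcf] at hi
    have := h2 _ (hLs i)
    linarith
  · rw [Set.not_disjoint_iff] at hd
    obtain ⟨x, hx, lam, hlam, rfl⟩ := hd
    exact ⟨lam, hlam.1, hlam.2, hx⟩

lemma bsum (β : Fin d → ℝ) (k : Fin d) (h0 : ∑ l, β l = 0) (x : Fin d → ℝ) :
    ∑ l, β l * x l = ∑ l, (-β l) * (x k - x l) := by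
  have : ∀ l, (-β l) * (x k - x l) = β l * x l - x k * β l := fun l => by ring
  simp only [this, Finset.sum_sub_distrib, ← Finset.mul_sum, h0]; ring

lemma nonempty_of_norm {ι : Type*} [Fintype ι] {v : ι → Fin d → ℝ} (hd : 1 ≤ d) (nv : Norm1 (mon v)) : Nonempty ι := by
  by_contra h
  rw [not_nonempty_iff] at h
  have := nv ⟨0, hd⟩
  simp [mon] at this

section
variable {ι κ : Type} [Fintype ι] [Fintype κ] {v : ι → Fin d → ℝ} {w : κ → Fin d → ℝ}

lemma Hyp.klpos (H : Hyp v w) {k l} (h : k ≠ l) : 0 < KLv v k l :=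
  (gibbs w H.nw k l).trans_lt (H.kl k l h)

lemma Hyp.pu (H : Hyp v w) : PU (mon v) := by
  refine PU_of v H.nv fun k l hkl => ?_
  by_contra hc
  push Not at hc
  have := H.klpos hkl
  simp [KLv, hc] at this

lemma Hyp.trop0 (H : Hyp v w) : Trop v 0 := by
  intro k
  refine ⟨fun i => Real.exp (v i k), fun i => (Real.exp_pos _).le, by simpa [mon] using H.nv k, fun l hl => ?_⟩
  simpa [KLv] using H.klpos hl.symm

lemma Hyp.trop (H : Hyp v w) (hd : 1 ≤ d) (j : κ) : Trop v (w j) := by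
  classical
  intro k
  have := nonempty_of_norm hd H.nv
  obtain ⟨lam, h0, h1, h2⟩ := farkas (fun i l => (v i k - v i l) - (w j k - w j l)) k fun c hc hck hc0 => by
    set β : Fin d → ℝ := fun l => -c l + (Pi.single k (∑ l, c l) : Fin d → ℝ) l with hβ
    have hs : ∑ l, β l = 0 := by simp [hβ, Finset.sum_add_distrib]
    have hβl : ∀ l, l ≠ k → β l = - c l := fun l hl => by simp [hβ, Pi.single_eq_of_ne hl]
    have hβ0 : β ≠ 0 := by
      intro h0
      apply hc0
      funext l
      by_cases hl : l = k
      · subst hl; exact hck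
      · have := congrFun h0 l
        rw [hβl l hl] at this
        simpa using this
    obtain ⟨i, hi⟩ := H.bm β k hs (fun l hl => by rw [hβl l hl]; linarith [hc l hl]) hβ0
    refine ⟨i, ?_⟩
    have h3 := hi j
    rw [bsum β k hs, bsum β k hs, ← sub_pos, ← Finset.sum_sub_distrib] at h3
    refine h3.trans_le (le_of_eq (Finset.sum_congr rfl fun l _ => ?_))
    by_cases hl : l = k
    · subst hl; simp
    · rw [hβl l hl]; ring
  refine ⟨lam, h0, h1, fun l hl => ?_⟩
  have h3 := h2 l hl
  simp only [mul_sub (lam _) (_ - _), Finset.sum_sub_distrib, ← Finset.sum_mul, h1] at h3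
  linarith

lemma Hyp.unif (H : Hyp v w) (hd : 1 ≤ d) : ∃ μ : ℝ, 0 < μ ∧ ∃ lam : κ → Fin d → ι → ℝ, (∀ j k i, 0 ≤ lam j k i) ∧
    (∀ j k, ∑ i, lam j k i = 1) ∧ ∀ j k l, l ≠ k → (w j k - w j l) + μ ≤ ∑ i, lam j k i * (v i k - v i l) := by
  classical
  have h := H.trop hd
  choose lam h0 h1 h2 using h
  have := nonempty_of_norm hd H.nw
  have : Nonempty (Fin d) := ⟨⟨0, hd⟩⟩
  set G : κ × Fin d × Fin d → ℝ := fun x => if x.2.2 = x.2.1 then 1 else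
    ∑ i, lam x.1 x.2.1 i * (v i x.2.1 - v i x.2.2) - (w x.1 x.2.1 - w x.1 x.2.2) with hG
  obtain ⟨x0, hx0⟩ := Finite.exists_min G
  have hpos : ∀ x, 0 < G x := fun x => by
    simp only [hG]; split_ifs with hh
    · exact one_pos
    · exact sub_pos.2 (h2 _ _ _ hh)
  refine ⟨G x0, hpos x0, lam, h0, h1, fun j k l hl => ?_⟩
  have := hx0 (j, k, l)
  have e : G (j, k, l) = ∑ i, lam j k i * (v i k - v i l) - (w j k - w j l) := by simp [hG, hl]
  rw [e] at this
  linarith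

lemma F_mon {ι : Type*} [Fintype ι] {F : RR d →ₐ[ℝ] ℝ} {α : Fin d → ℝ} (hα : ∀ v, F (X v) = Real.exp (∑ k, α k * v k)) (v : ι → Fin d → ℝ) :
    F (mon v) = ∑ i, Real.exp (∑ k, α k * v i k) := by simp [mon, hα]

/-- Trichotomy for points. -/
lemma classify {e : RR d} {F : RR d →ₐ[ℝ] ℝ} {Φ : RR d →ₗ[ℝ] ℝ} (hp : Pt e F Φ) (he : ∀ l, ev l e = 0) :
    (0 < F e ∧ ∃ α, memAminus α ∧ notBasis α ∧ ∀ v, F (X v) = Real.exp (∑ k, α k * v k)) ∨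
    (F e < 0 ∧ ∃ α, memAplus α ∧ notBasis α ∧ ∀ v, F (X v) = Real.exp (∑ k, α k * v k)) ∨
    (F e = 0 ∧ ∃ k, ∀ x, F x = ev k x) := by
  rcases lt_trichotomy (F e) 0 with h | h | h
  · right; left
    obtain ⟨α, h1, h2⟩ := exp_form hp he h.ne
    refine ⟨h, α, aplus_of (fun x hx => ?_) h1 h2, notBasis_of he h.ne h1, h1⟩
    rw [Pt_eq hp he (CC_ev hx)]
    exact mul_nonpos_of_nonpos_of_nonneg h.le (hp.nonneg x hx)
  · exact Or.inr (Or.inr ⟨h, F_eq_ev hp he h⟩)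
  · left
    obtain ⟨α, h1, h2⟩ := exp_form hp he h.ne'
    refine ⟨h, α, aminus_of (fun x hx => ?_) h1 h2, notBasis_of he h.ne' h1, h1⟩
    rw [Pt_eq hp he (CC_ev hx)]
    exact mul_nonneg h.le (hp.nonneg x hx)

lemma Hyp.run1 (H : Hyp v w) (hd : 1 ≤ d) : ∃ η : ℝ, 0 < η ∧ ∃ h ∈ Rpos d, h ≠ 0 ∧
    h * (mon v - mon w - η • (mon v + mon w - 2)) ∈ CC d := by
  refine thmB (mon_pos v) (mon_pos w) H.nv H.nw w rfl H.pu (TropR_of_Trop v 0 H.trop0)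
    (fun j => TropR_of_Trop v (w j) (H.trop hd j)) fun F Φ hp => ?_
  have he : ∀ l, ev l (mon v + mon w - 2) = 0 := fun l => by
    rw [map_sub, map_add, H.nv l, H.nw l, map_ofNat]; norm_num
  have hx : ∀ l, ev l (mon v - mon w) = 0 := fun l => by
    rw [map_sub, H.nv l, H.nw l, sub_self]
  have hfx := Pt_eq hp he hx
  rw [map_sub] at hfx
  rcases classify hp he with ⟨h, α, h1, h2, h3⟩ | ⟨h, α, h1, h2, h3⟩ | ⟨h, k, hk⟩
  · have := H.am α h1 h2
    rw [← F_mon h3, ← F_mon h3] at this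
    by_contra hc
    push Not at hc
    have := mul_nonpos_of_nonneg_of_nonpos h.le hc
    linarith
  · have := H.ap α h1 h2
    rw [← F_mon h3, ← F_mon h3] at this
    by_contra hc
    push Not at hc
    have := mul_nonneg_of_nonpos_of_nonpos h.le hc
    linarith
  · obtain ⟨γ, hγ, h1⟩ := caseC hp he k hk
    have a1 := h1 ι v H.nv
    have a2 := h1 κ w H.nw
    have e1 : Φ (mon v - mon w) = ∑ l, γ l * (KLv v k l - KLv w k l) := by
      have : mon v - mon w = (mon v - 1) - (mon w - 1) := by ring
      rw [this, map_sub, a1, a2, ← Finset.sum_sub_distrib]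
      exact Finset.sum_congr rfl fun l _ => by ring
    have kk : ∀ {ι : Type} [Fintype ι] (v : ι → Fin d → ℝ), KLv v k k = 0 := fun v => by simp [KLv]
    have hnn : ∀ l, 0 ≤ γ l * (KLv v k l - KLv w k l) := fun l => by
      by_cases hl : l = k
      · subst hl; simp [kk]
      · exact mul_nonneg (hγ l hl) (sub_pos.2 (H.kl k l (Ne.symm hl))).le
    have hex : ∃ l, l ≠ k ∧ 0 < γ l := by
      by_contra hc
      push Not at hc
      have hz : ∀ l, l ≠ k → γ l = 0 := fun l hl => le_antisymm (hc l hl) (hγ l hl)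
      have hone := hp.one
      have e2 : mon v + mon w - 2 = (mon v - 1) + (mon w - 1) := by ring
      rw [e2, map_add, a1, a2] at hone
      have z1 : ∀ {ι : Type} [Fintype ι] (v : ι → Fin d → ℝ), ∑ l, γ l * KLv v k l = 0 := fun v =>
        Finset.sum_eq_zero fun l _ => by
          by_cases hl : l = k
          · subst hl; simp [kk]
          · simp [hz l hl]
      rw [z1, z1] at hone
      norm_num at hone
    obtain ⟨l, hl, hl0⟩ := hex
    rw [e1]
    exact Finset.sum_pos' (fun l _ => hnn l) ⟨l, Finset.mem_univ l, mul_pos hl0 (sub_pos.2 (H.kl k l hl.symm))⟩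

end
end CMM

namespace CMM
open Filter Topology
variable {d : ℕ}

lemma real1 {θ x y : ℝ} {K : ℕ} (h0 : 0 < θ) (h1 : θ < 1) (hK : θ * (K + 1) < K) (hx0 : 0 < x) (hx1 : x < 1)
    (hy : y ≤ θ * x) : (1 - x) ^ K < (1 - y) ^ (K + 1) := by
  have hp : 0 < 1 - x := by linarith
  have hb := rpow_one_add_le_one_add_mul_self (s := -x) (by linarith) h0.le h1.le
  have e1 : (1 : ℝ) + -x = 1 - x := by ring
  rw [e1] at hb
  have hpp : 0 < (1 - x) ^ θ := Real.rpow_pos_of_pos hp _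
  calc (1 - x) ^ K = (1 - x) ^ (K : ℝ) := (Real.rpow_natCast _ _).symm
    _ < (1 - x) ^ (θ * ((K : ℝ) + 1)) := Real.rpow_lt_rpow_of_exponent_gt hp (by linarith) hK
    _ = ((1 - x) ^ θ) ^ (K + 1) := by
        rw [Real.rpow_mul hp.le, ← Real.rpow_natCast]; push_cast; rfl
    _ ≤ (1 - y) ^ (K + 1) := pow_le_pow_left₀ hpp.le (by nlinarith) _

lemma real2 {θ x y b : ℝ} {K : ℕ} (h0 : 0 < θ) (h1 : θ < 1) (hK : 1 + b ≤ K * (1 - θ)) (hx0 : 0 < x) (hx1 : x ≤ b)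
    (hy0 : -1 ≤ y) (hy : y ≤ θ * x) : (1 + y) ^ (K + 1) < (1 + x) ^ K := by
  have hb : 0 < 1 + b := by linarith
  set c := (1 - θ) / (1 + b) with hc
  have hcb : c * (1 + b) = 1 - θ := div_mul_cancel₀ _ hb.ne'
  have hc0 : 0 < c := div_pos (by linarith) hb
  have hKc : 1 ≤ K * c := by
    rw [hc, ← mul_div_assoc, le_div_iff₀ hb]; linarith
  have hθ : 0 < θ * x := mul_pos h0 hx0
  have h2 : (1 + θ * x) * (1 + c * x) ≤ 1 + x := by
    have a1 : θ * x ≤ b := by nlinarith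
    have a2 : c * (1 + θ * x) ≤ 1 - θ := by
      rw [← hcb]; exact mul_le_mul_of_nonneg_left (by linarith) hc0.le
    nlinarith
  have hcx : 0 < c * x := mul_pos hc0 hx0
  calc (1 + y) ^ (K + 1) ≤ (1 + θ * x) ^ (K + 1) := pow_le_pow_left₀ (by linarith) (by linarith) _
    _ = (1 + θ * x) ^ K * (1 + θ * x) := pow_succ _ _
    _ < (1 + θ * x) ^ K * (1 + x) := by
        apply mul_lt_mul_of_pos_left _ (by positivity)
        nlinarith
    _ ≤ (1 + θ * x) ^ K * (1 + c * x) ^ K := by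
        apply mul_le_mul_of_nonneg_left _ (by positivity)
        have := one_add_mul_le_pow (a := c * x) (by linarith) K
        nlinarith
    _ = ((1 + θ * x) * (1 + c * x)) ^ K := (mul_pow _ _ _).symm
    _ ≤ (1 + x) ^ K := pow_le_pow_left₀ (by positivity) h2 _

lemma Trop_const {ι : Type} [Fintype ι] (v : ι → Fin d → ℝ) (a : Fin d → ℝ) (K : ℕ)
    (h : ∀ k, ∃ lam : ι → ℝ, (∀ i, 0 ≤ lam i) ∧ ∑ i, lam i = 1 ∧
      ∀ l, l ≠ k → a k - a l < K * ∑ i, lam i * (v i k - v i l)) :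
    Trop (fun p : Fin K → ι => ∑ t, v (p t)) a := by
  classical
  intro k
  obtain ⟨lam, h0, h1, h2⟩ := h k
  have key : ∀ G : (Fin K → ι) → ℝ, ∑ p, (∑ i, if p = (fun _ => i) then lam i else 0) * G p = ∑ i, lam i * G fun _ => i := by
    intro G
    simp only [Finset.sum_mul]
    rw [Finset.sum_comm]
    refine Finset.sum_congr rfl fun i _ => ?_
    simp [ite_mul]
  refine ⟨fun p => ∑ i, if p = (fun _ => i) then lam i else 0, fun p => Finset.sum_nonneg fun i _ => ?_, ?_, fun l hl => ?_⟩
  · split_ifs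
    · exact h0 i
    · exact le_rfl
  · have := key fun _ => 1
    simpa [h1] using this
  · refine (h2 l hl).trans_le (le_of_eq ?_)
    have := key fun p => (∑ t, v (p t)) k - (∑ t, v (p t)) l
    rw [this, Finset.mul_sum]
    refine Finset.sum_congr rfl fun i _ => ?_
    simp; ring

lemma F_Rpos {e : RR d} {F : RR d →ₐ[ℝ] ℝ} {Φ : RR d →ₗ[ℝ] ℝ} (hp : Pt e F Φ) {h : RR d} (hh : h ∈ Rpos d) (h0 : h ≠ 0) :
    0 < F h := by
  rw [eq_sum h, map_sum]
  refine Finset.sum_pos (fun v hv => ?_) ?_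
  · rw [map_smul, smul_eq_mul]
    exact mul_pos (lt_of_le_of_ne (hh v) (Ne.symm (Finsupp.mem_support_iff.1 hv))) (hp.pos v)
  · by_contra hc
    rw [Finset.not_nonempty_iff_eq_empty] at hc
    apply h0
    rw [eq_sum h, hc, Finset.sum_empty]

lemma asum (α : Fin d → ℝ) (k : Fin d) (h0 : ∑ l, α l = 1) (x : Fin d → ℝ) :
    ∑ l, α l * x l = x k + ∑ l, (-α l) * (x k - x l) := by
  have : ∀ l, (-α l) * (x k - x l) = α l * x l - x k * α l := fun l => by ring
  simp only [this, Finset.sum_sub_distrib, ← Finset.mul_sum, h0]; ring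

section
variable {ι κ : Type} [Fintype ι] [Fintype κ] {v : ι → Fin d → ℝ} {w : κ → Fin d → ℝ}

/-- An upper bound for the tilted sums. -/
lemma csum_le (c : Fin d → ℝ) (k : Fin d) {t M : ℝ} (hc : ∀ l, l ≠ k → 0 ≤ c l)
    (ht : ∑ l, (if l = k then 0 else c l) = t) (x : Fin d → ℝ) (y : Fin d → ℝ) (hx : ∀ l, l ≠ k → x l ≤ y l + M) (hk : x k ≤ y k)
    (hk' : y k = x k) :
    ∑ l, c l * x l ≤ ∑ l, c l * y l + t * M := by
  rw [← ht, Finset.sum_mul, ← Finset.sum_add_distrib]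
  refine Finset.sum_le_sum fun l _ => ?_
  by_cases hl : l = k
  · subst hl; simp [hk']
  · rw [if_neg hl]
    have := mul_le_mul_of_nonneg_left (hx l hl) (hc l hl)
    linarith

lemma tilt (nv : Norm1 (mon v)) (nw : Norm1 (mon w)) (hd : 1 ≤ d) {μ M : ℝ} {lam : κ → Fin d → ι → ℝ} (l0 : ∀ j k i, 0 ≤ lam j k i)
    (l1 : ∀ j k, ∑ i, lam j k i = 1)
    (l2 : ∀ j k l, l ≠ k → (w j k - w j l) + μ ≤ ∑ i, lam j k i * (v i k - v i l)) (hμ : 0 < μ) (hM : 0 ≤ M)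
    (hv : ∀ i k, |v i k| ≤ M) (hw : ∀ j k, |w j k| ≤ M) {K : ℕ} (hK : 4 * M < K * μ)
    {α : Fin d → ℝ} (hα : memAminus α) (hn : notBasis α) :
    (∑ i, Real.exp (∑ k, α k * v i k) ≤ Real.exp (2 * M * (2 * M / μ))) ∨
    (∑ j, Real.exp (∑ k, α k * w j k)) ^ (K + 1) < (∑ i, Real.exp (∑ k, α k * v i k)) ^ K := by
  classical
  obtain ⟨hs, k, hk1, hkl⟩ := hα
  have nv' : ∑ i, Real.exp (v i k) = 1 := by simpa [mon] using nv k
  have nw' : ∑ i, Real.exp (w i k) = 1 := by simpa [mon] using nw k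
  set t := α k - 1 with ht
  have hc : ∀ l, l ≠ k → 0 ≤ -α l := fun l hl => by linarith [hkl l hl]
  have htsum : ∑ l, (if l = k then 0 else -α l) = t := by
    have e : ∀ l, (if l = k then 0 else -α l) = (if l = k then α l else 0) - α l := fun l => by split_ifs <;> simp
    simp only [e, Finset.sum_sub_distrib, hs]
    simp [ht]
  have ht0 : 0 < t := by
    rcases (sub_nonneg.2 hk1).lt_or_eq with h | h
    · exact h
    · exfalso
      have hz : ∀ l, l ≠ k → α l = 0 := by
        have h3 : ∑ l, (if l = k then 0 else -α l) = 0 := by rw [htsum, ht, ← h]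
        rw [Finset.sum_eq_zero_iff_of_nonneg] at h3
        · intro l hl
          have := h3 l (Finset.mem_univ l)
          rw [if_neg hl] at this; linarith
        · intro l _
          split_ifs with hl
          · exact le_rfl
          · exact hc l hl
      apply hn k
      funext l
      by_cases hl : l = k
      · subst hl; simp; linarith
      · rw [Pi.single_eq_of_ne hl, hz l hl]
  have hone : ∀ x : Fin d → ℝ, (∀ l, |x l| ≤ M) → ∑ l, (-α l) * (x k - x l) ≤ 2 * M * t := fun x hx => by
    have := csum_le (fun l => -α l) k (M := 2 * M) hc htsum (fun l => x k - x l) 0 (fun l _ => by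
      have a1 := abs_le.1 (hx k)
      have a2 := abs_le.1 (hx l)
      simp; linarith) (by simp) (by simp)
    simp only [Pi.zero_apply, mul_zero, Finset.sum_const_zero, zero_add] at this
    linarith
  rcases lt_or_ge t (2 * M / μ) with hcase | hcase
  · left
    calc ∑ i, Real.exp (∑ k, α k * v i k) ≤ ∑ i, Real.exp (v i k) * Real.exp (2 * M * (2 * M / μ)) := by
          refine Finset.sum_le_sum fun i _ => ?_
          rw [asum α k hs, Real.exp_add]
          refine mul_le_mul_of_nonneg_left (Real.exp_le_exp.2 ?_) (Real.exp_pos _).le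
          refine (hone _ (hv i)).trans ?_
          exact mul_le_mul_of_nonneg_left hcase.le (by linarith)
      _ = _ := by rw [← Finset.sum_mul, nv', one_mul]
  · right
    have hne := nonempty_of_norm hd nw
    have hne' := nonempty_of_norm hd nv
    obtain ⟨j, hj⟩ := Finite.exists_max fun j => ∑ l, (-α l) * (w j k - w j l)
    set C := ∑ l, (-α l) * (w j k - w j l) with hC
    have hg : ∑ j, Real.exp (∑ k, α k * w j k) ≤ Real.exp C := by
      calc _ ≤ ∑ j, Real.exp (w j k) * Real.exp C := by
            refine Finset.sum_le_sum fun i _ => ?_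
            rw [asum α k hs, Real.exp_add]
            exact mul_le_mul_of_nonneg_left (Real.exp_le_exp.2 (hj i)) (Real.exp_pos _).le
        _ = _ := by rw [← Finset.sum_mul, nw', one_mul]
    have hi : ∃ i, C + t * μ ≤ ∑ l, (-α l) * (v i k - v i l) := by
      by_contra hcon
      push Not at hcon
      have h3 : ∑ i, lam j k i * ∑ l, (-α l) * (v i k - v i l) < ∑ i, lam j k i * (C + t * μ) := by
        obtain ⟨i0, hi0⟩ : ∃ i0, 0 < lam j k i0 := by
          by_contra hh
          push Not at hh
          have : ∑ i, lam j k i ≤ 0 := Finset.sum_nonpos fun i _ => hh i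
          rw [l1] at this; linarith
        exact Finset.sum_lt_sum (fun i _ => mul_le_mul_of_nonneg_left (hcon i).le (l0 j k i))
          ⟨i0, Finset.mem_univ _, mul_lt_mul_of_pos_left (hcon i0) hi0⟩
      rw [← Finset.sum_mul, l1, one_mul] at h3
      have h4 : ∑ i, lam j k i * ∑ l, (-α l) * (v i k - v i l) = ∑ l, (-α l) * ∑ i, lam j k i * (v i k - v i l) := by
        simp only [Finset.mul_sum]
        rw [Finset.sum_comm]
        exact Finset.sum_congr rfl fun l _ => Finset.sum_congr rfl fun i _ => by ring
      rw [h4] at h3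
      have h5 := csum_le (fun l => -α l) k (M := -μ) hc htsum (fun l => w j k - w j l)
        (fun l => ∑ i, lam j k i * (v i k - v i l)) (fun l hl => by
          have := l2 j k l hl
          linarith) (by simp) (by simp)
      linarith
    obtain ⟨i, hi⟩ := hi
    have hf : Real.exp (-M + (C + t * μ)) ≤ ∑ i, Real.exp (∑ k, α k * v i k) := by
      refine le_trans ?_ (Finset.single_le_sum (f := fun i => Real.exp (∑ k, α k * v i k)) (fun i _ => (Real.exp_pos _).le) (Finset.mem_univ i))
      rw [asum α k hs]
      apply Real.exp_le_exp.2
      have := (abs_le.1 (hv i k)).1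
      linarith
    have hC2 := hone (w j) (hw j)
    rw [div_le_iff₀ hμ] at hcase
    calc _ ≤ (Real.exp C) ^ (K + 1) := pow_le_pow_left₀ (Finset.sum_nonneg fun _ _ => (Real.exp_pos _).le) hg _
      _ < (Real.exp (-M + (C + t * μ))) ^ K := by
          rw [← Real.exp_nat_mul, ← Real.exp_nat_mul]
          apply Real.exp_lt_exp.2
          push_cast
          have hK0 : (0:ℝ) ≤ K := Nat.cast_nonneg K
          have a1 : (K : ℝ) * (t * μ / 2) ≤ K * (t * μ - M) := mul_le_mul_of_nonneg_left (by linarith) hK0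
          have a2 : 2 * M * t < K * (t * μ / 2) := by nlinarith
          nlinarith
      _ ≤ _ := pow_le_pow_left₀ (Real.exp_pos _).le hf _

end
end CMM

namespace CMM
open Filter Topology
variable {d : ℕ}

section
variable {ι κ : Type} [Fintype ι] [Fintype κ] {v : ι → Fin d → ℝ} {w : κ → Fin d → ℝ}

lemma Hyp.run1' (H : Hyp v w) (hd : 1 ≤ d) : ∃ η : ℝ, 0 < η ∧ η < 1 ∧ ∃ h ∈ Rpos d, h ≠ 0 ∧
    h * ((1 - η) • (mon v - 1) - (1 + η) • (mon w - 1)) ∈ CC d := by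
  obtain ⟨η, h1, h, h2, h3, h4⟩ := H.run1 hd
  have he := e_memCC (mon_pos v) (mon_pos w) H.nv H.nw
  refine ⟨min η (1/2), lt_min h1 (by norm_num), (min_le_right _ _).trans_lt (by norm_num), h, h2, h3, ?_⟩
  have h5 := CC_add h4 (CC_smul (sub_nonneg.2 (min_le_left η (1/2))) (CC_mul h2 he))
  rw [← mul_smul_comm, ← mul_add] at h5
  convert h5 using 2
  have e2 : (2 : RR d) = (2 : ℝ) • (1 : RR d) := by
    rw [two_smul]; norm_num
  rw [e2]
  module

lemma exists_bound (v : ι → Fin d → ℝ) : ∃ M : ℝ, 0 ≤ M ∧ ∀ i k, |v i k| ≤ M := by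
  refine ⟨∑ i, ∑ k, |v i k|, Finset.sum_nonneg fun _ _ => Finset.sum_nonneg fun _ _ => abs_nonneg _, fun i k => ?_⟩
  exact (Finset.single_le_sum (f := fun k => |v i k|) (fun _ _ => abs_nonneg _) (Finset.mem_univ k)).trans
    (Finset.single_le_sum (f := fun i => ∑ k, |v i k|) (fun _ _ => Finset.sum_nonneg fun _ _ => abs_nonneg _) (Finset.mem_univ i))

lemma Hyp.run2 (H : Hyp v w) (hd : 1 ≤ d) : ∃ K, ∃ h ∈ Rpos d, h ≠ 0 ∧ h * (mon v ^ K - mon w ^ (K + 1)) ∈ CC d := by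
  classical
  obtain ⟨η, hη0, hη1, h, hh, h0, hhC⟩ := H.run1' hd
  obtain ⟨μ, hμ, lam, l0, l1, l2⟩ := H.unif hd
  obtain ⟨Mv, hMv, hMv'⟩ := exists_bound v
  obtain ⟨Mw, hMw, hMw'⟩ := exists_bound w
  set M := Mv + Mw with hMdef
  have hM : 0 ≤ M := by linarith
  have hv : ∀ i k, |v i k| ≤ M := fun i k => (hMv' i k).trans (by linarith)
  have hw : ∀ i k, |w i k| ≤ M := fun i k => (hMw' i k).trans (by linarith)
  set θ := (1 - η) / (1 + η) with hθ
  have hη2 : 0 < 1 + η := by linarith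
  have hθe : θ * (1 + η) = 1 - η := div_mul_cancel₀ _ hη2.ne'
  have hθ0 : 0 < θ := div_pos (by linarith) hη2
  have hθ1 : θ < 1 := by rw [hθ, div_lt_one hη2]; linarith
  set b := Real.exp (2 * M * (2 * M / μ)) with hb
  have hb0 : 0 < b := Real.exp_pos _
  obtain ⟨K, hK⟩ := exists_nat_gt (max (4 * M / μ) ((1 + b) / (1 - θ)))
  have hK1 : 4 * M < K * μ := by
    rw [← div_lt_iff₀ hμ]; exact (le_max_left _ _).trans_lt hK
  have hK2 : 1 + b < K * (1 - θ) := by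
    rw [← div_lt_iff₀ (by linarith)]; exact (le_max_right _ _).trans_lt hK
  have hKpos : 1 ≤ K := by
    by_contra hc
    have : K = 0 := by omega
    rw [this] at hK2; simp at hK2; linarith
  have hKr : (0:ℝ) < K := by exact_mod_cast hKpos
  have hK3 : θ * (K + 1) < K := by nlinarith
  set f := mon v with hf
  set g := mon w with hg
  have nfK := H.nv.pow K
  have ngK := H.nw.pow (K + 1)
  have hfK := Rpos_pow (mon_pos v) K
  have hgK := Rpos_pow (mon_pos w) (K + 1)
  have he' := e_memCC hfK hgK nfK ngK
  have hee : ∀ l, ev l (f ^ K + g ^ (K + 1) - 2) = 0 := CC_ev he'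
  have hf1 : ∀ l, ev l (f - 1) = 0 := CC_ev (CC_norm (mon_pos v) H.nv)
  have hg1 : ∀ l, ev l (g - 1) = 0 := CC_ev (CC_norm (mon_pos w) H.nw)
  obtain ⟨η', hη', h', hh', h0', hC'⟩ := thmB hfK hgK nfK ngK (fun q : Fin (K + 1) → κ => ∑ t, w (q t))
    (mon_pow w (K + 1)) (PU_pow H.pu hKpos) (by
      rw [mon_pow]
      apply TropR_of_Trop
      apply Trop_const
      intro k
      refine ⟨fun i => Real.exp (v i k), fun i => (Real.exp_pos _).le, by simpa [mon] using H.nv k, fun l hl => ?_⟩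
      have := mul_pos hKr (H.klpos hl.symm)
      simpa [KLv] using this) (by
      intro q
      rw [mon_pow]
      apply TropR_of_Trop
      apply Trop_const
      intro k
      have hK' : (0:ℝ) < K + 1 := by positivity
      refine ⟨fun i => (1 / ((K:ℝ) + 1)) * ∑ t, lam (q t) k i, fun i => mul_nonneg (by positivity) (Finset.sum_nonneg fun t _ => l0 _ _ _), ?_, fun l hl => ?_⟩
      · rw [← Finset.mul_sum, Finset.sum_comm]
        simp only [l1]
        simp
        field_simp
      · have e1 : ∑ i, (1 / ((K:ℝ) + 1) * ∑ t, lam (q t) k i) * (v i k - v i l) =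
            (1 / ((K:ℝ) + 1)) * ∑ t, ∑ i, lam (q t) k i * (v i k - v i l) := by
          rw [Finset.sum_comm, Finset.mul_sum]
          refine Finset.sum_congr rfl fun i _ => ?_
          rw [← Finset.sum_mul]; ring
        have e2 : (∑ t, w (q t)) k - (∑ t, w (q t)) l = ∑ t, (w (q t) k - w (q t) l) := by
          simp [Finset.sum_sub_distrib]
        rw [e1, e2]
        set A := ∑ t, (w (q t) k - w (q t) l) with hA
        have h1 : A + (K + 1) * μ ≤ ∑ t, ∑ i, lam (q t) k i * (v i k - v i l) := by
          calc A + (K + 1) * μ = ∑ t, ((w (q t) k - w (q t) l) + μ) := by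
                rw [Finset.sum_add_distrib]; simp [hA]
            _ ≤ _ := Finset.sum_le_sum fun t _ => l2 _ _ _ hl
        have h2 : A ≤ (K + 1) * (2 * M) := by
          calc A ≤ ∑ t : Fin (K + 1), (2 * M) := Finset.sum_le_sum fun t _ => by
                have a1 := abs_le.1 (hw (q t) k)
                have a2 := abs_le.1 (hw (q t) l)
                linarith
            _ = _ := by simp
        have h3 : (K:ℝ) * (1 / ((K:ℝ) + 1) * (A + (K + 1) * μ)) ≤ (K:ℝ) * (1 / ((K:ℝ) + 1) * ∑ t, ∑ i, lam (q t) k i * (v i k - v i l)) :=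
          mul_le_mul_of_nonneg_left (mul_le_mul_of_nonneg_left h1 (by positivity)) hKr.le
        refine lt_of_lt_of_le ?_ h3
        have e3 : (K:ℝ) * (1 / ((K:ℝ) + 1) * (A + (K + 1) * μ)) = (K * A + K * (K + 1) * μ) / (K + 1) := by
          field_simp
        rw [e3, lt_div_iff₀ hK']
        nlinarith) fun F Φ hp => by
    have hFh := F_Rpos hp hh h0
    have hfpos := CC_norm (mon_pos v) H.nv
    have hgpos := CC_norm (mon_pos w) H.nw
    have hA := hp.nonneg _ hfpos
    have hB := hp.nonneg _ hgpos
    rw [← hf] at hA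
    rw [← hg] at hB
    set A := Φ (f - 1) with hAd
    set B := Φ (g - 1) with hBd
    have hrel : B ≤ θ * A := by
      have h1 := hp.nonneg _ hhC
      rw [hp.mul h _ fun l => by rw [map_sub, map_smul, map_smul, hf1, hg1]; simp] at h1
      have h2 := nonneg_of_mul_nonneg_right h1 hFh
      rw [map_sub, map_smul, map_smul, smul_eq_mul, smul_eq_mul, ← hAd, ← hBd] at h2
      rw [← hθe] at h2
      have : (1 + η) * B ≤ (1 + η) * (θ * A) := by linarith
      exact le_of_mul_le_mul_left this hη2
    have eA : Φ (f ^ K - 1) = (∑ i ∈ Finset.range K, F f ^ i) * A := by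
      rw [← geom_sum_mul, hp.mul _ _ hf1, map_sum]; simp [hAd]
    have eB : Φ (g ^ (K + 1) - 1) = (∑ i ∈ Finset.range (K + 1), F g ^ i) * B := by
      rw [← geom_sum_mul, hp.mul _ _ hg1, map_sum]; simp [hBd]
    have hA0 : 0 < A := by
      rcases hA.lt_or_eq with h | h
      · exact h
      · exfalso
        have hB0 : B = 0 := by
          rw [← h] at hrel
          linarith
        have h1 := hp.one
        rw [show f ^ K + g ^ (K + 1) - 2 = (f ^ K - 1) + (g ^ (K + 1) - 1) by ring, map_add, eA, eB, hB0, ← h] at h1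
        norm_num at h1
    have hFf := Pt_eq hp hee hf1
    have hFg := Pt_eq hp hee hg1
    rw [map_sub, map_one, ← hAd] at hFf
    rw [map_sub, map_one, ← hBd] at hFg
    have hxy := Pt_eq hp hee (x := f ^ K - g ^ (K + 1)) fun l => by rw [map_sub, nfK l, ngK l, sub_self]
    rw [map_sub, map_pow, map_pow] at hxy
    have : NeZero d := ⟨by omega⟩
    have hfp : 0 < F f := F_Rpos hp (mon_pos v) H.nv.ne
    have hgp : 0 < F g := F_Rpos hp (mon_pos w) H.nw.ne
    rcases classify hp hee with ⟨hs, α, h1, h2, h3⟩ | ⟨hs, α, h1, h2, h3⟩ | ⟨hs, k, hk⟩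
    · have hlt : F g ^ (K + 1) < F f ^ K := by
        rw [hf, hg, F_mon h3, F_mon h3]
        rcases tilt H.nv H.nw hd l0 l1 l2 hμ hM hv hw hK1 h1 h2 with h4 | h4
        · rw [← F_mon h3] at h4
          rw [← F_mon h3, ← F_mon h3, ← hf, ← hg]
          rw [← hf] at h4
          have := real2 (θ := θ) (x := F f - 1) (y := F g - 1) (b := b) (K := K) hθ0 hθ1 hK2.le
            (by rw [hFf]; exact mul_pos hs hA0) (by linarith) (by linarith) (by
              rw [hFf, hFg]
              have := mul_le_mul_of_nonneg_left hrel hs.le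
              linarith)
          simpa using this
        · exact h4
      by_contra hc
      push Not at hc
      have := mul_nonpos_of_nonneg_of_nonpos hs.le hc
      linarith
    · have hlt : F f ^ K < F g ^ (K + 1) := by
        have := real1 (θ := θ) (x := 1 - F f) (y := 1 - F g) (K := K) hθ0 hθ1 hK3 
          (by have := mul_neg_of_neg_of_pos hs hA0; linarith) (by linarith) (by
              have a1 := mul_le_mul_of_nonpos_left hrel hs.le
              have a2 : 1 - F f = - (F (f ^ K + g ^ (K + 1) - 2) * A) := by linarith
              have a3 : 1 - F g = - (F (f ^ K + g ^ (K + 1) - 2) * B) := by linarith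
              rw [a2, a3]
              linarith)
        simpa using this
      by_contra hc
      push Not at hc
      have := mul_nonneg_of_nonpos_of_nonpos hs.le hc
      linarith
    · have e1 : F f = 1 := by rw [hk]; exact H.nv k
      have e2 : F g = 1 := by rw [hk]; exact H.nw k
      rw [show f ^ K - g ^ (K + 1) = (f ^ K - 1) - (g ^ (K + 1) - 1) by ring, map_sub, eA, eB, e1, e2]
      simp only [one_pow, Finset.sum_const, Finset.card_range, nsmul_eq_mul, mul_one]
      push_cast
      nlinarith
  refine ⟨K, h', hh', h0', ?_⟩
  have h5 := CC_add hC' (CC_smul hη'.le (CC_mul hh' he'))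
  rw [← mul_smul_comm, ← mul_add, sub_add_cancel] at h5
  exact h5

lemma Hyp.final (H : Hyp v w) (hd : 1 ≤ d) : ∃ N, ∀ n, N ≤ n → mon v ^ n - mon w ^ n ∈ CC d := by
  obtain ⟨K, h, hh, h0, hK⟩ := H.run2 hd
  exact large_n hd (mon_pos v) (mon_pos w) H.nw H.pu hh h0 K hK

end
end CMM

namespace CMM
open Filter Topology
variable {d : ℕ}

lemma bsup_le {n : ℕ} (S : Finset (Fin n)) (f : Fin n → ℝ) (hf : ∀ i ∈ S, 0 < f i) {j} (hj : j ∈ S) :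
    f j ≤ ⨆ i ∈ S, f i := by
  have h := le_ciSup (f := fun i => ⨆ (_ : i ∈ S), f i) (Set.finite_range _).bddAbove j
  simpa [hj] using h

lemma bsup_ex {n : ℕ} (S : Finset (Fin n)) (f : Fin n → ℝ) (hf : ∀ i ∈ S, 0 < f i) (hS : S.Nonempty) :
    ∃ i ∈ S, ⨆ i ∈ S, f i ≤ f i := by
  obtain ⟨i, hi, h⟩ := S.exists_max_image f hS
  refine ⟨i, hi, ?_⟩
  have : Nonempty (Fin n) := ⟨i⟩
  refine ciSup_le fun j => ?_
  by_cases hj : j ∈ S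
  · simpa [hj] using h j hj
  · simp [hj, (hf i hi).le]

lemma prod_exp {m : ℕ} {P : Fin d → Fin m → ℝ} (hP : ∀ k, IsProbVec (P k))
    (hPs : ∀ k l i, P k i ≠ 0 ↔ P l i ≠ 0) (α : Fin d → ℝ) (i : {i // i ∈ suppIdx P}) :
    ∏ k, P k i ^ α k = Real.exp (∑ k, α k * lv P i k) := by
  rw [Real.exp_sum]
  refine Finset.prod_congr rfl fun k _ => ?_
  rw [Real.rpow_def_of_pos (lv_pos hP hPs i k), mul_comm]; rfl

lemma sum_exp {m : ℕ} {P : Fin d → Fin m → ℝ} (hP : ∀ k, IsProbVec (P k))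
    (hPs : ∀ k l i, P k i ≠ 0 ↔ P l i ≠ 0) (α : Fin d → ℝ) :
    ∑ i ∈ suppIdx P, ∏ k, P k i ^ α k = ∑ i, Real.exp (∑ k, α k * lv P i k) := by
  rw [← Finset.sum_coe_sort]
  exact Finset.sum_congr rfl fun i _ => prod_exp hP hPs α i

lemma KL_eq {m : ℕ} {P : Fin d → Fin m → ℝ} (hP : ∀ k, IsProbVec (P k))
    (hPs : ∀ k l i, P k i ≠ 0 ↔ P l i ≠ 0) (k l : Fin d) : KL (P k) (P l) = KLv (lv P) k l := by
  unfold KL KLv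
  rw [← lv_sum (P := P) (fun i => P k i * Real.log (P k i / P l i)) fun i hi => by rw [lv_not hi k, zero_mul]]
  refine Finset.sum_congr rfl fun i _ => ?_
  have h1 := lv_pos hP hPs i k
  have h2 := lv_pos hP hPs i l
  simp only [lv]
  rw [Real.exp_log h1, Real.log_div h1.ne' h2.ne']

lemma sup_ge (α : Fin d → ℝ) (k) : α k ≤ ⨆ k, α k := le_ciSup (Set.finite_range α).bddAbove k

lemma hyp_of {m m' : ℕ} (hd : 1 ≤ d) (P : Fin d → Fin m → ℝ) (Q : Fin d → Fin m' → ℝ)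
    (hP : ∀ k, IsProbVec (P k)) (hQ : ∀ k, IsProbVec (Q k))
    (hPs : ∀ k l i, P k i ≠ 0 ↔ P l i ≠ 0)
    (hQs : ∀ k l i, Q k i ≠ 0 ↔ Q l i ≠ 0)
    (hA : ∀ α : Fin d → ℝ, (memAplus α ∨ memAminus α) → notBasis α → Dmat α Q < Dmat α P)
    (hB : ∀ β : Fin d → ℝ, memBminus β → β ≠ 0 → DmatT β Q < DmatT β P)
    (hKL : ∀ k l, k ≠ l → KL (Q k) (Q l) < KL (P k) (P l)) : Hyp (lv P) (lv Q) := by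
  classical
  have nP := lv_norm hP hPs
  have nQ := lv_norm hQ hQs
  have neP := nonempty_of_norm hd nP
  have neQ := nonempty_of_norm hd nQ
  have : Nonempty (Fin d) := ⟨⟨0, hd⟩⟩
  have posP : ∀ α : Fin d → ℝ, 0 < ∑ i, Real.exp (∑ k, α k * lv P i k) := fun α =>
    Finset.sum_pos (fun i _ => Real.exp_pos _) Finset.univ_nonempty
  have posQ : ∀ α : Fin d → ℝ, 0 < ∑ i, Real.exp (∑ k, α k * lv Q i k) := fun α =>
    Finset.sum_pos (fun i _ => Real.exp_pos _) Finset.univ_nonempty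
  refine ⟨nP, nQ, fun α h1 h2 => ?_, fun α h1 h2 => ?_, fun β k h1 h2 h3 => ?_, fun k l hkl => ?_⟩
  · have h := hA α (Or.inr h1) h2
    unfold Dmat at h
    rw [sum_exp hP hPs, sum_exp hQ hQs] at h
    obtain ⟨hs, k, hk, hkl⟩ := h1
    have h3 : 1 < α k := by
      refine lt_of_le_of_ne hk fun he => h2 k ?_
      have h4 : ∑ l, (Pi.single k 1 - α : Fin d → ℝ) l = 0 := by simp [hs]
      have h5 := (Finset.sum_eq_zero_iff_of_nonneg (fun l _ => by
        by_cases hl : l = k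
        · subst hl; simp [he]
        · simp [Pi.single_eq_of_ne hl, hkl l hl])).1 h4
      funext l
      have := h5 l (Finset.mem_univ l)
      simp only [Pi.sub_apply] at this
      linarith
    have h4 := sup_ge α k
    have h5 : 0 < 1 / ((⨆ k, α k) - 1) := one_div_pos.2 (by linarith)
    exact (Real.log_lt_log_iff (posQ α) (posP α)).1 (lt_of_mul_lt_mul_left h h5.le)
  · have h := hA α (Or.inl h1) h2
    unfold Dmat at h
    rw [sum_exp hP hPs, sum_exp hQ hQs] at h
    obtain ⟨hs, hn⟩ := h1
    obtain ⟨k, hk⟩ := exists_eq_ciSup_of_finite (f := α)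
    have h3 : α k < 1 := by
      refine lt_of_le_of_ne (hs ▸ Finset.single_le_sum (f := α) (fun l _ => hn l) (Finset.mem_univ k)) fun he => h2 k ?_
      have h4 : ∑ l ∈ Finset.univ.erase k, α l = 0 := by
        have := Finset.add_sum_erase Finset.univ α (Finset.mem_univ k)
        linarith
      have h5 := (Finset.sum_eq_zero_iff_of_nonneg (fun l _ => hn l)).1 h4
      funext l
      by_cases hl : l = k
      · subst hl; simp [he]
      · rw [Pi.single_eq_of_ne hl, h5 l (by simp [hl])]
    rw [← hk] at h
    have h5 : 1 / (α k - 1) < 0 := one_div_neg.2 (by linarith)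
    exact (Real.log_lt_log_iff (posP α) (posQ α)).1 ((mul_lt_mul_left_of_neg h5).1 h)
  · have hk0 : 0 ≤ β k := by
      have := Finset.add_sum_erase Finset.univ β (Finset.mem_univ k)
      have h4 : ∑ l ∈ Finset.univ.erase k, β l ≤ 0 := Finset.sum_nonpos fun l hl => h2 l (Finset.ne_of_mem_erase hl)
      linarith
    have h := hB β ⟨h1, k, hk0, h2⟩ h3
    unfold DmatT at h
    have hkp : 0 < β k := by
      refine lt_of_le_of_ne hk0 fun he => h3 ?_
      have h5 := (Finset.sum_eq_zero_iff_of_nonpos (fun l _ => by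
        by_cases hl : l = k
        · subst hl; exact he.symm.le
        · exact h2 l hl)).1 h1
      funext l
      exact h5 l (Finset.mem_univ l)
    have h4 := sup_ge β k
    have h5 : 0 < 1 / (⨆ k, β k) := one_div_pos.2 (by linarith)
    have h6 := lt_of_mul_lt_mul_left h h5.le
    have pP : ∀ i ∈ suppIdx P, 0 < ∏ k, P k i ^ β k := fun i hi => by
      rw [prod_exp hP hPs β ⟨i, hi⟩]; exact Real.exp_pos _
    have pQ : ∀ i ∈ suppIdx Q, 0 < ∏ k, Q k i ^ β k := fun i hi => by
      rw [prod_exp hQ hQs β ⟨i, hi⟩]; exact Real.exp_pos _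
    obtain ⟨iP, hiP⟩ := neP
    obtain ⟨iQ, hiQ⟩ := neQ
    have sP : 0 < ⨆ i ∈ suppIdx P, ∏ k, P k i ^ β k := (pP iP hiP).trans_le (bsup_le _ _ pP hiP)
    have sQ : 0 < ⨆ i ∈ suppIdx Q, ∏ k, Q k i ^ β k := (pQ iQ hiQ).trans_le (bsup_le _ _ pQ hiQ)
    have h7 := (Real.log_lt_log_iff sQ sP).1 h6
    obtain ⟨i, hi, hi'⟩ := bsup_ex _ _ pP ⟨iP, hiP⟩
    refine ⟨⟨i, hi⟩, fun j => ?_⟩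
    have h8 := bsup_le _ _ pQ j.2
    have h9 := (h8.trans_lt h7).trans_le hi'
    rw [prod_exp hP hPs β ⟨i, hi⟩, prod_exp hQ hQs β j] at h9
    exact Real.exp_lt_exp.1 h9
  · rw [← KL_eq hP hPs, ← KL_eq hQ hQs]
    exact hKL k l hkl

end CMM

/-- **Catalytic matrix majorization with the explicit catalyst.**  Under the
strict divergence inequalities, for every sufficiently large `n` the vectors
`r⁽ᵏ⁾ = (1/n) ⨁_{s=0}^{n-1} (p⁽ᵏ⁾)^{⊗(n-1-s)} ⊗ (q⁽ᵏ⁾)^{⊗s}` are probability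
vectors and some stochastic matrix carries `p⁽ᵏ⁾ ⊗ r⁽ᵏ⁾` to `q⁽ᵏ⁾ ⊗ r⁽ᵏ⁾`
for all `k`. -/
theorem catalytic_matrix_majorization_sufficient
    {d m m' : ℕ} (hd : 1 ≤ d)
    (P : Fin d → Fin m → ℝ) (Q : Fin d → Fin m' → ℝ)
    (hP : ∀ k, IsProbVec (P k)) (hQ : ∀ k, IsProbVec (Q k))
    (hPs : ∀ k l i, P k i ≠ 0 ↔ P l i ≠ 0)
    (hQs : ∀ k l i, Q k i ≠ 0 ↔ Q l i ≠ 0)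
    (hA : ∀ α : Fin d → ℝ, (memAplus α ∨ memAminus α) → notBasis α →
      Dmat α Q < Dmat α P)
    (hB : ∀ β : Fin d → ℝ, memBminus β → β ≠ 0 → DmatT β Q < DmatT β P)
    (hKL : ∀ k l, k ≠ l → KL (Q k) (Q l) < KL (P k) (P l)) :
    ∃ N : ℕ, ∀ n : ℕ, N ≤ n →
      (∀ k, IsProbVec (trick (P k) (Q k) n)) ∧
      ∃ T : (Fin m' × TrickIdx m m' n) → (Fin m × TrickIdx m m' n) → ℝ,
        IsStochastic T ∧
        ∀ k, matVec T (kron (P k) (trick (P k) (Q k) n)) =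
          kron (Q k) (trick (P k) (Q k) n) := by
  obtain ⟨N, hN⟩ := (CMM.hyp_of hd P Q hP hQ hPs hQs hA hB hKL).final hd
  exact ⟨max N 1, fun n hn => CMM.assemble hd P Q hP hQ hPs hQs n ((le_max_right _ _).trans hn)
    (hN n ((le_max_left _ _).trans hn))⟩
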